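/- arXiv:math/0612222 — 3 statements merged into one kernel-verified Lean document; each statement's English description precedes it below -/
import Mathlib

section
/- A nontrivial commutator in a free group is not a proper power: if F is a free group, a, b ∈ F, and [a,b] = c^k for some c ∈ F and integer k ≥ 2, then a and b commute (so [a,b] = 1). -/
/-!
By the Nielsen–Schreier theorem the subgroup `H` generated by `a`, `b`, `c` is free, so it is enough
to show that a basis of `H` has at most one element. Map `H` to the Heisenberg group of triples
`(x, y, z)` with `x, y : ℤ` and `z : ZMod k`. Modulo its central copy of `ZMod k` the target is
`ℤ × ℤ`, which is abelian and torsion-free, so `c ^ k = ⁅a, b⁆` forces the image of `c` into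
`ZMod k`. There its `k`-th power is trivial, hence the images of `a`, `b`, `c` commute pairwise and
the image of `H` is abelian. Yet two distinct basis elements can be sent to `(1, 0, 0)` and
`(0, 1, 0)`, which do not commute.
-/

open Subgroup
open scoped commutatorElement

variable {V A : Type*} [AddCommGroup V] [AddCommGroup A]

/-- The Heisenberg group of a biadditive map `β : V → V → A`: the central extension of `V` by `A`
with `2`-cocycle `β`. For `V = R × R`, `A = R` and `β (x, y) (x', y') = x * y'` this is the group of
upper unitriangular `3 × 3` matrices over `R`; a general `β` allows `A` to have torsion while `V`
has none. -/
@[ext]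
structure HeisenbergGroup (β : V →+ V →+ A) where
  /-- The coordinate in the abelian quotient. -/
  base : V
  /-- The coordinate along the central subgroup. -/
  fiber : A

namespace HeisenbergGroup

variable {β : V →+ V →+ A}

instance : Mul (HeisenbergGroup β) :=
  ⟨fun u v ↦ ⟨u.base + v.base, u.fiber + v.fiber + β u.base v.base⟩⟩

instance : One (HeisenbergGroup β) := ⟨⟨0, 0⟩⟩

instance : Inv (HeisenbergGroup β) := ⟨fun u ↦ ⟨-u.base, -u.fiber + β u.base u.base⟩⟩

@[simp] theorem base_mul (u v : HeisenbergGroup β) : (u * v).base = u.base + v.base := rfl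

@[simp] theorem fiber_mul (u v : HeisenbergGroup β) :
    (u * v).fiber = u.fiber + v.fiber + β u.base v.base := rfl

@[simp] theorem base_one : (1 : HeisenbergGroup β).base = 0 := rfl

@[simp] theorem fiber_one : (1 : HeisenbergGroup β).fiber = 0 := rfl

@[simp] theorem base_inv (u : HeisenbergGroup β) : u⁻¹.base = -u.base := rfl

@[simp] theorem fiber_inv (u : HeisenbergGroup β) : u⁻¹.fiber = -u.fiber + β u.base u.base := rfl

instance : Group (HeisenbergGroup β) :=
  Group.ofLeftAxioms
    (fun u v w ↦ by ext <;> simp <;> abel)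
    (fun u ↦ by ext <;> simp)
    (fun u ↦ by ext <;> simp)

/-- The quotient map of the central extension. -/
def baseHom (β : V →+ V →+ A) : HeisenbergGroup β →* Multiplicative V where
  toFun u := .ofAdd u.base
  map_one' := rfl
  map_mul' _ _ := rfl

/-- The kernel inclusion of the central extension. -/
def fiberHom (β : V →+ V →+ A) : Multiplicative A →* HeisenbergGroup β where
  toFun s := ⟨0, s.toAdd⟩
  map_one' := rfl
  map_mul' s t := by ext <;> simp

theorem commute_iff {u v : HeisenbergGroup β} :
    Commute u v ↔ β u.base v.base = β v.base u.base := by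
  simp only [commute_iff_eq, HeisenbergGroup.ext_iff, base_mul, fiber_mul, add_comm v.base,
    add_comm v.fiber, true_and, add_right_inj]

theorem commute_of_base_eq_zero {u : HeisenbergGroup β} (hu : u.base = 0)
    (v : HeisenbergGroup β) : Commute u v :=
  commute_iff.mpr (by simp [hu])

theorem zpow_eq_one_of_base_eq_zero {u : HeisenbergGroup β} (hu : u.base = 0) {k : ℤ}
    (hA : ∀ s : A, k • s = 0) : u ^ k = 1 := by
  have hfiber : u = fiberHom β (.ofAdd u.fiber) := HeisenbergGroup.ext hu rfl
  rw [hfiber, ← map_zpow, ← ofAdd_zsmul, hA, ofAdd_zero, map_one]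

theorem base_eq_zero_of_commutator_eq_zpow [IsAddTorsionFree V] {u v w : HeisenbergGroup β}
    {k : ℤ} (hk : k ≠ 0) (h : ⁅u, v⁆ = w ^ k) : w.base = 0 := by
  have hpow : baseHom β w ^ k = 1 := by
    rw [← map_zpow, ← h, map_commutatorElement, commutatorElement_eq_one_iff_commute]
    exact Commute.all _ _
  exact (IsMulTorsionFree.zpow_eq_one_iff_left hk).mp hpow

end HeisenbergGroup

section Group

variable {G : Type*} [Group G]

theorem commute_map_of_closure_eq_top {M : Type*} [Group M] {S : Set G} (hS : closure S = ⊤)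
    (φ : G →* M) (hcomm : ∀ x ∈ S, ∀ y ∈ S, Commute (φ x) (φ y)) (g h : G) :
    Commute (φ g) (φ h) := by
  have mem_closure (x : G) : x ∈ closure S := hS ▸ mem_top x
  induction mem_closure g, mem_closure h using closure_induction₂ with
  | mem x y hx hy => exact hcomm x hx y hy
  | one_left => simp
  | one_right => simp
  | mul_left _ _ _ _ _ _ hx hy => simpa using hx.mul_left hy
  | mul_right _ _ _ _ _ _ hx hy => simpa using hx.mul_right hy
  | inv_left _ _ _ _ hxy => simpa using hxy
  | inv_right _ _ _ _ hxy => simpa using hxy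

theorem commute_map_heisenbergGroup_of_commutator_eq_zpow [IsAddTorsionFree V]
    {β : V →+ V →+ A} {a b c : G} (hgen : closure {a, b, c} = ⊤) {k : ℤ} (hk : k ≠ 0)
    (hA : ∀ s : A, k • s = 0) (h : ⁅a, b⁆ = c ^ k) (φ : G →* HeisenbergGroup β) (x y : G) :
    Commute (φ x) (φ y) := by
  have hφ : ⁅φ a, φ b⁆ = φ c ^ k := by rw [← map_commutatorElement, h, map_zpow]
  have hc : (φ c).base = 0 := HeisenbergGroup.base_eq_zero_of_commutator_eq_zpow hk hφ
  have hc_comm : ∀ u, Commute (φ c) u := HeisenbergGroup.commute_of_base_eq_zero hc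
  have hab : Commute (φ a) (φ b) := by
    rw [← commutatorElement_eq_one_iff_commute, hφ,
      HeisenbergGroup.zpow_eq_one_of_base_eq_zero hc hA]
  refine commute_map_of_closure_eq_top hgen φ ?_ x y
  rintro _ (rfl | rfl | rfl) _ (rfl | rfl | rfl)
  exacts [.refl _, hab, (hc_comm _).symm, hab.symm, .refl _, (hc_comm _).symm,
    hc_comm _, hc_comm _, .refl _]

theorem commute_of_freeGroupBasis_subsingleton {ι : Type*} [Subsingleton ι]
    (B : FreeGroupBasis ι G) (x y : G) : Commute x y := by
  suffices Commute (B.repr x) (B.repr y) from (commute_map_iff B.repr.injective).mp this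
  cases isEmpty_or_nonempty ι
  · exact Subsingleton.elim _ _
  · have := uniqueOfSubsingleton (Classical.arbitrary ι)
    exact mul_comm' _ _

/-- The biadditive map `(x, y), (x', y') ↦ x * y'`, the cocycle of the integral Heisenberg group
with its centre reduced modulo `n`. -/
def heisenbergCocycle (n : ℕ) : ℤ × ℤ →+ ℤ × ℤ →+ ZMod n :=
  (AddMonoidHom.mul.comp ((Int.castAddHom (ZMod n)).comp (.fst ℤ ℤ))).compl₂
    ((Int.castAddHom (ZMod n)).comp (.snd ℤ ℤ))

theorem exists_not_commute_map_heisenbergGroup {ι : Type*} (B : FreeGroupBasis ι G) {i j : ι}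
    (hij : i ≠ j) {n : ℕ} (hn : n ≠ 1) :
    ∃ φ : G →* HeisenbergGroup (heisenbergCocycle n), ¬ Commute (φ (B i)) (φ (B j)) := by
  classical
  have : Nontrivial (ZMod n) := ZMod.nontrivial_iff.mpr hn
  let f (t : ι) : HeisenbergGroup (heisenbergCocycle n) :=
    if t = i then ⟨(1, 0), 0⟩ else ⟨(0, 1), 0⟩
  have lift_basis (t : ι) : B.lift f (B t) = f t := congrFun (B.lift.symm_apply_apply f) t
  refine ⟨B.lift f, ?_⟩
  rw [lift_basis, lift_basis, HeisenbergGroup.commute_iff]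
  simp [f, heisenbergCocycle, hij.symm]

theorem freeGroupBasis_subsingleton_of_commutator_eq_zpow {ι : Type*} (B : FreeGroupBasis ι G)
    {a b c : G} (hgen : closure {a, b, c} = ⊤) {k : ℤ} (hk₀ : k ≠ 0) (hk : ¬ IsUnit k)
    (h : ⁅a, b⁆ = c ^ k) : Subsingleton ι := by
  by_contra hι
  obtain ⟨i, j, hij⟩ := not_subsingleton_iff_nontrivial.mp hι
  obtain ⟨φ, hφ⟩ := exists_not_commute_map_heisenbergGroup B hij
    (mt Int.isUnit_iff_natAbs_eq.mpr hk)
  have hzmod (s : ZMod k.natAbs) : k • s = 0 := by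
    have hcast : (k : ZMod k.natAbs) = 0 :=
      (ZMod.intCast_zmod_eq_zero_iff_dvd k k.natAbs).mpr Int.natAbs_dvd_self
    rw [zsmul_eq_mul, hcast, zero_mul]
  exact hφ (commute_map_heisenbergGroup_of_commutator_eq_zpow hgen hk₀ hzmod h φ _ _)

theorem commutator_not_proper_power_general [IsFreeGroup G] {a b c : G} {k : ℤ}
    (hk : ¬ IsUnit k) (h : ⁅a, b⁆ = c ^ k) : Commute a b := by
  obtain rfl | hk₀ := eq_or_ne k 0
  · rwa [zpow_zero, commutatorElement_eq_one_iff_commute] at h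
  let H := closure {a, b, c}
  let a' : H := ⟨a, subset_closure (by simp)⟩
  let b' : H := ⟨b, subset_closure (by simp)⟩
  let c' : H := ⟨c, subset_closure (by simp)⟩
  have hgen : closure {a', b', c'} = ⊤ := by
    rw [← closure_closure_coe_preimage (k := {a, b, c})]
    congr 1
    ext x
    simp [a', b', c', Subtype.ext_iff]
  have h' : ⁅a', b'⁆ = c' ^ k := Subtype.ext h
  have := freeGroupBasis_subsingleton_of_commutator_eq_zpow (IsFreeGroup.basis H) hgen hk₀ hk h'
  exact (commute_of_freeGroupBasis_subsingleton (IsFreeGroup.basis H) a' b').map H.subtype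

end Group

/-- A nontrivial commutator in a free group is not a proper power: if
`[a,b] = c^k` with `k ≥ 2` in a free group, then `a` and `b` commute. -/
theorem commutator_not_proper_power {α : Type} (a b c : FreeGroup α) (k : ℤ)
    (hk : 2 ≤ k) (h : a * b * a⁻¹ * b⁻¹ = c ^ k) : a * b = b * a :=
  commutator_not_proper_power_general (by rw [Int.isUnit_iff]; omega) h
end

section
/- Lyndon–Schützenberger: if a, b, c are elements of a free group and aᵖbᑫcʳ = 1 with integers p, q, r ≥ 2, then a, b, and c pairwise commute. -/
/-!
Suppose `a` and `c` do not commute and put `H = ⟨a, c⟩`. Replacing `b` by its root, we may assume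
that `⟨b⟩` is its own centralizer. The images of `a` and `c` in a finite group can be prescribed
arbitrarily; representing them by homotheties of an affine line shows that `cʳ aᵖ` is not a proper
power in `H`, so `bᵏ ∈ H` exactly when `q ∣ k`.

The axis of `b` in the Cayley tree of the free group then projects to a closed path consisting of
`q` periods in the quotient of the tree by `H`. Let `V` and `E` be the sets of vertices and edges
that it visits. As `H` is generated by two elements, `#E + 1 ≤ #V + 2`.

On the other hand, there is an invariant order on the cosets of `⟨b⟩`, that is, on the translates
of the axis. For each vertex or edge of the projected path call its maximal visit top. If a visit
to a vertex is top, then so are the visits to the edges before and after it, so that `#E - #V` is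
at least the number of runs of consecutive top edges. A character of `H` with `χ(a)ᵖ = χ(c)ʳ = 1`
and `χ(a), χ(c) ≠ 1` defines twisted cocycles that vanish on `bᑫ`, and these show that each edge is
visited at least twice. Hence each of the `q` periods contains both a top edge and one that is not,
whence `#V + q ≤ #E`, contradicting `q ≥ 2`.
-/

namespace LyndonSchutzenberger

section Centralizers

variable {G : Type*} [Group G]

theorem commute_of_commute_pow [IsMulTorsionFree G] {g h : G} {n : ℕ} (hn : n ≠ 0)
    (hgh : Commute (g ^ n) h) : Commute g h := by
  have conj_eq : h * g * h⁻¹ = g := by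
    refine pow_left_injective hn ?_
    change (h * g * h⁻¹) ^ n = g ^ n
    rw [conj_pow, ← hgh.eq, mul_inv_cancel_right]
  exact (mul_inv_eq_iff_eq_mul.1 conj_eq).symm

theorem commute_of_commute_zpow [IsMulTorsionFree G] {g h : G} {n : ℤ} (hn : n ≠ 0)
    (hgh : Commute (g ^ n) h) : Commute g h := by
  obtain ⟨m, rfl | rfl⟩ := n.eq_nat_or_neg
  · exact commute_of_commute_pow (n := m) (by simpa using hn) (by simpa using hgh)
  · exact commute_of_commute_pow (n := m) (by simpa using hn) (by simpa using hgh)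

theorem isCyclic_of_subsingleton_generators [IsFreeGroup G]
    [Subsingleton (IsFreeGroup.Generators G)] : IsCyclic G := by
  have isCyclic_freeGroup : IsCyclic (FreeGroup (IsFreeGroup.Generators G)) := by
    rcases isEmpty_or_nonempty (IsFreeGroup.Generators G) with _ | ⟨⟨i⟩⟩
    · infer_instance
    · have : Unique (IsFreeGroup.Generators G) := ⟨⟨i⟩, fun j => Subsingleton.elim _ _⟩
      infer_instance
  exact (IsFreeGroup.toFreeGroup G).isCyclic.2 isCyclic_freeGroup

theorem nontrivial_generators_of_not_commute [IsFreeGroup G] {g h : G} (hgh : ¬ Commute g h) :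
    Nontrivial (IsFreeGroup.Generators G) := by
  by_contra hG
  have := not_nontrivial_iff_subsingleton.1 hG
  have := isCyclic_of_subsingleton_generators (G := G)
  exact hgh (IsCyclic.isMulCommutative.is_comm.comm g h)

theorem eq_of_commute_of {ι : Type*} {i j : ι}
    (h : Commute (FreeGroup.of i) (FreeGroup.of j)) : i = j := by
  classical
  have words_eq := congrArg FreeGroup.toWord h.eq
  by_contra hij
  simp [FreeGroup.toWord_mul, FreeGroup.reduce.cons, hij] at words_eq

theorem isCyclic_of_isMulCommutative [IsFreeGroup G] [IsMulCommutative G] : IsCyclic G := by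
  have : Subsingleton (IsFreeGroup.Generators G) := by
    refine ⟨fun i j => eq_of_commute_of ?_⟩
    refine Commute.of_map (IsFreeGroup.mulEquiv G).injective ?_
    exact mul_comm' _ _
  exact isCyclic_of_subsingleton_generators

variable {α : Type*}

theorem commute_trans {g b h : FreeGroup α} (hb : b ≠ 1) (hgb : Commute g b)
    (hbh : Commute b h) : Commute g h := by
  have : IsMulCommutative (Subgroup.closure {g, b}) := by
    refine Subgroup.isMulCommutative_closure ?_
    rintro x (rfl | rfl) y (rfl | rfl)
    exacts [rfl, hgb, hgb.symm, rfl]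
  obtain ⟨t, ht⟩ := isCyclic_of_isMulCommutative (G := Subgroup.closure {g, b})
  obtain ⟨i, hi⟩ := ht ⟨g, Subgroup.subset_closure (by simp)⟩
  obtain ⟨j, hj⟩ := ht ⟨b, Subgroup.subset_closure (by simp)⟩
  replace hi : (t : FreeGroup α) ^ i = g := congrArg Subtype.val hi
  replace hj : (t : FreeGroup α) ^ j = b := congrArg Subtype.val hj
  have j_ne_zero : j ≠ 0 := by
    rintro rfl
    exact hb (by simpa using hj.symm)
  rw [← hj] at hbh
  rw [← hi]
  exact (commute_of_commute_zpow j_ne_zero hbh).zpow_left i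

theorem isCyclic_centralizer {b : FreeGroup α} (hb : b ≠ 1) :
    IsCyclic (Subgroup.centralizer {b}) := by
  have : IsMulCommutative (Subgroup.centralizer {b}) := by
    refine ⟨⟨fun x y => Subtype.ext ?_⟩⟩
    have hx := Subgroup.mem_centralizer_singleton_iff.1 x.2
    have hy := Subgroup.mem_centralizer_singleton_iff.1 y.2
    exact commute_trans hb hx (Commute.symm hy)
  exact isCyclic_of_isMulCommutative

theorem exists_root {b : FreeGroup α} (hb : b ≠ 1) :
    ∃ (root : FreeGroup α) (m : ℕ), m ≠ 0 ∧ root ^ m = b ∧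
      Subgroup.centralizer {root} ≤ Subgroup.zpowers root := by
  obtain ⟨⟨t, _⟩, ht⟩ := isCyclic_centralizer hb
  have mem_zpowers {g : FreeGroup α} (hg : Commute g b) : g ∈ Subgroup.zpowers t := by
    obtain ⟨k, hk⟩ := ht ⟨g, Subgroup.mem_centralizer_singleton_iff.2 hg⟩
    exact ⟨k, congrArg Subtype.val hk⟩
  obtain ⟨i, hi : t ^ i = b⟩ := mem_zpowers (Commute.refl b)
  have centralizer_le : Subgroup.centralizer {t} ≤ Subgroup.zpowers t := fun g hg =>
    mem_zpowers (hi ▸ Commute.zpow_right (Subgroup.mem_centralizer_singleton_iff.1 hg) i)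
  obtain ⟨m, rfl | rfl⟩ := i.eq_nat_or_neg
  · refine ⟨t, m, ?_, by simpa using hi, centralizer_le⟩
    rintro rfl
    exact hb (by simpa using hi.symm)
  · refine ⟨t⁻¹, m, ?_, by simpa using hi, ?_⟩
    · rintro rfl
      exact hb (by simpa using hi.symm)
    · intro g hg
      rw [Subgroup.mem_centralizer_singleton_iff] at hg
      rw [Subgroup.zpowers_inv]
      have hgt : Commute g t := by simpa using Commute.inv_right hg
      exact centralizer_le (Subgroup.mem_centralizer_singleton_iff.2 hgt)

end Centralizers

section Homs

variable {G : Type*} [Group G] [IsFreeGroup G]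

theorem exists_surjective_freeGroup_bool {g h : G} (hgh : ¬ Commute g h) :
    ∃ π : G →* FreeGroup Bool, Function.Surjective π := by
  classical
  obtain ⟨i, j, hij⟩ := nontrivial_generators_of_not_commute hgh
  let π : G →* FreeGroup Bool := IsFreeGroup.lift
    fun k => if k = i then FreeGroup.of true else if k = j then FreeGroup.of false else 1
  refine ⟨π, MonoidHom.range_eq_top.1 (top_unique ?_)⟩
  rw [← FreeGroup.closure_range_of, Subgroup.closure_le]
  rintro _ ⟨_ | _, rfl⟩
  · exact ⟨IsFreeGroup.of j, by simp [π, hij.symm]⟩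
  · exact ⟨IsFreeGroup.of i, by simp [π]⟩

theorem exists_hom_ne_one_of_freeGroup_bool (b : FreeGroup Bool) :
    ∃ φ : FreeGroup Bool →* Multiplicative ℤ, φ b = 1 ∧ φ ≠ 1 := by
  let exponent (i : Bool) : FreeGroup Bool →* Multiplicative ℤ :=
    FreeGroup.lift (Pi.mulSingle i (Multiplicative.ofAdd 1))
  let m : ℤ := (exponent true b).toAdd
  let n : ℤ := (exponent false b).toAdd
  by_cases hm : m = 0
  · refine ⟨exponent true, hm, fun h => ?_⟩
    simpa [exponent] using DFunLike.congr_fun h (FreeGroup.of true)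
  · refine ⟨exponent true ^ n * exponent false ^ (-m), ?_, fun h => hm ?_⟩
    · exact Multiplicative.toAdd.injective (by simp [m, n, mul_comm])
    · simpa [exponent] using DFunLike.congr_fun h (FreeGroup.of false)

theorem exists_hom_ne_one_of_not_commute {b g : G} (hbg : ¬ Commute b g) :
    ∃ φ : G →* Multiplicative ℤ, φ b = 1 ∧ φ ≠ 1 := by
  obtain ⟨π, hπ⟩ := exists_surjective_freeGroup_bool hbg
  obtain ⟨φ, hφb, hφ⟩ := exists_hom_ne_one_of_freeGroup_bool (π b)
  refine ⟨φ.comp π, hφb, fun h => hφ ?_⟩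
  exact (MonoidHom.cancel_right hπ).1 (h.trans (MonoidHom.one_comp π).symm)

/- Evaluation at `(a, c)` is an injective self-map of the finite set of homomorphisms from the free
group of rank two to `Q`, because `a` and `c` generate. -/
theorem exists_hom_eq_of_closure_eq_top {a c : G} (hac : ¬ Commute a c)
    (hgen : Subgroup.closure {a, c} = ⊤) {Q : Type*} [Group Q] [Finite Q] (x y : Q) :
    ∃ θ : G →* Q, θ a = x ∧ θ c = y := by
  obtain ⟨π, hπ⟩ := exists_surjective_freeGroup_bool hac
  let eval (f : Bool → Q) (i : Bool) : Q := FreeGroup.lift f (π (cond i a c))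
  have eval_injective : Function.Injective eval := by
    intro f f' hff'
    refine FreeGroup.lift.injective ((MonoidHom.cancel_right hπ).1 ?_)
    refine MonoidHom.eq_of_eqOn_dense hgen ?_
    rintro _ (rfl | rfl)
    · exact congrFun hff' true
    · exact congrFun hff' false
  obtain ⟨f, hf⟩ := Finite.surjective_of_injective eval_injective (fun i => cond i x y)
  exact ⟨(FreeGroup.lift f).comp π, congrFun hf true, congrFun hf false⟩

theorem affineEquiv_pow_charP_eq_one {K : Type*} [Field K] (ℓ : ℕ) [Fact ℓ.Prime] [CharP K ℓ]
    {f : K ≃ᵃ[K] K} (hf : (f ^ ℓ).linear = 1) : f ^ ℓ = 1 := by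
  have linear_eq : f.linear = 1 := by
    have linear_pow : f.linear ^ ℓ = 1 := (map_pow AffineEquiv.linearHom f ℓ).symm.trans hf
    have smul_pow (k : ℕ) : (f.linear ^ k) 1 = f.linear 1 ^ k := by
      induction k with
      | zero => simp
      | succ k ih =>
        rw [pow_succ', LinearEquiv.mul_apply, ih, pow_succ, ← smul_eq_mul, ← map_smul,
          smul_eq_mul, mul_one]
    have frobenius_eq : f.linear 1 ^ ℓ = 1 := by rw [← smul_pow, linear_pow]; rfl
    refine LinearEquiv.toLinearMap_injective (LinearMap.ext_ring ?_)
    exact frobenius_inj K ℓ (by simpa [frobenius_def] using frobenius_eq)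
  have apply_eq (x : K) : f x = x + f 0 := by
    simpa [linear_eq] using f.map_vadd 0 x
  have pow_apply (k : ℕ) (x : K) : (f ^ k) x = x + k * f 0 := by
    induction k with
    | zero => simp
    | succ k ih =>
      rw [pow_succ', AffineEquiv.mul_def, AffineEquiv.trans_apply, ih, apply_eq]
      push_cast
      ring
  ext x
  simp [pow_apply]

theorem exists_finite_field_unit_pow_ne_one (ℓ n : ℕ) [Fact ℓ.Prime] (hn : n ≠ 0) :
    ∃ (K : Type) (_ : Field K) (_ : Finite K) (_ : CharP K ℓ) (u : Kˣ), u ^ n ≠ 1 := by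
  obtain ⟨u, hu⟩ := IsCyclic.exists_ofOrder_eq_natCard (α := (GaloisField ℓ (n + 1))ˣ)
  refine ⟨GaloisField ℓ (n + 1), inferInstance, inferInstance, inferInstance, u,
    pow_ne_one_of_lt_orderOf hn ?_⟩
  rw [hu, Nat.card_units, GaloisField.card ℓ _ (by omega)]
  have : n + 1 < 2 ^ (n + 1) := Nat.lt_two_pow_self
  have := Nat.pow_le_pow_left (Fact.out : ℓ.Prime).two_le (n + 1)
  omega

theorem affineEquiv_pow_ne_homothety_mul {K : Type*} [Field K] (ℓ : ℕ) [Fact ℓ.Prime] [CharP K ℓ]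
    (f : K ≃ᵃ[K] K) {v : Kˣ} (hv : v ≠ 1) :
    f ^ ℓ ≠ AffineEquiv.homothetyUnitsMulHom 0 v⁻¹ * AffineEquiv.homothetyUnitsMulHom 1 v := by
  intro hf
  have pow_apply (x : K) : (f ^ ℓ) x = x + ((v : K)⁻¹ - 1) := by
    have := v.ne_zero
    rw [hf, AffineEquiv.mul_def, AffineEquiv.trans_apply,
      AffineEquiv.coe_homothetyUnitsMulHom_apply, AffineEquiv.coe_homothetyUnitsMulHom_apply,
      AffineMap.homothety_apply, AffineMap.homothety_apply]
    simp only [Units.val_inv_eq_inv_val, vsub_eq_sub, smul_eq_mul, vadd_eq_add]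
    field_simp
    ring
  have linear_eq : (f ^ ℓ).linear = 1 := by
    refine LinearEquiv.toLinearMap_injective (LinearMap.ext_ring ?_)
    have := (f ^ ℓ).map_vadd 0 1
    rw [pow_apply, pow_apply, vadd_eq_add, vadd_eq_add] at this
    change (f ^ ℓ).linear 1 = 1
    linear_combination -this
  have inv_eq := pow_apply 0
  rw [affineEquiv_pow_charP_eq_one ℓ linear_eq] at inv_eq
  exact hv (Units.ext (inv_eq_one.1 (sub_eq_zero.1 (by simpa using inv_eq.symm))))

/- In the affine group of a field of characteristic `ℓ`, if `aᵖ` and `cʳ` are homotheties of inverse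
ratios about different centres, then their product is a nontrivial translation, which is not an
`ℓ`-th power. -/
theorem eq_one_of_pow_eq {a c d : G} (hac : ¬ Commute a c) (hgen : Subgroup.closure {a, c} = ⊤)
    {p r m : ℕ} (hp : p ≠ 0) (hr : r ≠ 0) (h : d ^ m = c ^ r * a ^ p) : m = 1 := by
  by_contra hm
  obtain ⟨ℓ, hℓ, k, rfl⟩ := Nat.exists_prime_and_dvd hm
  have : Fact ℓ.Prime := ⟨hℓ⟩
  obtain ⟨K, _, _, _, u, hu⟩ :=
    exists_finite_field_unit_pow_ne_one ℓ (p * r) (mul_ne_zero hp hr)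
  have : Finite (K ≃ᵃ[K] K) := DFunLike.finite _
  obtain ⟨θ, hθa, hθc⟩ := exists_hom_eq_of_closure_eq_top hac hgen
    (AffineEquiv.homothetyUnitsMulHom (1 : K) (u ^ r))
    (AffineEquiv.homothetyUnitsMulHom (0 : K) (u⁻¹ ^ p))
  refine affineEquiv_pow_ne_homothety_mul ℓ (θ (d ^ k)) hu ?_
  rw [← map_pow, ← pow_mul, mul_comm k, h, map_mul, map_pow, map_pow, hθa, hθc, ← map_pow,
    ← map_pow, ← pow_mul, ← pow_mul, inv_pow, mul_comm r p]

end Homs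

section CosetOrder

variable {G : Type*} [Group G]

/-- `P` is the positive cone of a left-invariant strict partial order on the cosets of `C`:
`g C < g' C` if and only if `g⁻¹ * g' ∈ P`. -/
structure IsCosetCone (C : Subgroup G) (P : Set G) : Prop where
  mul_mem {x y : G} : x ∈ P → y ∈ P → x * y ∈ P
  mul_mem_left {x c : G} : c ∈ C → x ∈ P → c * x ∈ P
  mul_mem_right {x c : G} : x ∈ P → c ∈ C → x * c ∈ P
  one_notMem : 1 ∉ P

namespace IsCosetCone

variable {C : Subgroup G} {P : Set G}

open scoped Pointwise in
theorem inv (hP : IsCosetCone C P) : IsCosetCone C P⁻¹ where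
  mul_mem hx hy := by simpa using hP.mul_mem hy hx
  mul_mem_left hc hx := by simpa using hP.mul_mem_right hx (C.inv_mem hc)
  mul_mem_right hx hc := by simpa using hP.mul_mem_left (C.inv_mem hc) hx
  one_notMem := by simpa using hP.one_notMem

/-- The positive cone of the lexicographic order on `K` that compares first by `φ` and then, on the
kernel of `φ`, by `P`. -/
def lexCone {K : Subgroup G} (φ : K →* Multiplicative ℤ) (P : Set G) : Set G :=
  Subtype.val '' {x : K | 1 < φ x ∨ φ x = 1 ∧ (x : G) ∈ P}

theorem lex (hP : IsCosetCone C P) {K : Subgroup G} {φ : K →* Multiplicative ℤ}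
    (hCφ : C ≤ φ.ker.map K.subtype) : IsCosetCone C (lexCone φ P) where
  mul_mem := by
    rintro _ _ ⟨x, hx, rfl⟩ ⟨y, hy, rfl⟩
    refine ⟨x * y, ?_, rfl⟩
    rw [Set.mem_ofPred_eq, map_mul]
    rcases hx with hx | ⟨hx, hxP⟩ <;> rcases hy with hy | ⟨hy, hyP⟩
    · exact .inl (one_lt_mul'' hx hy)
    · exact .inl (by rwa [hy, mul_one])
    · exact .inl (by rwa [hx, one_mul])
    · exact .inr ⟨by rw [hx, hy, one_mul], hP.mul_mem hxP hyP⟩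
  mul_mem_left := by
    rintro _ _ hc ⟨x, hx, rfl⟩
    obtain ⟨c, hφc, rfl⟩ := hCφ hc
    refine ⟨c * x, ?_, rfl⟩
    rw [Set.mem_ofPred_eq, map_mul, show φ c = 1 from hφc, one_mul]
    exact hx.imp_right (.imp_right (hP.mul_mem_left hc))
  mul_mem_right := by
    rintro _ _ ⟨x, hx, rfl⟩ hc
    obtain ⟨c, hφc, rfl⟩ := hCφ hc
    refine ⟨x * c, ?_, rfl⟩
    rw [Set.mem_ofPred_eq, map_mul, show φ c = 1 from hφc, mul_one]
    exact hx.imp_right (.imp_right (hP.mul_mem_right · hc))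
  one_notMem := by
    rintro ⟨x, hx, hx1⟩
    obtain rfl : x = 1 := Subtype.ext hx1
    rcases hx with hφ | ⟨-, hP1⟩
    · exact hφ.ne' (map_one φ)
    · exact hP.one_notMem hP1

theorem mem_or_inv_mem_lexCone {K : Subgroup G} (φ : K →* Multiplicative ℤ) (x : K)
    (hker : φ x = 1 → (x : G) ∈ C ∨ (x : G) ∈ P ∨ (x : G)⁻¹ ∈ P) :
    (x : G) ∈ C ∨ (x : G) ∈ lexCone φ P ∨ (x : G)⁻¹ ∈ lexCone φ P := by
  rcases lt_trichotomy (φ x) 1 with hlt | heq | hgt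
  · exact .inr (.inr ⟨x⁻¹, .inl (by rwa [map_inv, one_lt_inv']), rfl⟩)
  · refine (hker heq).imp_right (.imp (fun h => ⟨x, .inr ⟨heq, h⟩, rfl⟩) fun h => ?_)
    exact ⟨x⁻¹, .inr ⟨by rw [map_inv, heq, inv_one], h⟩, rfl⟩
  · exact .inr (.inl ⟨x, .inl hgt, rfl⟩)

end IsCosetCone

variable [IsFreeGroup G]

theorem exists_hom_closure_insert {b s : G} {S : Finset G} (hs : s ∈ S) (hbs : ¬ Commute b s) :
    ∃ φ : Subgroup.closure (insert b (S : Set G)) →* Multiplicative ℤ,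
      Subgroup.zpowers b ≤ φ.ker.map (Subgroup.subtype _) ∧
        ∃ t ∈ S, t ∉ φ.ker.map (Subgroup.subtype _) := by
  set K := Subgroup.closure (insert b (S : Set G))
  have hbK : b ∈ K := Subgroup.subset_closure (Set.mem_insert _ _)
  have hsK : s ∈ K := Subgroup.subset_closure (Set.mem_insert_of_mem _ hs)
  obtain ⟨φ, hφb, hφ⟩ := exists_hom_ne_one_of_not_commute (G := K) (b := ⟨b, hbK⟩) (g := ⟨s, hsK⟩)
    fun h => hbs (congrArg Subtype.val h.eq)
  have b_mem : b ∈ φ.ker.map K.subtype := ⟨⟨b, hbK⟩, hφb, rfl⟩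
  refine ⟨φ, Subgroup.zpowers_le.2 b_mem, ?_⟩
  by_contra! hS
  have K_le : K ≤ φ.ker.map K.subtype := (Subgroup.closure_le _).2 (Set.insert_subset b_mem hS)
  refine hφ (MonoidHom.ext fun x => ?_)
  obtain ⟨y, hφy, hyx⟩ := K_le x.2
  obtain rfl : y = x := Subtype.ext hyx
  exact hφy

theorem exists_isCosetCone {b : G} (hb : Subgroup.centralizer {b} ≤ Subgroup.zpowers b)
    (S : Finset G) : ∃ P, IsCosetCone (Subgroup.zpowers b) P ∧
      ∀ s ∈ S, s ∈ Subgroup.zpowers b ∨ s ∈ P ∨ s⁻¹ ∈ P := by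
  classical
  induction S using Finset.strongInduction with
  | H S ih =>
    by_cases hS : ∀ s ∈ S, s ∈ Subgroup.zpowers b
    · exact ⟨∅, ⟨by simp, by simp, by simp, by simp⟩, fun s hs => .inl (hS s hs)⟩
    push Not at hS
    obtain ⟨s, hs, hsb⟩ := hS
    have not_commute : ¬ Commute b s := fun h =>
      hsb (hb (Subgroup.mem_centralizer_singleton_iff.2 h.symm))
    obtain ⟨φ, hbφ, t, ht, htφ⟩ := exists_hom_closure_insert hs not_commute
    obtain ⟨P, hP, hSP⟩ := ih {s ∈ S | s ∈ φ.ker.map (Subgroup.subtype _)}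
      (Finset.filter_ssubset.2 ⟨t, ht, htφ⟩)
    refine ⟨_, hP.lex hbφ, fun x hx => ?_⟩
    have hxK : x ∈ Subgroup.closure (insert b (S : Set G)) :=
      Subgroup.subset_closure (Set.mem_insert_of_mem _ hx)
    exact IsCosetCone.mem_or_inv_mem_lexCone φ ⟨x, hxK⟩ fun h =>
      hSP x (Finset.mem_filter.2 ⟨hx, ⟨x, hxK⟩, h, rfl⟩)

end CosetOrder

section TopCells

theorem wellFounded_of_finite_of_congr {X Y : Type*} [Finite Y] (f : X → Y) {r : X → X → Prop}
    [IsTrans X r] [Std.Irrefl r] (hr : ∀ ⦃x x' y⦄, f x = f x' → r y x → r y x') :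
    WellFounded r := by
  let r' (y y' : Y) : Prop := ∃ x x', f x = y ∧ f x' = y' ∧ r x x'
  have : IsTrans Y r' := ⟨by
    rintro _ _ _ ⟨x₁, x₂, rfl, rfl, h⟩ ⟨x₃, x₄, hx₃, rfl, h'⟩
    exact ⟨x₁, x₄, rfl, rfl, _root_.trans (hr hx₃.symm h) h'⟩⟩
  have : Std.Irrefl r' := ⟨by
    rintro _ ⟨x, x', rfl, hx', h⟩
    exact irrefl x (hr hx' h)⟩
  exact Subrelation.wf (fun {x x'} h => ⟨x, x', rfl, rfl, h⟩)
    (InvImage.wf f (Finite.wellFounded_of_trans_of_irrefl r'))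

/-- A bi-infinite sequence of distinct cells of the free right `G`-set `β × G` that `b` translates
by `n`. The `i`-th cell is `(label i, pos i)`. -/
structure CellSequence {G : Type*} [Group G] (b : G) (n : ℕ) (β : Type*) where
  label : ℤ → β
  pos : ℤ → G
  label_add (i : ℤ) : label (i + n) = label i
  pos_add (i : ℤ) : pos (i + n) = pos i * b
  eq_of_label_eq_of_pos_eq {i j : ℤ} : label i = label j → pos i = pos j → i = j

namespace CellSequence

variable {G β : Type*} [Group G] {b : G} {n : ℕ} (s : CellSequence b n β)

theorem label_add_mul (i k : ℤ) : s.label (i + k * n) = s.label i :=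
  Function.Periodic.int_mul s.label_add k i

theorem pos_add_mul (i k : ℤ) : s.pos (i + k * n) = s.pos i * b ^ k := by
  induction k with
  | zero => simp
  | succ k ih => rw [add_one_mul, ← add_assoc, pos_add, ih, mul_assoc, zpow_add_one]
  | pred k ih =>
    rw [zpow_sub_one, ← mul_assoc, ← ih, eq_mul_inv_iff_mul_eq, ← pos_add]
    congr 1
    ring

/-- The orbit of the `i`-th cell under the right action of `H`. -/
def orbit (H : Subgroup G) (i : ℤ) : β × G ⧸ H := (s.label i, s.pos i)

variable {s} {H : Subgroup G} {P : Set G} {i j : ℤ}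

theorem orbit_eq_iff : s.orbit H i = s.orbit H j ↔
    s.label i = s.label j ∧ (s.pos i)⁻¹ * s.pos j ∈ H := by
  rw [orbit, orbit, Prod.mk.injEq, QuotientGroup.eq]

theorem orbit_add_mul {k : ℤ} (hk : b ^ k ∈ H) (i : ℤ) :
    s.orbit H (i + k * n) = s.orbit H i := by
  rw [eq_comm, orbit_eq_iff, s.label_add_mul, s.pos_add_mul, inv_mul_cancel_left]
  exact ⟨rfl, hk⟩

theorem mul_dvd_of_mem_zpowers {q : ℕ} (hbH : ∀ k : ℤ, b ^ k ∈ H ↔ (q : ℤ) ∣ k)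
    (hij : s.orbit H i = s.orbit H j) (hmem : (s.pos i)⁻¹ * s.pos j ∈ Subgroup.zpowers b) :
    (q * n : ℤ) ∣ j - i := by
  obtain ⟨hlabel, hH⟩ := orbit_eq_iff.1 hij
  obtain ⟨k, hk : b ^ k = _⟩ := hmem
  have pos_eq : s.pos (i + k * n) = s.pos j := by rw [s.pos_add_mul, hk, mul_inv_cancel_left]
  obtain rfl := s.eq_of_label_eq_of_pos_eq ((s.label_add_mul i k).trans hlabel) pos_eq
  rw [add_sub_cancel_left]
  exact mul_dvd_mul_right ((hbH k).1 (hk ▸ hH)) _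

/-- The `i`-th cell is maximal, for the order with cone `P` on the translates of the sequence,
among the occurrences of its `H`-orbit. -/
def IsTop (s : CellSequence b n β) (H : Subgroup G) (P : Set G) (i : ℤ) : Prop :=
  ∀ j, s.orbit H i = s.orbit H j → (s.pos i)⁻¹ * s.pos j ∉ P

theorem IsTop.mono {H' : Subgroup G} (hi : s.IsTop H P i) (hH : H' ≤ H) : s.IsTop H' P i :=
  fun j hij => hi j (orbit_eq_iff.2 ((orbit_eq_iff.1 hij).imp_right (hH ·)))

theorem IsTop.add_mul (hi : s.IsTop H P i) (hP : IsCosetCone (Subgroup.zpowers b) P) {k : ℤ}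
    (hk : b ^ k ∈ H) : s.IsTop H P (i + k * n) := by
  intro j hij hj
  rw [orbit_add_mul hk] at hij
  refine hi j hij ?_
  simpa [s.pos_add_mul, ← mul_assoc] using hP.mul_mem_left ⟨k, rfl⟩ hj

theorem exists_isTop (hP : IsCosetCone (Subgroup.zpowers b) P) (hn : 0 < n) {m : ℕ} (hm : 0 < m)
    (hbm : b ^ m ∈ H) (i : ℤ) : ∃ j, s.orbit H i = s.orbit H j ∧ s.IsTop H P j := by
  let above (j i : ℤ) : Prop := s.orbit H i = s.orbit H j ∧ (s.pos i)⁻¹ * s.pos j ∈ P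
  have : IsTrans ℤ above := ⟨fun i j k hij hjk =>
    ⟨hjk.1.trans hij.1, by simpa [mul_assoc] using hP.mul_mem hjk.2 hij.2⟩⟩
  have : Std.Irrefl above := ⟨fun i hi => hP.one_notMem (by simpa using hi.2)⟩
  have : NeZero (m * n) := ⟨(Nat.mul_pos hm hn).ne'⟩
  have above_congr ⦃i i' j : ℤ⦄ (hii' : (i : ZMod (m * n)) = i') (hij : above j i) :
      above j i' := by
    obtain ⟨k, hk⟩ := (ZMod.intCast_eq_intCast_iff_dvd_sub _ _ _).1 hii'
    obtain rfl : i' = i + (m * k : ℤ) * n := by push_cast at hk; linear_combination hk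
    have hbk : b ^ (m * k : ℤ) ∈ H := by
      rw [zpow_mul, zpow_natCast]
      exact H.zpow_mem hbm k
    refine ⟨(orbit_add_mul hbk i).trans hij.1, ?_⟩
    simpa [s.pos_add_mul, ← mul_assoc] using hP.mul_mem_left (inv_mem ⟨m * k, rfl⟩) hij.2
  have wf := wellFounded_of_finite_of_congr (fun i : ℤ => (i : ZMod (m * n))) above_congr
  obtain ⟨j, hij, hj⟩ := wf.has_min {j | s.orbit H i = s.orbit H j} ⟨i, rfl⟩
  exact ⟨j, hij, fun j' hjj' hP' => hj j' (hij.trans hjj') ⟨hjj', hP'⟩⟩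

/-- The order with cone `P` on the cosets of `⟨b⟩` compares the trivial coset with every translation
`(pos i)⁻¹ * pos j` that moves a cell of the sequence to another one. -/
def IsTotal (s : CellSequence b n β) (P : Set G) : Prop :=
  ∀ i j, s.label i = s.label j → (s.pos i)⁻¹ * s.pos j ∈ Subgroup.zpowers b ∨
    (s.pos i)⁻¹ * s.pos j ∈ P ∨ ((s.pos i)⁻¹ * s.pos j)⁻¹ ∈ P

theorem IsTop.mul_dvd_sub {q : ℕ} (hbH : ∀ k : ℤ, b ^ k ∈ H ↔ (q : ℤ) ∣ k) (hs : s.IsTotal P)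
    (hi : s.IsTop H P i) (hj : s.IsTop H P j) (hij : s.orbit H i = s.orbit H j) :
    (q * n : ℤ) ∣ j - i := by
  rcases hs i j (orbit_eq_iff.1 hij).1 with hmem | hmem | hmem
  · exact mul_dvd_of_mem_zpowers hbH hij hmem
  · exact absurd hmem (hi j hij)
  · exact absurd (by simpa using hmem) (hj i hij.symm)

open scoped Pointwise in
theorem not_isTop_of_isTop_inv {q : ℕ} (hbH : ∀ k : ℤ, b ^ k ∈ H ↔ (q : ℤ) ∣ k)
    (hs : s.IsTotal P) (hi : s.IsTop H P⁻¹ i) (hij : s.orbit H i = s.orbit H j)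
    (hdvd : ¬ (q * n : ℤ) ∣ j - i) : ¬ s.IsTop H P i := by
  intro hi'
  rcases hs i j (orbit_eq_iff.1 hij).1 with hmem | hmem | hmem
  · exact hdvd (mul_dvd_of_mem_zpowers hbH hij hmem)
  · exact hi' j hij hmem
  · exact hi j hij hmem

theorem exists_isCosetCone_isTotal [IsFreeGroup G] (s : CellSequence b n β) (hn : 0 < n)
    (hb : Subgroup.centralizer {b} ≤ Subgroup.zpowers b) :
    ∃ P, IsCosetCone (Subgroup.zpowers b) P ∧ s.IsTotal P := by
  classical
  obtain ⟨P, hP, hS⟩ := exists_isCosetCone hb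
    ((Finset.Ico 0 (n : ℤ) ×ˢ Finset.Ico 0 (n : ℤ)).image fun ij => (s.pos ij.1)⁻¹ * s.pos ij.2)
  refine ⟨P, hP, fun i j _ => ?_⟩
  have n_pos : (0 : ℤ) < n := by exact_mod_cast hn
  have emod_mem (i : ℤ) : i % n ∈ Finset.Ico 0 (n : ℤ) :=
    Finset.mem_Ico.2 ⟨Int.emod_nonneg i n_pos.ne', Int.emod_lt_of_pos i n_pos⟩
  have pos_eq (i : ℤ) : s.pos i = s.pos (i % n) * b ^ (i / n) := by
    rw [← s.pos_add_mul, mul_comm, Int.emod_add_mul_ediv]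
  have zpow_mem (k : ℤ) : b ^ k ∈ Subgroup.zpowers b := ⟨k, rfl⟩
  rw [show (s.pos i)⁻¹ * s.pos j =
    (b ^ (i / n))⁻¹ * ((s.pos (i % n))⁻¹ * s.pos (j % n)) * b ^ (j / n) by
      rw [pos_eq i, pos_eq j]; group]
  rcases hS _ (Finset.mem_image.2 ⟨(_, _), Finset.mk_mem_product (emod_mem i) (emod_mem j), rfl⟩)
    with hC | hpos | hneg
  · exact .inl (mul_mem (mul_mem (inv_mem (zpow_mem _)) hC) (zpow_mem _))
  · exact .inr (.inl (hP.mul_mem_right (hP.mul_mem_left (inv_mem (zpow_mem _)) hpos) (zpow_mem _)))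
  · refine .inr (.inr ?_)
    rw [mul_inv_rev, mul_inv_rev, inv_inv, ← mul_assoc]
    exact hP.mul_mem_right (hP.mul_mem_left (inv_mem (zpow_mem _)) hneg) (zpow_mem _)

end CellSequence

end TopCells

section Counting

theorem exists_mem_Ioc_and_not_sub_one {p : ℤ → Prop} {c a : ℤ} (hca : c ≤ a) (hc : ¬ p c)
    (ha : p a) : ∃ i ∈ Set.Ioc c a, p i ∧ ¬ p (i - 1) := by
  induction a, hca using Int.leInduction with
  | base => exact absurd ha hc
  | succ a hca ih =>
    by_cases hpa : p a
    · obtain ⟨i, hi, hpi⟩ := ih hpa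
      exact ⟨i, ⟨hi.1, hi.2.trans (lt_add_one a).le⟩, hpi⟩
    · exact ⟨a + 1, ⟨Int.lt_add_one_of_le hca, le_rfl⟩, ha, by rwa [add_sub_cancel_right]⟩

theorem le_ncard_of_forall_exists_mem_Ioc {p : ℤ → Prop} {c n : ℤ}
    (hp : ∀ k : ℕ, ∃ i ∈ Set.Ioc (c + k * n) (c + (k + 1) * n), p i) (q : ℕ) :
    q ≤ {i ∈ Set.Ioc c (c + q * n) | p i}.ncard := by
  choose i hi hpi using hp
  have n_nonneg : 0 ≤ n := by linarith [(hi 0).1, (hi 0).2]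
  have i_strictMono : StrictMono i := strictMono_nat_of_lt_succ fun k =>
    (hi k).2.trans_lt (by simpa using (hi (k + 1)).1)
  have maps_to : Set.MapsTo i (Set.Iio q) {i ∈ Set.Ioc c (c + q * n) | p i} := by
    intro k (hk : k < q)
    refine ⟨⟨lt_of_le_of_lt (by nlinarith) (hi k).1, (hi k).2.trans ?_⟩, hpi k⟩
    have : (k : ℤ) + 1 ≤ q := by exact_mod_cast hk
    nlinarith
  calc q = (Set.Iio q).ncard := by rw [← Nat.card_coe_set_eq, Nat.card_eq_fintype_card]; simp
    _ ≤ _ := Set.ncard_le_ncard_of_injOn i maps_to i_strictMono.injective.injOn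
      ((Set.finite_Ioc _ _).subset (Set.sep_subset _ _))

namespace CellSequence

variable {G β : Type*} [Group G] {b : G} {n q : ℕ} {s : CellSequence b n β} {H : Subgroup G}
  {P : Set G}

theorem bijOn_orbit (hP : IsCosetCone (Subgroup.zpowers b) P) (hn : 0 < n) (hq : 0 < q)
    (hbH : ∀ k : ℤ, b ^ k ∈ H ↔ (q : ℤ) ∣ k) (hs : s.IsTotal P) (c : ℤ) :
    Set.BijOn (s.orbit H) {i ∈ Set.Ioc c (c + q * n) | s.IsTop H P i}
      (Set.range (s.orbit H)) := by
  have qn_pos : (0 : ℤ) < q * n := by positivity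
  refine ⟨fun i _ => ⟨i, rfl⟩, fun i ⟨hi, hi_top⟩ j ⟨hj, hj_top⟩ hij => ?_, ?_⟩
  · refine (sub_eq_zero.1 (Int.eq_zero_of_abs_lt_dvd (hi_top.mul_dvd_sub hbH hs hj_top hij)
      (abs_lt.2 ⟨?_, ?_⟩))).symm
    · linarith [hi.2, hj.1]
    · linarith [hi.1, hj.2]
  · rintro _ ⟨i, rfl⟩
    obtain ⟨j, hij, hj⟩ := s.exists_isTop hP hn hq (by exact_mod_cast (hbH q).2 dvd_rfl) i
    obtain ⟨k, hk, -⟩ := existsUnique_add_zsmul_mem_Ioc qn_pos j c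
    have hbk : b ^ (k * q) ∈ H := (hbH _).2 (dvd_mul_left _ _)
    rw [smul_eq_mul, ← mul_assoc] at hk
    exact ⟨_, ⟨hk, hj.add_mul hP hbk⟩, (orbit_add_mul hbk j).trans hij.symm⟩

theorem finite_range_orbit (hn : 0 < n) (hq : 0 < q) (hbq : b ^ q ∈ H) :
    (Set.range (s.orbit H)).Finite := by
  have periodic : Function.Periodic (s.orbit H) (q * n) :=
    orbit_add_mul (by rwa [zpow_natCast])
  rw [← periodic.image_Ioc (by positivity) 0]
  exact (Set.finite_Ioc _ _).image _

theorem ncard_range_orbit (hP : IsCosetCone (Subgroup.zpowers b) P) (hn : 0 < n) (hq : 0 < q)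
    (hbH : ∀ k : ℤ, b ^ k ∈ H ↔ (q : ℤ) ∣ k) (hs : s.IsTotal P) (c : ℤ) :
    (Set.range (s.orbit H)).ncard = {i ∈ Set.Ioc c (c + q * n) | s.IsTop H P i}.ncard := by
  have bij := bijOn_orbit hP hn hq hbH hs c
  rw [← bij.image_eq, bij.injOn.ncard_image]

theorem exists_le_ncard_isTop_and_not_sub_one (hP : IsCosetCone (Subgroup.zpowers b) P)
    (hn : 0 < n) (hbH : ∀ k : ℤ, b ^ k ∈ H ↔ (q : ℤ) ∣ k) (hs : s.IsTotal P)
    (hvisit : ∀ i, ∃ j, s.orbit H i = s.orbit H j ∧ ¬ (q * n : ℤ) ∣ j - i) :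
    ∃ c : ℤ, q ≤ {i ∈ Set.Ioc c (c + q * n) | s.IsTop H P i ∧ ¬ s.IsTop H P (i - 1)}.ncard := by
  obtain ⟨a, -, a_top⟩ := s.exists_isTop (H := ⊤) hP hn one_pos trivial 0
  obtain ⟨c, -, c_bot⟩ := s.exists_isTop (H := ⊤) hP.inv hn one_pos trivial 0
  obtain ⟨l, hl, -⟩ := existsUnique_add_zsmul_mem_Ioc (Int.natCast_pos.2 hn) a c
  rw [smul_eq_mul] at hl
  refine ⟨c, le_ncard_of_forall_exists_mem_Ioc (fun k => ?_) q⟩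
  have top : s.IsTop H P (a + (l + k) * n) := (a_top.add_mul hP trivial).mono le_top
  have not_top : ¬ s.IsTop H P (c + k * n) := by
    obtain ⟨j, hj, hdvd⟩ := hvisit (c + k * n)
    exact not_isTop_of_isTop_inv hbH hs ((c_bot.add_mul hP.inv trivial).mono le_top) hj hdvd
  rw [add_mul, ← add_assoc] at top
  obtain ⟨i, hi, hi_top⟩ := exists_mem_Ioc_and_not_sub_one (by linarith [hl.1]) not_top top
  exact ⟨i, ⟨hi.1, by linarith [hi.2, hl.2]⟩, hi_top⟩

end CellSequence

end Counting

section Potential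

variable {α A : Type*} [AddCommGroup A]

theorem eq_apply_one_of_forall_of_mul {B : Type*} {D : FreeGroup α → B}
    (hD : ∀ x g, D (FreeGroup.of x * g) = D g) (g : FreeGroup α) : D g = D 1 := by
  suffices ∀ h, D (g * h) = D h by simpa using this 1
  induction g using FreeGroup.induction_on with
  | C1 => simp
  | of x => exact hD x
  | inv_of x _ => exact fun h => by simpa using (hD x ((FreeGroup.of x)⁻¹ * h)).symm
  | mul g g' hg hg' => exact fun h => by rw [mul_assoc, hg, hg']

/-- The free group acting on itself by left multiplication and, along the edge from `g` to
`of x * g` of the Cayley graph, adding the weight `f x g` to a counter in `A`. -/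
def skewProduct (f : α → FreeGroup α → A) : FreeGroup α →* Equiv.Perm (FreeGroup α × A) :=
  FreeGroup.lift fun x =>
    { toFun := fun s => (FreeGroup.of x * s.1, s.2 + f x s.1)
      invFun := fun s => ((FreeGroup.of x)⁻¹ * s.1, s.2 - f x ((FreeGroup.of x)⁻¹ * s.1))
      left_inv := fun s => by simp
      right_inv := fun s => by simp }

/-- The potential of the edge weights `f` on the Cayley graph of the free group: the total weight of
the path from `1` to `g`. -/
def potential (f : α → FreeGroup α → A) (g : FreeGroup α) : A :=
  (skewProduct f g (1, 0)).2

theorem skewProduct_apply_fst (f : α → FreeGroup α → A) (g : FreeGroup α)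
    (s : FreeGroup α × A) : (skewProduct f g s).1 = g * s.1 := by
  induction g using FreeGroup.induction_on generalizing s with
  | C1 => simp
  | of x => simp [skewProduct]
  | inv_of x _ =>
    rw [map_inv, skewProduct, FreeGroup.lift_apply_of]
    rfl
  | mul g g' hg hg' => rw [map_mul, Equiv.Perm.mul_apply, hg, hg', mul_assoc]

@[simp]
theorem potential_one (f : α → FreeGroup α → A) : potential f 1 = 0 := by
  simp [potential]

theorem potential_of_mul (f : α → FreeGroup α → A) (x : α) (g : FreeGroup α) :
    potential f (FreeGroup.of x * g) = potential f g + f x g := by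
  have apply_of (s : FreeGroup α × A) : (skewProduct f (FreeGroup.of x) s).2 = s.2 + f x s.1 := by
    simp [skewProduct]
  rw [potential, map_mul, Equiv.Perm.mul_apply, apply_of, skewProduct_apply_fst, mul_one, potential]

theorem eq_potential {f : α → FreeGroup α → A} {ψ : FreeGroup α → A} (hψ_one : ψ 1 = 0)
    (hψ : ∀ x g, ψ (FreeGroup.of x * g) = ψ g + f x g) : ψ = potential f := by
  funext g
  have diff_invariant (x : α) (g : FreeGroup α) :
      ψ (FreeGroup.of x * g) - potential f (FreeGroup.of x * g) = ψ g - potential f g := by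
    rw [hψ, potential_of_mul, add_sub_add_right_eq_sub]
  have diff_eq := eq_apply_one_of_forall_of_mul (D := fun g => ψ g - potential f g) diff_invariant g
  simpa [hψ_one, sub_eq_zero] using diff_eq

variable {k : Type*} [CommRing k]

theorem potential_mul {f : α → FreeGroup α → k} {h : FreeGroup α} {t : k}
    (hf : ∀ x g, f x (g * h) = t * f x g) (g : FreeGroup α) :
    potential f (g * h) = t * potential f g + potential f h := by
  have diff_invariant (x : α) (g : FreeGroup α) :
      potential f (FreeGroup.of x * g * h) - t * potential f (FreeGroup.of x * g) =
        potential f (g * h) - t * potential f g := by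
    rw [mul_assoc, potential_of_mul, potential_of_mul, hf]
    ring
  have diff_eq := eq_apply_one_of_forall_of_mul
    (D := fun g => potential f (g * h) - t * potential f g) diff_invariant g
  simpa [sub_eq_iff_eq_add'] using diff_eq

end Potential

section EulerCharacteristic

variable {α k : Type*} [CommRing k] (H : Subgroup (FreeGroup α))

/-- The potential of edge weights on the Schreier graph with vertex set `FreeGroup α ⧸ H`, in which
`(x, v)` is the edge from `v` to `of x • v`, computed on its universal cover `FreeGroup α`. -/
def schreierPotential : (α × FreeGroup α ⧸ H → k) →ₗ[k] FreeGroup α → k where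
  toFun f := potential fun x g => f (x, g)
  map_add' f f' := .symm <| eq_potential (by simp) fun x g => by
    simp only [Pi.add_apply, potential_of_mul]
    ring
  map_smul' t f := .symm <| eq_potential (by simp) fun x g => by
    simp only [Pi.smul_apply, potential_of_mul, smul_add, RingHom.id_apply]

variable {H}

theorem schreierPotential_one (f : α × FreeGroup α ⧸ H → k) : schreierPotential H f 1 = 0 :=
  potential_one fun x g => f (x, g)

theorem schreierPotential_of_mul (f : α × FreeGroup α ⧸ H → k) (x : α) (g : FreeGroup α) :
    schreierPotential H f (FreeGroup.of x * g) = schreierPotential H f g + f (x, g) :=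
  potential_of_mul _ x g

theorem schreierPotential_mul (f : α × FreeGroup α ⧸ H → k) (g : FreeGroup α) {h : FreeGroup α}
    (hh : h ∈ H) :
    schreierPotential H f (g * h) = schreierPotential H f g + schreierPotential H f h := by
  have := potential_mul (f := fun x g => f (x, g)) (h := h) (t := 1) (fun x g => by
    rw [one_mul, QuotientGroup.mk_mul_of_mem g hh]) g
  rwa [one_mul] at this

theorem exists_coboundary {S : Set (FreeGroup α)} (hS : Subgroup.closure S = H)
    {f : α × FreeGroup α ⧸ H → k} (hf : ∀ s ∈ S, schreierPotential H f s = 0) :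
    ∃ ψ : FreeGroup α ⧸ H → k, ∀ x v, ψ (FreeGroup.of x • v) - ψ v = f (x, v) := by
  have eq_zero {h : FreeGroup α} (hh : h ∈ H) : schreierPotential H f h = 0 := by
    rw [← hS] at hh
    induction hh using Subgroup.closure_induction with
    | mem h hh => exact hf h hh
    | one => exact schreierPotential_one f
    | mul g h _ hh ihg ihh => rw [schreierPotential_mul f g (hS ▸ hh), ihg, ihh, add_zero]
    | inv h hh ih =>
      have := schreierPotential_mul f h⁻¹ (hS ▸ hh)
      rwa [inv_mul_cancel, ih, add_zero, schreierPotential_one, eq_comm] at this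
  refine ⟨Quotient.lift (schreierPotential H f) fun g g' hgg' => ?_, fun x v => ?_⟩
  · have hmem := QuotientGroup.leftRel_apply.1 hgg'
    rw [← mul_inv_cancel_left g g', schreierPotential_mul f g hmem, eq_zero hmem, add_zero]
  · induction v using QuotientGroup.induction_on with
    | H g => exact sub_eq_iff_eq_add'.2 (schreierPotential_of_mul f x g)

variable {V : Set (FreeGroup α ⧸ H)} {E : Set (α × FreeGroup α ⧸ H)}

/-- The coboundary of the subgraph with vertex set `V` and edge set `E` of the Schreier graph. -/
def coboundary (hE : ∀ e ∈ E, e.2 ∈ V ∧ FreeGroup.of e.1 • e.2 ∈ V) : (V → k) →ₗ[k] E → k where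
  toFun ψ e := ψ ⟨FreeGroup.of e.1.1 • e.1.2, (hE e e.2).2⟩ - ψ ⟨e.1.2, (hE e e.2).1⟩
  map_add' ψ ψ' := by
    ext e
    simp only [Pi.add_apply]
    ring
  map_smul' t ψ := by
    ext e
    simp [mul_sub]

theorem one_le_finrank_ker_coboundary {K : Type*} [Field K] [Finite V] (hV : V.Nonempty)
    (hE : ∀ e ∈ E, e.2 ∈ V ∧ FreeGroup.of e.1 • e.2 ∈ V) :
    1 ≤ Module.finrank K (coboundary (k := K) hE).ker := by
  obtain ⟨v, hv⟩ := hV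
  refine Module.finrank_pos_iff_exists_ne_zero.2 ⟨⟨1, by ext; simp [coboundary]⟩, fun h => ?_⟩
  simpa using congrFun (congrArg Subtype.val h) ⟨v, hv⟩

/-- The weights of the generators in `S` for edge weights supported on `E`. -/
noncomputable def periods (S : Finset (FreeGroup α)) (E : Set (α × FreeGroup α ⧸ H)) :
    (E → k) →ₗ[k] S → k :=
  LinearMap.funLeft k k Subtype.val ∘ₗ schreierPotential H ∘ₗ
    Function.ExtendByZero.linearMap k Subtype.val

theorem ker_periods_le_range_coboundary {S : Finset (FreeGroup α)}
    (hS : Subgroup.closure S = H) (hE : ∀ e ∈ E, e.2 ∈ V ∧ FreeGroup.of e.1 • e.2 ∈ V) :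
    (periods (k := k) S E).ker ≤ (coboundary hE).range := by
  intro f hf
  obtain ⟨ψ, hψ⟩ := exists_coboundary hS (f := Function.extend Subtype.val f 0)
    fun s hs => congrFun hf ⟨s, hs⟩
  refine ⟨fun v => ψ v, funext fun e => ?_⟩
  exact (hψ e.1.1 e.1.2).trans (Subtype.val_injective.extend_apply f 0 e)

theorem ncard_edges_add_one_le {S : Finset (FreeGroup α)} (hS : Subgroup.closure S = H)
    (hVfin : V.Finite) (hV : V.Nonempty) (hEfin : E.Finite)
    (hE : ∀ e ∈ E, e.2 ∈ V ∧ FreeGroup.of e.1 • e.2 ∈ V) :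
    E.ncard + 1 ≤ V.ncard + S.card := by
  have := hVfin.fintype
  have := hEfin.fintype
  have rank_periods := (periods (k := ℚ) S E).finrank_range_add_finrank_ker
  have rank_coboundary := (coboundary (k := ℚ) hE).finrank_range_add_finrank_ker
  have range_periods_le := (periods (k := ℚ) S E).range.finrank_le
  have ker_le := Submodule.finrank_mono (ker_periods_le_range_coboundary (k := ℚ) hS hE)
  have constants := one_le_finrank_ker_coboundary (K := ℚ) hV hE
  rw [Module.finrank_pi, ← Nat.card_eq_fintype_card, Nat.card_coe_set_eq] at rank_periods
  rw [Module.finrank_pi, ← Nat.card_eq_fintype_card, Nat.card_coe_set_eq] at rank_coboundary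
  rw [Module.finrank_pi, Fintype.card_coe] at range_periods_le
  omega

end EulerCharacteristic

section Axis

variable {α : Type*}

/-- A bi-infinite embedded path in the Cayley graph of the free group, with an edge from `g` to
`of x * g` for every generator `x`, that right multiplication by `b` translates by `period`. The
`i`-th edge joins `vertex i` to `vertex (i + 1)`, is labelled by `label i`, and starts at `tail i`,
which is either of its endpoints. -/
structure Axis (b : FreeGroup α) where
  period : ℕ
  vertex : ℤ → FreeGroup α
  label : ℤ → α
  tail : ℤ → FreeGroup α
  period_pos : 0 < period
  vertex_add_period (i : ℤ) : vertex (i + period) = vertex i * b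
  label_add_period (i : ℤ) : label (i + period) = label i
  tail_add_period (i : ℤ) : tail (i + period) = tail i * b
  edge (i : ℤ) : vertex i = tail i ∧ vertex (i + 1) = FreeGroup.of (label i) * tail i ∨
    vertex (i + 1) = tail i ∧ vertex i = FreeGroup.of (label i) * tail i
  vertex_injective : Function.Injective vertex

theorem exists_partialProducts {G : Type*} [Group G] (s : ℤ → G) :
    ∃ u : ℤ → G, u 0 = 1 ∧ ∀ i, u (i + 1) = u i * s i := by
  let step : Equiv.Perm (ℤ × G) :=
    { toFun := fun y => (y.1 + 1, y.2 * s y.1)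
      invFun := fun y => (y.1 - 1, y.2 * (s (y.1 - 1))⁻¹)
      left_inv := fun y => by simp
      right_inv := fun y => by simp }
  have fst_eq (i : ℤ) : ((step ^ i) (0, 1)).1 = i := by
    induction i with
    | zero => rfl
    | succ i ih =>
      rw [add_comm, zpow_one_add, Equiv.Perm.mul_apply, add_comm]
      exact congrArg (· + 1) ih
    | pred i ih =>
      rw [sub_eq_neg_add, zpow_add, zpow_neg_one, Equiv.Perm.mul_apply, neg_add_eq_sub]
      exact congrArg (· - 1) ih
  refine ⟨fun i => ((step ^ i) (0, 1)).2, rfl, fun i => ?_⟩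
  have step_snd (y : ℤ × G) : (step y).2 = y.2 * s y.1 := rfl
  change ((step ^ (i + 1)) (0, 1)).2 = _
  rw [add_comm, zpow_one_add, Equiv.Perm.mul_apply, step_snd, fst_eq]

theorem partialProducts_add_of_periodic {G : Type*} [Group G] {s u : ℤ → G} {n : ℤ}
    (hs : Function.Periodic s n) (hu_zero : u 0 = 1) (hu : ∀ i, u (i + 1) = u i * s i) (i : ℤ) :
    u (i + n) = u n * u i := by
  induction i with
  | zero => simp [hu_zero]
  | succ i ih => rw [add_right_comm, hu, ih, hs, hu, mul_assoc]
  | pred i ih =>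
    have h₁ := hu (-i - 1)
    have h₂ := hu (-i - 1 + n)
    rw [hs, add_right_comm, sub_add_cancel, ih] at h₂
    rw [sub_add_cancel] at h₁
    rw [h₁, ← mul_assoc] at h₂
    exact (mul_right_cancel h₂).symm

theorem mk_ne_one_of_isReduced {w : List (α × Bool)} (hw : FreeGroup.IsReduced w) (hne : w ≠ []) :
    FreeGroup.mk w ≠ 1 := by
  classical
  intro h
  have words_eq := congrArg FreeGroup.toWord h
  rw [FreeGroup.toWord_mk, hw.reduce_eq, FreeGroup.toWord_one] at words_eq
  exact hne words_eq

theorem partialProducts_mk_add {l : ℤ → α × Bool} {u : ℤ → FreeGroup α}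
    (hu : ∀ i, u (i + 1) = u i * FreeGroup.mk [l i]) (i : ℤ) (k : ℕ) :
    u (i + k) = u i * FreeGroup.mk ((List.range k).map fun j : ℕ => l (i + j)) := by
  induction k with
  | zero => simp [← FreeGroup.one_eq_mk]
  | succ k ih =>
    rw [List.range_succ, List.map_append, ← FreeGroup.mul_mk, ← mul_assoc, ← ih, Nat.cast_succ,
      ← add_assoc, hu, List.map_singleton]

theorem partialProducts_mk_injective {l : ℤ → α × Bool} {u : ℤ → FreeGroup α}
    (hl : ∀ i, (l i).1 = (l (i + 1)).1 → (l i).2 = (l (i + 1)).2)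
    (hu : ∀ i, u (i + 1) = u i * FreeGroup.mk [l i]) : Function.Injective u := by
  refine .of_lt_imp_ne fun i j hij h => ?_
  obtain ⟨k, rfl⟩ := Int.le.dest hij.le
  rw [partialProducts_mk_add hu, left_eq_mul] at h
  refine mk_ne_one_of_isReduced (List.isChain_iff_getElem.2 fun j _ => ?_) ?_ h
  · simpa [add_assoc] using hl (i + j)
  · rw [Ne, List.map_eq_nil_iff, List.range_eq_nil]
    omega

theorem emod_add_one_eq_ite {n : ℤ} (hn : 0 < n) (i : ℤ) :
    (i + 1) % n = if i % n + 1 = n then 0 else i % n + 1 := by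
  have := Int.emod_nonneg i hn.ne'
  have := Int.emod_lt_of_pos i hn
  rw [← Int.emod_add_emod]
  split_ifs with h
  · rw [h, Int.emod_self]
  · exact Int.emod_eq_of_lt (by omega) (by omega)

theorem exists_periodic_letters {w : List (α × Bool)} (hw : FreeGroup.IsCyclicallyReduced w)
    (hne : w ≠ []) : ∃ l : ℤ → α × Bool, Function.Periodic l w.length ∧
      (List.range w.length).map (fun j : ℕ => l j) = w ∧
      ∀ i, (l i).1 = (l (i + 1)).1 → (l i).2 = (l (i + 1)).2 := by
  have length_pos : (0 : ℤ) < w.length := by exact_mod_cast List.length_pos_iff.2 hne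
  have nonneg (i : ℤ) : 0 ≤ i % w.length := Int.emod_nonneg i length_pos.ne'
  have lt_length (i : ℤ) : (i % w.length).toNat < w.length := by
    have := Int.emod_lt_of_pos i length_pos
    have := nonneg i
    omega
  refine ⟨fun i => w[(i % w.length).toNat]'(lt_length i), fun i => by simp, ?_, fun i => ?_⟩
  · refine List.ext_getElem (by simp) fun j _ hj => ?_
    simp [Int.emod_eq_of_lt (Int.natCast_nonneg j) (Int.ofNat_lt.2 hj)]
  · have := nonneg i
    simp only [emod_add_one_eq_ite length_pos i]
    split_ifs with h
    · refine hw.2 _ ?_ _ ?_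
      · rw [List.getLast?_eq_getElem?, Option.mem_def,
          show w.length - 1 = (i % w.length).toNat by omega]
        exact List.getElem?_eq_getElem (lt_length i)
      · simp [List.head?_eq_getElem?]
    · have := lt_length i
      have chain := List.isChain_iff_getElem.1 hw.1 (i % w.length).toNat (by omega)
      simpa only [Int.toNat_add (nonneg i) zero_le_one, Int.toNat_one] using chain

theorem exists_isCyclicallyReduced_conj {b : FreeGroup α} (hb : b ≠ 1) :
    ∃ (g : FreeGroup α) (w : List (α × Bool)), FreeGroup.IsCyclicallyReduced w ∧ w ≠ [] ∧
      g * FreeGroup.mk w * g⁻¹ = b := by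
  classical
  let w := FreeGroup.reduceCyclically b.toWord
  have conj_eq : FreeGroup.mk (FreeGroup.reduceCyclically.conjugator b.toWord) * FreeGroup.mk w *
      (FreeGroup.mk (FreeGroup.reduceCyclically.conjugator b.toWord))⁻¹ = b := by
    rw [FreeGroup.inv_mk, FreeGroup.mul_mk, FreeGroup.mul_mk,
      FreeGroup.reduceCyclically.conj_conjugator_reduceCyclically, FreeGroup.mk_toWord]
  refine ⟨_, w, FreeGroup.reduceCyclically.isCyclicallyReduced FreeGroup.isReduced_toWord, ?_,
    conj_eq⟩
  intro hw
  rw [hw, ← FreeGroup.one_eq_mk, mul_one, mul_inv_cancel] at conj_eq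
  exact hb conj_eq.symm

/- The edges of the Cayley graph multiply on the left, so the vertices are the inverses of the
prefixes of the periodic word of `b⁻¹`. -/
theorem nonempty_axis {b : FreeGroup α} (hb : b ≠ 1) : Nonempty (Axis b) := by
  obtain ⟨g, w, hw, hne, hgw⟩ := exists_isCyclicallyReduced_conj (inv_ne_one.2 hb)
  obtain ⟨l, l_periodic, l_map, l_reduced⟩ := exists_periodic_letters hw hne
  obtain ⟨u, u_zero, u_add_one⟩ := exists_partialProducts fun i => FreeGroup.mk [l i]
  have u_add_length (i : ℤ) : u (i + w.length) = FreeGroup.mk w * u i := by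
    rw [partialProducts_add_of_periodic (l_periodic.comp fun x => FreeGroup.mk [x]) u_zero
      u_add_one]
    have := partialProducts_mk_add u_add_one 0 w.length
    simp only [zero_add, u_zero, one_mul, l_map] at this
    rw [this]
  have vertex_add (i : ℤ) : (u (i + w.length))⁻¹ * g⁻¹ = (u i)⁻¹ * g⁻¹ * b := by
    rw [u_add_length, ← inv_inv b, ← hgw]
    group
  refine ⟨⟨w.length, fun i => (u i)⁻¹ * g⁻¹, fun i => (l i).1,
    fun i => if (l i).2 then (u (i + 1))⁻¹ * g⁻¹ else (u i)⁻¹ * g⁻¹, List.length_pos_iff.2 hne,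
    vertex_add, fun i => by rw [l_periodic], fun i => ?_, fun i => ?_, ?_⟩⟩
  · rw [l_periodic, add_right_comm]
    split_ifs
    · exact vertex_add _
    · exact vertex_add _
  · have letter_eq : FreeGroup.mk [l i] =
        if (l i).2 then FreeGroup.of (l i).1 else (FreeGroup.of (l i).1)⁻¹ := by
      rcases l i with ⟨x, _ | _⟩ <;> rfl
    split_ifs at letter_eq ⊢ with hl
    · exact .inr ⟨rfl, by simp [u_add_one, letter_eq, mul_assoc]⟩
    · exact .inl ⟨rfl, by simp [u_add_one, letter_eq, mul_assoc]⟩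
  · exact fun i j hij =>
      partialProducts_mk_injective l_reduced u_add_one (inv_injective (mul_right_cancel hij))

end Axis

section AxisCells

namespace Axis

variable {α : Type*} {b : FreeGroup α} (A : Axis b)

/-- The vertices of the axis as cells. -/
def vertices : CellSequence b A.period Unit where
  label _ := ()
  pos := A.vertex
  label_add _ := rfl
  pos_add := A.vertex_add_period
  eq_of_label_eq_of_pos_eq _ h := A.vertex_injective h

/-- The edges of the axis as cells. -/
def edges : CellSequence b A.period α where
  label := A.label
  pos := A.tail
  label_add := A.label_add_period
  pos_add := A.tail_add_period
  eq_of_label_eq_of_pos_eq {i j} hlabel htail := by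
    have hi := A.edge i
    rw [hlabel, htail] at hi
    rcases hi with ⟨hi, hi'⟩ | ⟨hi, hi'⟩ <;> rcases A.edge j with ⟨hj, hj'⟩ | ⟨hj, hj'⟩
    · exact A.vertex_injective (hi.trans hj.symm)
    · have := A.vertex_injective (hi.trans hj.symm)
      have := A.vertex_injective (hi'.trans hj'.symm)
      omega
    · have := A.vertex_injective (hi.trans hj.symm)
      have := A.vertex_injective (hi'.trans hj'.symm)
      omega
    · exact A.vertex_injective (hi'.trans hj'.symm)

variable {A} {H : Subgroup (FreeGroup α)} {P : Set (FreeGroup α)} {i j : ℤ}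

theorem exists_vertex_of_label_eq (hij : A.label i = A.label j) :
    ∃ j', (A.vertex i)⁻¹ * A.vertex j' = (A.tail i)⁻¹ * A.tail j := by
  rcases A.edge i with ⟨hi, -⟩ | ⟨-, hi⟩ <;> rcases A.edge j with ⟨hj, hj'⟩ | ⟨hj, hj'⟩
  · exact ⟨j, by rw [hi, hj]⟩
  · exact ⟨j + 1, by rw [hi, hj]⟩
  · exact ⟨j + 1, by rw [hi, hj', hij]; group⟩
  · exact ⟨j, by rw [hi, hj', hij]; group⟩

theorem exists_vertex_add_one_of_label_eq (hij : A.label i = A.label j) :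
    ∃ j', (A.vertex (i + 1))⁻¹ * A.vertex j' = (A.tail i)⁻¹ * A.tail j := by
  rcases A.edge i with ⟨-, hi⟩ | ⟨hi, -⟩ <;> rcases A.edge j with ⟨hj, hj'⟩ | ⟨hj, hj'⟩
  · exact ⟨j + 1, by rw [hi, hj', hij]; group⟩
  · exact ⟨j, by rw [hi, hj', hij]; group⟩
  · exact ⟨j, by rw [hi, hj]⟩
  · exact ⟨j + 1, by rw [hi, hj]⟩

theorem isTop_edges_of_forall_exists {i' : ℤ} (hi' : A.vertices.IsTop H P i')
    (h : ∀ j, A.label i = A.label j →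
      ∃ j', (A.vertex i')⁻¹ * A.vertex j' = (A.tail i)⁻¹ * A.tail j) :
    A.edges.IsTop H P i := by
  intro j hij
  obtain ⟨hlabel, hmem : (A.tail i)⁻¹ * A.tail j ∈ H⟩ := CellSequence.orbit_eq_iff.1 hij
  obtain ⟨j', hj'⟩ := h j hlabel
  change (A.tail i)⁻¹ * A.tail j ∉ P
  rw [← hj'] at hmem ⊢
  exact hi' j' (CellSequence.orbit_eq_iff.2 ⟨rfl, hmem⟩)

theorem isTop_edges (hi : A.vertices.IsTop H P i) : A.edges.IsTop H P i :=
  isTop_edges_of_forall_exists hi fun _ => exists_vertex_of_label_eq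

theorem isTop_edges_sub_one (hi : A.vertices.IsTop H P i) : A.edges.IsTop H P (i - 1) :=
  isTop_edges_of_forall_exists hi fun j hij => by
    simpa only [sub_add_cancel] using exists_vertex_add_one_of_label_eq hij

theorem isTotal_edges (h : A.vertices.IsTotal P) : A.edges.IsTotal P := by
  intro i j hij
  obtain ⟨j', hj'⟩ := exists_vertex_of_label_eq hij
  change (A.tail i)⁻¹ * A.tail j ∈ _ ∨ (A.tail i)⁻¹ * A.tail j ∈ P ∨
    ((A.tail i)⁻¹ * A.tail j)⁻¹ ∈ P
  exact hj' ▸ h i j' rfl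

/- If a vertex is top then so are both adjacent edges, so a top vertex is never at the start of a
run of consecutive top edges. -/
theorem ncard_vertices_add_le_ncard_edges (hb : Subgroup.centralizer {b} ≤ Subgroup.zpowers b)
    {q : ℕ} (hq : 0 < q) (hbH : ∀ k : ℤ, b ^ k ∈ H ↔ (q : ℤ) ∣ k)
    (hvisit : ∀ i, ∃ j, A.edges.orbit H i = A.edges.orbit H j ∧ ¬ (q * A.period : ℤ) ∣ j - i) :
    (Set.range (A.vertices.orbit H)).ncard + q ≤ (Set.range (A.edges.orbit H)).ncard := by
  obtain ⟨P, hP, vertices_total⟩ := A.vertices.exists_isCosetCone_isTotal A.period_pos hb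
  have edges_total := isTotal_edges vertices_total
  obtain ⟨c, hc⟩ := CellSequence.exists_le_ncard_isTop_and_not_sub_one hP A.period_pos hbH
    edges_total hvisit
  have finite (p : ℤ → Prop) : {i ∈ Set.Ioc c (c + q * A.period) | p i}.Finite :=
    (Set.finite_Ioc _ _).subset (Set.sep_subset _ _)
  rw [CellSequence.ncard_range_orbit hP A.period_pos hq hbH vertices_total c,
    CellSequence.ncard_range_orbit hP A.period_pos hq hbH edges_total c]
  refine (Nat.add_le_add_left hc _).trans ?_
  rw [← Set.ncard_union_eq ?_ (finite _) (finite _)]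
  · refine Set.ncard_le_ncard (Set.union_subset ?_ ?_) (finite _)
    · exact fun i hi => ⟨hi.1, isTop_edges hi.2⟩
    · exact fun i hi => ⟨hi.1, hi.2.1⟩
  · exact Set.disjoint_left.2 fun i hi hi' => hi'.2.2 (isTop_edges_sub_one hi.2)

theorem ncard_edges_add_one_le {S : Finset (FreeGroup α)} (hS : Subgroup.closure S = H) {q : ℕ}
    (hq : 0 < q) (hbq : b ^ q ∈ H) : (Set.range (A.edges.orbit H)).ncard + 1 ≤
      (Set.range (A.vertices.orbit H)).ncard + S.card := by
  have finite_vertices := A.vertices.finite_range_orbit A.period_pos hq hbq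
  have ncard_snd_le := Set.ncard_image_le (f := Prod.snd) finite_vertices
  refine (LyndonSchutzenberger.ncard_edges_add_one_le hS (finite_vertices.image Prod.snd)
    ((Set.range_nonempty _).image _) (A.edges.finite_range_orbit A.period_pos hq hbq) ?_).trans
      (Nat.add_le_add_right ncard_snd_le _)
  have vertex_mem (i : ℤ) :
      (A.vertex i : FreeGroup α ⧸ H) ∈ Prod.snd '' Set.range (A.vertices.orbit H) :=
    ⟨A.vertices.orbit H i, ⟨i, rfl⟩, rfl⟩
  rintro _ ⟨i, rfl⟩
  change (A.tail i : FreeGroup α ⧸ H) ∈ _ ∧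
    ((FreeGroup.of (A.label i) * A.tail i : FreeGroup α) : FreeGroup α ⧸ H) ∈ _
  rcases A.edge i with ⟨h, h'⟩ | ⟨h, h'⟩ <;> rw [← h', ← h]
  · exact ⟨vertex_mem _, vertex_mem _⟩
  · exact ⟨vertex_mem _, vertex_mem _⟩

end Axis

end AxisCells

section TwistedPotential

variable {α k : Type*} [CommRing k]

theorem potential_mul_pow_of_pow_eq_one [IsDomain k] {f : α → FreeGroup α → k} {h : FreeGroup α}
    {t : k} (hf : ∀ x g, f x (g * h) = t * f x g) (ht : t ≠ 1) {m : ℕ} (htm : t ^ m = 1)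
    (g : FreeGroup α) : potential f (g * h ^ m) = potential f g := by
  have geometric (m : ℕ) : (t - 1) * potential f (g * h ^ m) + potential f h =
      t ^ m * ((t - 1) * potential f g + potential f h) := by
    induction m with
    | zero => simp
    | succ m ih =>
      rw [pow_succ, ← mul_assoc, potential_mul hf]
      linear_combination t * ih
  have := geometric m
  rw [htm, one_mul, add_left_inj] at this
  exact mul_left_cancel₀ (sub_ne_zero.2 ht) this

variable {H : Subgroup (FreeGroup α)} (χ : H →* kˣ)

open Classical in
/-- The weights on the edges of the Cayley graph that are supported on the `H`-translates of the
edge `(x₀, g₀)`, take the value `1` on it and are `χ`-equivariant. -/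
noncomputable def twistedWeight (x₀ : α) (g₀ : FreeGroup α) (x : α) (g : FreeGroup α) : k :=
  if h : x = x₀ ∧ g₀⁻¹ * g ∈ H then χ ⟨g₀⁻¹ * g, h.2⟩ else 0

theorem twistedWeight_self (x : α) (g : FreeGroup α) : twistedWeight χ x g x g = 1 := by
  simp only [twistedWeight, inv_mul_cancel, one_mem, and_self, ↓reduceDIte]
  exact congrArg Units.val (map_one χ)

theorem twistedWeight_mul (x₀ : α) (g₀ : FreeGroup α) (h : H) (x : α) (g : FreeGroup α) :
    twistedWeight χ x₀ g₀ x (g * h) = χ h * twistedWeight χ x₀ g₀ x g := by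
  have mem_iff : g₀⁻¹ * (g * h) ∈ H ↔ g₀⁻¹ * g ∈ H := by
    rw [← mul_assoc, H.mul_mem_cancel_right h.2]
  by_cases hg : x = x₀ ∧ g₀⁻¹ * g ∈ H
  · rw [twistedWeight, twistedWeight, dif_pos hg, dif_pos ⟨hg.1, mem_iff.2 hg.2⟩, mul_comm,
      ← Units.val_mul, ← map_mul]
    congr 2
    exact Subtype.ext (mul_assoc _ _ _).symm
  · rw [twistedWeight, twistedWeight, dif_neg hg, dif_neg (mt (.imp_right mem_iff.1) hg), mul_zero]

namespace Axis

variable {b : FreeGroup α} {A : Axis b}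

theorem potential_vertex_add_one_eq_iff (f : α → FreeGroup α → k) (i : ℤ) :
    potential f (A.vertex (i + 1)) = potential f (A.vertex i) ↔ f (A.label i) (A.tail i) = 0 := by
  rcases A.edge i with ⟨h, h'⟩ | ⟨h, h'⟩ <;> rw [h, h', potential_of_mul]
  · exact add_eq_left
  · exact left_eq_add

/- If the axis met the `H`-orbit of its `i`-th edge only once per `q` periods, then the potential of
the twisted weight at that edge would change exactly once over them. -/
theorem exists_orbit_eq_and_not_dvd [Nontrivial k] {q : ℕ} (hq : 0 < q)
    (hχ : ∀ x₀ g₀ g,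
      potential (twistedWeight χ x₀ g₀) (g * b ^ q) = potential (twistedWeight χ x₀ g₀) g)
    (i : ℤ) : ∃ j, A.edges.orbit H i = A.edges.orbit H j ∧ ¬ (q * A.period : ℤ) ∣ j - i := by
  by_contra! hdvd
  let f := twistedWeight χ (A.label i) (A.tail i)
  obtain ⟨N, hN⟩ := Nat.exists_eq_add_one.2 (Nat.mul_pos hq A.period_pos)
  have weight_eq_zero (j : ℤ) (hj : ¬ (q * A.period : ℤ) ∣ j - i) :
      f (A.label j) (A.tail j) = 0 :=
    dif_neg fun h => hj (hdvd j (CellSequence.orbit_eq_iff.2 ⟨h.1.symm, h.2⟩))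
  have const (m : ℕ) (hm : m ≤ N) :
      potential f (A.vertex (i + 1 + m)) = potential f (A.vertex (i + 1)) := by
    induction m with
    | zero => simp
    | succ m ih =>
      rw [Nat.cast_succ, ← add_assoc, ← ih (by omega), potential_vertex_add_one_eq_iff]
      refine weight_eq_zero _ fun h => ?_
      rw [← Nat.cast_mul, hN] at h
      have := Int.le_of_dvd (by omega) h
      omega
  have vertex_add : A.vertex (i + 1 + N) = A.vertex i * b ^ q := by
    have := A.vertices.pos_add_mul i q
    rwa [zpow_natCast, ← Nat.cast_mul, hN, Nat.cast_succ, add_comm (N : ℤ), ← add_assoc] at this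
  have closed := const N le_rfl
  rw [vertex_add, hχ, eq_comm, potential_vertex_add_one_eq_iff] at closed
  exact one_ne_zero ((twistedWeight_self χ _ _).symm.trans closed)

end Axis

theorem exists_hom_isPrimitiveRoot {G : Type*} [Group G] [IsFreeGroup G] {a c : G}
    (hac : ¬ Commute a c) (hgen : Subgroup.closure {a, c} = ⊤) {p r : ℕ} (hp : p ≠ 0)
    (hr : r ≠ 0) : ∃ χ : G →* ℂˣ, IsPrimitiveRoot (χ a) p ∧ IsPrimitiveRoot (χ c) r := by
  have pr_ne : p * r ≠ 0 := mul_ne_zero hp hr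
  obtain ⟨ζ, hζ⟩ : ∃ ζ : ℂˣ, IsPrimitiveRoot ζ (p * r) :=
    ⟨_, (Complex.isPrimitiveRoot_exp _ pr_ne).isUnit_unit pr_ne⟩
  have : Finite (Subgroup.zpowers ζ) := (hζ.isOfFinOrder pr_ne).finite_zpowers
  let ζ' : Subgroup.zpowers ζ := ⟨ζ, Subgroup.mem_zpowers ζ⟩
  obtain ⟨θ, hθa, hθc⟩ := exists_hom_eq_of_closure_eq_top hac hgen (ζ' ^ r) (ζ' ^ p)
  refine ⟨(Subgroup.zpowers ζ).subtype.comp θ, ?_, ?_⟩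
  · rw [MonoidHom.comp_apply, hθa]
    exact hζ.pow (Nat.pos_of_ne_zero pr_ne) (mul_comm p r)
  · rw [MonoidHom.comp_apply, hθc]
    exact hζ.pow (Nat.pos_of_ne_zero pr_ne) rfl

end TwistedPotential

section Equation

variable {α : Type*} {H : Subgroup (FreeGroup α)} {a c : H} {b : FreeGroup α} {p q r : ℕ}

theorem zpow_mem_iff_dvd (hac : ¬ Commute a c) (hgen : Subgroup.closure {a, c} = ⊤) (hp : p ≠ 0)
    (hr : r ≠ 0) (h : b ^ q * (c ^ r * a ^ p : H) = 1) (k : ℤ) : b ^ k ∈ H ↔ (q : ℤ) ∣ k := by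
  have hbq : b ^ q ∈ H := by
    rw [eq_inv_of_mul_eq_one_left h]
    exact inv_mem (SetLike.coe_mem _)
  refine ⟨fun hbk => ?_, ?_⟩
  · have gcd_mem : b ^ (q : ℤ).gcd k ∈ H := by
      rw [← zpow_natCast, Int.gcd_eq_gcd_ab, zpow_add, zpow_mul, zpow_mul, zpow_natCast]
      exact mul_mem (zpow_mem hbq _) (zpow_mem hbk _)
    obtain ⟨m, hm⟩ : (q : ℤ).gcd k ∣ q := Int.natCast_dvd_natCast.1 (Int.gcd_dvd_left _ _)
    have pow_eq : (⟨b ^ (q : ℤ).gcd k, gcd_mem⟩⁻¹ : H) ^ m = c ^ r * a ^ p := by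
      refine Subtype.ext ?_
      rw [← inv_eq_of_mul_eq_one_right h]
      simp [← pow_mul, ← hm]
    rw [eq_one_of_pow_eq hac hgen hp hr pow_eq, mul_one] at hm
    rw [hm]
    exact Int.gcd_dvd_right _ _
  · rintro ⟨l, rfl⟩
    rw [zpow_mul, zpow_natCast]
    exact zpow_mem hbq l

theorem potential_twistedWeight_mul_pow {k : Type*} [CommRing k] [IsDomain k] {χ : H →* kˣ}
    (hp : 1 < p) (hr : 1 < r) (hχa : IsPrimitiveRoot (χ a) p) (hχc : IsPrimitiveRoot (χ c) r)
    (h : b ^ q * (c ^ r * a ^ p : H) = 1) (x₀ : α) (g₀ g : FreeGroup α) :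
    potential (twistedWeight χ x₀ g₀) (g * b ^ q) = potential (twistedWeight χ x₀ g₀) g := by
  have invariant {d : H} {m : ℕ} (hm : 1 < m) (hd : IsPrimitiveRoot (χ d) m) :=
    potential_mul_pow_of_pow_eq_one (twistedWeight_mul χ x₀ g₀ d)
      (Units.val_eq_one.not.2 (hd.ne_one hm))
      (by rw [← Units.val_pow_eq_pow_val, hd.pow_eq_one, Units.val_one])
  rw [← invariant hr hχc, ← invariant hp hχa]
  congr 1
  rw [mul_assoc, mul_assoc]
  simpa using h

theorem commute_of_pow_mul_eq_one_of_centralizer_le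
    (hb : Subgroup.centralizer {b} ≤ Subgroup.zpowers b) (hb_ne : b ≠ 1)
    (hgen : Subgroup.closure {a, c} = ⊤) (hp : 1 < p) (hq : 1 < q) (hr : 1 < r)
    (h : b ^ q * (c ^ r * a ^ p : H) = 1) : Commute a c := by
  classical
  by_contra hac
  obtain ⟨A⟩ := nonempty_axis hb_ne
  have hbH := zpow_mem_iff_dvd hac hgen (by omega) (by omega) h
  obtain ⟨χ, hχa, hχc⟩ :=
    exists_hom_isPrimitiveRoot hac hgen (p := p) (r := r) (by omega) (by omega)
  have visits := A.exists_orbit_eq_and_not_dvd χ (by omega)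
    (potential_twistedWeight_mul_pow hp hr hχa hχc h)
  have lower := A.ncard_vertices_add_le_ncard_edges hb (by omega) hbH visits
  have closure_eq :
      Subgroup.closure (({(a : FreeGroup α), (c : FreeGroup α)} : Finset _) : Set _) = H := by
    have := congrArg (Subgroup.map H.subtype) hgen
    simpa [MonoidHom.map_closure, Set.image_pair, ← MonoidHom.range_eq_map] using this
  have upper := A.ncard_edges_add_one_le closure_eq (q := q) (by omega)
    (by exact_mod_cast (hbH q).2 dvd_rfl)
  have := Finset.card_le_two (a := (a : FreeGroup α)) (b := (c : FreeGroup α))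
  omega

theorem commute_of_pow_mul_pow_mul_pow_eq_one {a b c : FreeGroup α} (hp : 1 < p) (hq : 1 < q)
    (hr : 1 < r) (h : a ^ p * b ^ q * c ^ r = 1) : Commute a c := by
  by_cases hb : b = 1
  · have pow_eq : a ^ p = (c ^ r)⁻¹ := eq_inv_of_mul_eq_one_left (by simpa [hb] using h)
    refine commute_of_commute_pow (n := p) (by omega) ?_
    rw [pow_eq]
    exact ((Commute.refl c).pow_left r).inv_left
  obtain ⟨root, m, hm, rfl, hroot⟩ := exists_root hb
  have root_ne : root ≠ 1 := by
    rintro rfl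
    exact hb (one_pow m)
  let a' : Subgroup.closure {a, c} := ⟨a, Subgroup.subset_closure (.inl rfl)⟩
  let c' : Subgroup.closure {a, c} := ⟨c, Subgroup.subset_closure (.inr rfl)⟩
  have hgen : Subgroup.closure {a', c'} = ⊤ := by
    rw [← Subgroup.closure_closure_coe_preimage (k := {a, c})]
    congr 1
    ext x
    simp [a', c', Subtype.ext_iff]
  have hrel : root ^ (m * q) * (c' ^ r * a' ^ p : Subgroup.closure {a, c}) = 1 := by
    rw [← pow_mul, mul_assoc, mul_eq_one_comm, mul_assoc] at h
    simpa using h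
  have hmq : 1 < m * q := hq.trans_le (Nat.le_mul_of_pos_left q (Nat.pos_of_ne_zero hm))
  exact (commute_of_pow_mul_eq_one_of_centralizer_le hroot root_ne hgen hp hmq hr hrel).map
    (Subgroup.subtype _)

end Equation

end LyndonSchutzenberger

theorem lyndon_schutzenberger_general {G : Type*} [Group G] [IsFreeGroup G] {a b c : G}
    {p q r : ℕ} (hp : 2 ≤ p) (hq : 2 ≤ q) (hr : 2 ≤ r) (h : a ^ p * b ^ q * c ^ r = 1) :
    Commute a b ∧ Commute b c ∧ Commute a c := by
  have commute_outer {a b c : G} {p q r : ℕ} (hp : 2 ≤ p) (hq : 2 ≤ q) (hr : 2 ≤ r)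
      (h : a ^ p * b ^ q * c ^ r = 1) : Commute a c := by
    let e := IsFreeGroup.toFreeGroup G
    refine Commute.of_map e.injective
      (LyndonSchutzenberger.commute_of_pow_mul_pow_mul_pow_eq_one hp hq hr (b := e b) ?_)
    simpa using congrArg e h
  have h_bca : b ^ q * c ^ r * a ^ p = 1 := by rwa [mul_eq_one_comm, ← mul_assoc]
  have h_cab : c ^ r * a ^ p * b ^ q = 1 := by rwa [mul_assoc, mul_eq_one_comm]
  exact ⟨(commute_outer hq hr hp h_bca).symm, (commute_outer hr hp hq h_cab).symm,
    commute_outer hp hq hr h⟩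

/-- Lyndon–Schützenberger: if `aᵖ bᑫ cʳ = 1` in a free group with `p, q, r ≥ 2`,
then `a`, `b`, `c` pairwise commute. -/
theorem lyndon_schutzenberger {α : Type} (a b c : FreeGroup α) (p q r : ℕ)
    (hp : 2 ≤ p) (hq : 2 ≤ q) (hr : 2 ≤ r)
    (h : a ^ p * b ^ q * c ^ r = 1) :
    a * b = b * a ∧ b * c = c * b ∧ a * c = c * a :=
  lyndon_schutzenberger_general hp hq hr h
end

section
/- Shenitzer's theorem: if the amalgamated free product G = F₁ *_⟨t⟩ F₂ of two finitely generated free groups over an infinite cyclic subgroup ⟨t⟩ is itself free, then t is a basis element (primitive element) of F₁ or of F₂. -/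
/-- `x` is a basis (primitive) element of the group `F`: it belongs to some
free basis `s` of `F`, i.e. a subset such that the induced map
`FreeGroup s → F` is an isomorphism. -/
def IsBasisElem {F : Type} [Group F] (x : F) : Prop :=
  ∃ s : Set F, x ∈ s ∧ Function.Bijective ⇑(FreeGroup.lift (Subtype.val : s → F))

/-!
Let `G` be free and `t ≠ 1`. A half-tree of the Cayley tree of `G` cut at an edge of the axis of `t`
is an almost invariant set `A`, and some line `g * ⟨t⟩` has exactly one of its two ends in `A`: it
crosses `A`. Only finitely many cosets of `⟨t⟩` do. When `G` is an amalgam over `⟨t⟩`, these cosets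
are edges of its Bass–Serre tree, so a finite nonempty set of them has a vertex of degree one: in
one of the factors there is an almost invariant set crossed by exactly one coset of `⟨t⟩`.

It remains to see that this makes `t` primitive in that factor, which is Whitehead's theorem in
disguise. Replace `t` by its shortest image under automorphisms. Whitehead automorphisms then show
that in the Whitehead graph of `t` the star of a letter is a minimal cut separating the letter from
its inverse. This allows one to push the almost invariant set off the branches of the tree, keeping
a single crossing line, until it is a union of branches at the root and its crossings are the edges
of a cut of the Whitehead graph. A cut with one edge separates some letter from its inverse, whose
star then has one edge as well: a generator occurs exactly once in `t`, so `t` is primitive.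
-/

namespace Shenitzer

/-! ### Almost invariant sets and the lines crossing them -/

section AlmostInvariant

open Filter

variable {G H : Type*} [Group G] [Group H] {A B : Set G} {t g g' : G}

/-- `A` is almost invariant: it differs from each of its right translates by finitely many
elements. For finitely generated `G` these are the sets with finite coboundary in a Cayley graph,
on which multiplication by a generator from the right moves along an edge. -/
def IsAlmostInvariant (A : Set G) : Prop :=
  ∀ x, {g | ¬(g ∈ A ↔ g * x ∈ A)}.Finite

/-- The ray `g, g * t, g * t ^ 2, …` eventually stays in `A`. -/
def RayEndsIn (t : G) (A : Set G) (g : G) : Prop :=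
  ∀ᶠ n : ℕ in atTop, g * t ^ n ∈ A

/-- The line `n ↦ g * t ^ n` crosses `A`: exactly one of its two ends lies in `A`. -/
def Crosses (t : G) (A : Set G) (g : G) : Prop :=
  ¬(RayEndsIn t A g ↔ RayEndsIn t⁻¹ A g)

/-- Among the lines `g * ⟨t⟩`, exactly one crosses `A`. -/
def HasUniqueCrossing (t : G) (A : Set G) : Prop :=
  ∃ g₀, ∀ g, Crosses t A g ↔ g₀⁻¹ * g ∈ Subgroup.zpowers t

/-- Some almost invariant set is crossed by exactly one of the lines `g * ⟨t⟩`. -/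
def AdmitsUniqueCrossing (t : G) : Prop :=
  ∃ A : Set G, IsAlmostInvariant A ∧ HasUniqueCrossing t A

theorem IsAlmostInvariant.compl (hA : IsAlmostInvariant A) : IsAlmostInvariant Aᶜ := by
  simpa only [IsAlmostInvariant, Set.mem_compl_iff, not_iff_not] using hA

theorem IsAlmostInvariant.union (hA : IsAlmostInvariant A) (hB : IsAlmostInvariant B) :
    IsAlmostInvariant (A ∪ B) := by
  intro x
  refine ((hA x).union (hB x)).subset fun g hg => ?_
  simp only [Set.mem_ofPred_eq, Set.mem_union] at hg ⊢
  tauto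

theorem IsAlmostInvariant.translate (hA : IsAlmostInvariant A) (g : G) :
    IsAlmostInvariant ((g * ·) ⁻¹' A) := by
  intro x
  simpa only [Set.preimage_ofPred_eq, Set.mem_preimage, mul_assoc]
    using (hA x).preimage (mul_right_injective g).injOn

theorem IsAlmostInvariant.comap (hA : IsAlmostInvariant A) {f : H →* G}
    (hf : Function.Injective f) : IsAlmostInvariant (f ⁻¹' A) := by
  intro x
  simpa only [Set.preimage_ofPred_eq, Set.mem_preimage, map_mul]
    using (hA (f x)).preimage hf.injOn

theorem RayEndsIn.mono (h : A ⊆ B) (hA : RayEndsIn t A g) : RayEndsIn t B g :=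
  Eventually.mono hA fun _ hn => h hn

theorem RayEndsIn.not_of_disjoint (hA : RayEndsIn t A g) (h : Disjoint A B) :
    ¬RayEndsIn t B g := fun hB =>
  let ⟨_, hnA, hnB⟩ := (hA.and hB).exists
  Set.disjoint_left.1 h hnA hnB

theorem rayEndsIn_mul_self : RayEndsIn t A (g * t) ↔ RayEndsIn t A g := by
  simp only [RayEndsIn, mul_assoc, ← pow_succ']
  rw [← eventually_map (m := (· + 1)) (P := fun n => g * t ^ n ∈ A), map_add_atTop_eq_nat]

theorem IsAlmostInvariant.exists_ray_eventually_const (hA : IsAlmostInvariant A)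
    (ht : ¬IsOfFinOrder t) (g : G) : ∃ N, ∀ n ≥ N, (g * t ^ n ∈ A ↔ g * t ^ N ∈ A) := by
  have hinj : Function.Injective fun n : ℕ => g * t ^ n :=
    (mul_right_injective g).comp (injective_pow_iff_not_isOfFinOrder.2 ht)
  obtain ⟨N, hN⟩ := ((hA t).preimage hinj.injOn).bddAbove
  refine ⟨N + 1, fun n hn => ?_⟩
  induction n, hn using Nat.le_induction with
  | base => rfl
  | succ n hn ih =>
    rw [← ih]
    by_contra hne
    have hmem : ¬(g * t ^ n ∈ A ↔ g * t ^ n * t ∈ A) := by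
      rwa [mul_assoc, ← pow_succ, iff_comm]
    exact absurd (hN hmem) (by omega)

theorem IsAlmostInvariant.rayEndsIn_compl (hA : IsAlmostInvariant A) (ht : ¬IsOfFinOrder t) :
    RayEndsIn t Aᶜ g ↔ ¬RayEndsIn t A g := by
  refine ⟨fun h => h.not_of_disjoint disjoint_compl_left, fun h => ?_⟩
  obtain ⟨N, hN⟩ := hA.exists_ray_eventually_const ht g
  have hNA : g * t ^ N ∉ A := fun hmem =>
    h (eventually_atTop.2 ⟨N, fun n hn => (hN n hn).2 hmem⟩)
  exact eventually_atTop.2 ⟨N, fun n hn => mt (hN n hn).1 hNA⟩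

theorem IsAlmostInvariant.crosses_compl (hA : IsAlmostInvariant A) (ht : ¬IsOfFinOrder t) :
    Crosses t Aᶜ g ↔ Crosses t A g := by
  rw [Crosses, Crosses, hA.rayEndsIn_compl ht,
    hA.rayEndsIn_compl (mt isOfFinOrder_inv_iff.1 ht), not_iff_not (a := RayEndsIn t A g)]

theorem crosses_mul_self : Crosses t A (g * t) ↔ Crosses t A g := by
  have hneg : RayEndsIn t⁻¹ A (g * t) ↔ RayEndsIn t⁻¹ A g := by
    rw [← rayEndsIn_mul_self, mul_inv_cancel_right]
  rw [Crosses, Crosses, rayEndsIn_mul_self, hneg]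

theorem crosses_mul_zpow (k : ℤ) : Crosses t A (g * t ^ k) ↔ Crosses t A g := by
  induction k with
  | zero => simp
  | succ k ih => rw [← ih, zpow_add_one, ← mul_assoc, crosses_mul_self]
  | pred k ih => rw [← ih, ← crosses_mul_self, mul_assoc, ← zpow_add_one, sub_add_cancel]

theorem crosses_congr (h : g⁻¹ * g' ∈ Subgroup.zpowers t) : Crosses t A g' ↔ Crosses t A g := by
  obtain ⟨k, hk⟩ := Subgroup.mem_zpowers_iff.1 h
  rw [← mul_inv_cancel_left g g', ← hk, crosses_mul_zpow]

theorem crosses_translate (g₁ : G) : Crosses t ((g₁ * ·) ⁻¹' A) g ↔ Crosses t A (g₁ * g) := by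
  simp only [Crosses, RayEndsIn, Set.mem_preimage, mul_assoc]

theorem crosses_comap (f : H →* G) {s x : H} :
    Crosses s (f ⁻¹' A) x ↔ Crosses (f s) A (f x) := by
  simp only [Crosses, RayEndsIn, Set.mem_preimage, map_mul, map_pow, map_inv]

theorem Crosses.exists_zpow_mem_coboundary (h : Crosses t A g) :
    ∃ k : ℤ, ¬(g * t ^ k ∈ A ↔ g * t ^ k * t ∈ A) := by
  by_contra! hstep
  have hconst (k : ℤ) : g * t ^ k ∈ A ↔ g ∈ A := by
    induction k with
    | zero => simp
    | succ k ih => rw [zpow_add_one, ← mul_assoc, ← hstep, ih]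
    | pred k ih => rw [← ih, hstep, mul_assoc, ← zpow_add_one, sub_add_cancel]
  have hpos (n : ℕ) : g * t ^ n ∈ A ↔ g ∈ A := mod_cast hconst n
  have hneg (n : ℕ) : g * t⁻¹ ^ n ∈ A ↔ g ∈ A := by simpa using hconst (-n)
  exact h (by simp only [RayEndsIn, hpos, hneg])

theorem IsAlmostInvariant.exists_lt_inv_mul_mem_zpowers (hA : IsAlmostInvariant A) {s : ℕ → G}
    (hs : ∀ k, Crosses t A (s k)) : ∃ j k, j < k ∧ (s j)⁻¹ * s k ∈ Subgroup.zpowers t := by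
  choose e he using fun k => (hs k).exists_zpow_mem_coboundary
  obtain ⟨j, -, k, -, hjk, heq⟩ := Set.infinite_univ.exists_lt_map_eq_of_mapsTo
    (f := fun k => s k * t ^ e k) (fun k _ => he k) (hA t)
  refine ⟨j, k, hjk, e j - e k, ?_⟩
  change t ^ _ = _
  rw [zpow_sub, ← div_eq_mul_inv, div_eq_iff_eq_mul, mul_assoc, eq_inv_mul_iff_mul_eq]
  exact heq

theorem HasUniqueCrossing.inv_mul_mem_zpowers (hA : HasUniqueCrossing t A) (h : Crosses t A g)
    (h' : Crosses t A g') : g⁻¹ * g' ∈ Subgroup.zpowers t := by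
  obtain ⟨g₀, hg₀⟩ := hA
  simpa [mul_assoc] using mul_mem (inv_mem ((hg₀ g).1 h)) ((hg₀ g').1 h')

theorem HasUniqueCrossing.compl (hA : IsAlmostInvariant A) (ht : ¬IsOfFinOrder t)
    (h : HasUniqueCrossing t A) : HasUniqueCrossing t Aᶜ := by
  simpa only [HasUniqueCrossing, hA.crosses_compl ht] using h

theorem HasUniqueCrossing.translate (h : HasUniqueCrossing t A) (g : G) :
    HasUniqueCrossing t ((g * ·) ⁻¹' A) := by
  obtain ⟨g₀, hg₀⟩ := h
  exact ⟨g⁻¹ * g₀, fun x => by rw [crosses_translate, hg₀]; simp [mul_assoc]⟩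

theorem AdmitsUniqueCrossing.comap {f : H →* G} (hf : Function.Injective f) {s : H}
    (h : AdmitsUniqueCrossing (f s)) : AdmitsUniqueCrossing s := by
  obtain ⟨A, hA, g₀, hg₀⟩ := h
  refine ⟨f ⁻¹' ((g₀ * ·) ⁻¹' A), (hA.translate g₀).comap hf, 1, fun x => ?_⟩
  rw [crosses_comap, crosses_translate, hg₀, inv_mul_cancel_left, inv_one, one_mul,
    ← MonoidHom.map_zpowers, Subgroup.mem_map_iff_mem hf]

end AlmostInvariant

/-! ### Amalgamated products over an infinite cyclic group -/

section Amalgam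

open Monoid

theorem pushoutI_inv_mul_notMem_range_base {ι : Type*} {P : ι → Type*} {K : Type*}
    [∀ i, Group (P i)] [Group K] {φ : ∀ i, K →* P i} (hφ : ∀ i, Function.Injective (φ i))
    {l : ℕ → Σ i, P i} (hl : ∀ k, (l k).2 ∉ (φ (l k).1).range)
    (hne : ∀ k, (l k).1 ≠ (l (k + 1)).1) {s : ℕ → PushoutI φ}
    (hs : ∀ k, s (k + 1) = s k * PushoutI.of (l k).1 (l k).2) {j k : ℕ} (hjk : j < k) :
    (s j)⁻¹ * s k ∉ (PushoutI.base φ).range := by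
  classical
  let w (j m : ℕ) : CoprodI.Word P :=
    { toList := (List.range' j m).map l
      ne_one := by
        simp only [List.mem_map]
        rintro _ ⟨k, -, rfl⟩ h1
        exact hl k (h1 ▸ one_mem _)
      chain_ne := by
        rw [List.isChain_map]
        exact (List.isChain_range' j m 1).imp fun a b (hab : b = a + 1) => hab ▸ hne a }
  have hprod (m : ℕ) : ∀ j, (s j)⁻¹ * s (j + m) = PushoutI.ofCoprodI (w j m).prod := by
    induction m with
    | zero => simp [w, CoprodI.Word.prod]
    | succ m ih =>
      intro j
      have hcons : (w j (m + 1)).prod = CoprodI.of (l j).2 * (w (j + 1) m).prod := by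
        simp [w, CoprodI.Word.prod, List.range'_succ]
      rw [hcons, map_mul, ← ih, PushoutI.ofCoprodI_of, hs, ← add_right_comm, add_assoc]
      group
  intro hmem
  obtain ⟨m, rfl⟩ := Nat.exists_eq_add_of_lt hjk
  have hreduced : PushoutI.Reduced φ (w j (m + 1)) := by
    simp only [PushoutI.Reduced, w, List.mem_map]
    rintro _ ⟨k, -, rfl⟩
    exact hl k
  have hempty := hreduced.eq_empty_of_mem_range hφ (by rwa [← hprod])
  simpa [w, CoprodI.Word.empty] using congrArg CoprodI.Word.toList hempty

variable {ι : Type*} {P : ι → Type*} [∀ i, Group (P i)]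

theorem range_eq_zpowers_ofAdd_one {P : Type*} [Group P] (φ : Multiplicative ℤ →* P) :
    φ.range = Subgroup.zpowers (φ (Multiplicative.ofAdd 1)) := by
  rw [← MonoidHom.map_zpowers, MonoidHom.range_eq_map]
  congr 1
  exact ((Subgroup.eq_top_iff' _).2 fun k =>
    Subgroup.mem_zpowers_iff.2 ⟨k.toAdd, by simp [← ofAdd_zsmul]⟩).symm

/-- The cosets of `⟨t⟩` are the edges of the Bass–Serre tree, and by almost invariance only
finitely many of them cross `A`. If every vertex of a crossing edge had a second crossing edge,
one could walk along crossing edges forever without backtracking. -/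
theorem exists_admitsUniqueCrossing_of_crosses [Nontrivial ι] {φ : ∀ i, Multiplicative ℤ →* P i}
    (hφ : ∀ i, Function.Injective (φ i)) {A : Set (PushoutI φ)} (hA : IsAlmostInvariant A)
    {g : PushoutI φ} (hg : Crosses (PushoutI.base φ (Multiplicative.ofAdd 1)) A g) :
    ∃ i, AdmitsUniqueCrossing (φ i (Multiplicative.ofAdd 1)) := by
  set t := PushoutI.base φ (Multiplicative.ofAdd 1)
  have hof (i : ι) : PushoutI.of i (φ i (Multiplicative.ofAdd 1)) = t :=
    PushoutI.of_apply_eq_base φ i _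
  by_contra! hnone
  have hnext (x : {g // Crosses t A g}) (i : ι) :
      ∃ p ∉ (φ i).range, Crosses t A (x.1 * PushoutI.of i p) := by
    by_contra! hleaf
    refine hnone i ⟨PushoutI.of i ⁻¹' ((x.1 * ·) ⁻¹' A),
      (hA.translate x.1).comap (PushoutI.of_injective hφ i), 1, fun p => ?_⟩
    rw [crosses_comap, crosses_translate, hof, inv_one, one_mul, ← range_eq_zpowers_ofAdd_one]
    refine ⟨fun hp => by_contra fun hp' => hleaf p hp' hp, ?_⟩
    rw [range_eq_zpowers_ofAdd_one]
    rintro ⟨k, rfl⟩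
    simpa only [map_zpow, hof, crosses_mul_zpow] using x.2
  choose p hp hcross using hnext
  choose other hother using exists_ne (α := ι)
  let idx (k : ℕ) : ι := other^[k] (Classical.arbitrary ι)
  let s : ℕ → {g // Crosses t A g} :=
    Nat.rec ⟨g, hg⟩ fun k x => ⟨x.1 * PushoutI.of (idx k) (p x (idx k)), hcross x (idx k)⟩
  obtain ⟨j, k, hjk, hmem⟩ := hA.exists_lt_inv_mul_mem_zpowers fun k => (s k).2
  refine pushoutI_inv_mul_notMem_range_base hφ (l := fun k => ⟨idx k, p (s k) (idx k)⟩)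
    (s := fun k => (s k).1) (fun k => hp _ _) (fun k => ?_) (fun k => rfl) hjk ?_
  · simpa only [idx, Function.iterate_succ_apply'] using (hother _).symm
  · rwa [range_eq_zpowers_ofAdd_one]

/-- The free product of the two members of a family of groups, with the elements `t true` and
`t false` identified, as the pushout of the maps from an infinite cyclic group sending the
generator to `t true` and `t false`. -/
def coprodQuotientEquivPushoutI {P : Bool → Type*} [∀ b, Group (P b)] (t : ∀ b, P b) :
    Coprod (P true) (P false) ⧸
        Subgroup.normalClosure {Coprod.inl (t true) * (Coprod.inr (t false))⁻¹} ≃*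
      PushoutI fun b => zpowersHom (P b) (t b) :=
  have hof (b : Bool) : PushoutI.of (φ := fun b => zpowersHom (P b) (t b)) b (t b) =
      PushoutI.base _ (Multiplicative.ofAdd 1) := by
    simpa using
      PushoutI.of_apply_eq_base (fun b => zpowersHom (P b) (t b)) b (Multiplicative.ofAdd 1)
  have hmk : (QuotientGroup.mk (Coprod.inl (t true)) : Coprod (P true) (P false) ⧸
      Subgroup.normalClosure {Coprod.inl (t true) * (Coprod.inr (t false))⁻¹}) =
      QuotientGroup.mk (Coprod.inr (t false)) := by
    rw [← mul_inv_eq_one, ← QuotientGroup.mk_inv, ← QuotientGroup.mk_mul,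
      QuotientGroup.eq_one_iff]
    exact Subgroup.subset_normalClosure rfl
  MonoidHom.toMulEquiv
    (QuotientGroup.lift _ (Coprod.lift (PushoutI.of true) (PushoutI.of false))
      (Subgroup.normalClosure_le_normal (N := MonoidHom.ker _) (by simp [hof])))
    (PushoutI.lift
      (Bool.rec ((QuotientGroup.mk' _).comp Coprod.inr) ((QuotientGroup.mk' _).comp Coprod.inl))
      (zpowersHom _ (QuotientGroup.mk (Coprod.inl (t true))))
      (by rintro (_ | _) <;> ext <;> simp [hmk]))
    (by ext <;> simp [PushoutI.lift_of])
    (by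
      apply PushoutI.hom_ext_nonempty
      rintro (_ | _) <;> ext <;> simp [PushoutI.lift_of])

end Amalgam

/-! ### The tree of reduced words -/

theorem isAlmostInvariant_of_closure_eq_top {G : Type*} [Group G] {S A : Set G}
    (hS : Subgroup.closure S = ⊤) (h : ∀ x ∈ S, {g | ¬(g ∈ A ↔ g * x ∈ A)}.Finite) :
    IsAlmostInvariant A := by
  intro x
  induction (show x ∈ Subgroup.closure S by simp [hS]) using Subgroup.closure_induction with
  | mem x hx => exact h x hx
  | one => simp
  | mul x y _ _ hx hy =>
    refine (hx.union (hy.preimage (mul_left_injective x).injOn)).subset fun g hg => ?_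
    simp only [Set.mem_ofPred_eq, Set.mem_union, Set.mem_preimage, ← mul_assoc] at hg ⊢
    tauto
  | inv x _ hx =>
    simpa [Set.preimage_ofPred_eq, iff_comm] using hx.preimage (mul_left_injective x⁻¹).injOn

/-- The set `s` lies on one side of `B`. -/
def IsMonochromatic {X : Type*} (B s : Set X) : Prop :=
  s ⊆ B ∨ s ⊆ Bᶜ

theorem isMonochromatic_compl {X : Type*} {B s : Set X} :
    IsMonochromatic Bᶜ s ↔ IsMonochromatic B s := by
  rw [IsMonochromatic, IsMonochromatic, compl_compl, or_comm]

section Tree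

open FreeGroup

variable {α : Type*}

/-- The inverse letter, for letters of a free group written as in `FreeGroup.mk`. -/
def invLetter (q : α × Bool) : α × Bool := (q.1, !q.2)

@[simp]
theorem invLetter_invLetter (q : α × Bool) : invLetter (invLetter q) = q := by
  simp [invLetter]

theorem invLetter_involutive : Function.Involutive (invLetter : α × Bool → α × Bool) :=
  invLetter_invLetter

theorem invLetter_ne_self (q : α × Bool) : invLetter q ≠ q := by
  simp [invLetter, Prod.ext_iff]

theorem mk_invLetter (q : α × Bool) : mk [invLetter q] = (mk [q])⁻¹ := by
  simp [invLetter, inv_mk, invRev]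

theorem mk_cons (q : α × Bool) (L : List (α × Bool)) : mk (q :: L) = mk [q] * mk L := by
  rw [mul_mk, List.singleton_append]

theorem fst_eq_fst_iff {p q : α × Bool} : p.1 = q.1 ↔ p = q ∨ p = invLetter q := by
  obtain ⟨a, b⟩ := p
  obtain ⟨c, d⟩ := q
  cases b <;> cases d <;> simp [invLetter]

theorem isReduced_cons_cons_iff_ne_invLetter {p q : α × Bool} {L : List (α × Bool)} :
    IsReduced (p :: q :: L) ↔ p ≠ invLetter q ∧ IsReduced (q :: L) := by
  obtain ⟨a, b⟩ := p
  obtain ⟨c, d⟩ := q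
  cases b <;> cases d <;> simp [invLetter]

variable [DecidableEq α] {g v x : FreeGroup α} {p q : α × Bool}

theorem toWord_mk_of_isReduced {L : List (α × Bool)} (h : IsReduced L) : (mk L).toWord = L := by
  rw [toWord_mk, h.reduce_eq]

theorem mem_startsWith_iff : g ∈ startsWith q ↔ ∃ L, IsReduced (q :: L) ∧ g = mk (q :: L) := by
  constructor
  · intro hg
    obtain ⟨L, hL⟩ := List.head?_eq_some_iff.1 (List.head?_eq_getElem?.trans hg)
    exact ⟨L, hL ▸ isReduced_toWord, by rw [← hL, mk_toWord]⟩
  · rintro ⟨L, hL, rfl⟩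
    simp [startsWith, toWord_mk_of_isReduced hL]

theorem exists_mem_startsWith_of_ne_one (hg : g ≠ 1) : ∃ q, g ∈ startsWith q := by
  obtain ⟨q, L, hL⟩ := List.exists_cons_of_ne_nil (mt toWord_eq_nil_iff.1 hg)
  exact ⟨q, by simp [startsWith, hL]⟩

theorem eq_of_mem_startsWith (hp : g ∈ startsWith p) (hq : g ∈ startsWith q) : p = q := by
  by_contra h
  exact Set.disjoint_left.1 (startsWith.disjoint_iff_ne.2 h) hp hq

theorem mk_mul_mem_startsWith_iff : mk [q] * g ∈ startsWith q ↔ g ∉ startsWith (invLetter q) := by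
  refine ⟨fun h hg => ?_, startsWith_mk_mul g⟩
  obtain ⟨L, hL, rfl⟩ := mem_startsWith_iff.1 hg
  rw [mk_cons (invLetter q), mk_invLetter, mul_inv_cancel_left] at h
  have hLred : IsReduced L := hL.infix ⟨[invLetter q], [], by simp⟩
  cases L with
  | nil => exact startsWith.ne_one _ h rfl
  | cons p L =>
    have hp : p = q := eq_of_mem_startsWith (mem_startsWith_iff.2 ⟨L, hLred, rfl⟩) h
    exact (isReduced_cons_cons_iff_ne_invLetter.1 hL).1 (hp ▸ rfl)

theorem mul_mk_mem_startsWith (hg : g ∈ startsWith p) (h : g * mk [q] ≠ 1) :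
    g * mk [q] ∈ startsWith p := by
  obtain ⟨L, hL, rfl⟩ := mem_startsWith_iff.1 hg
  clear hg
  induction L generalizing p with
  | nil =>
    rw [mk_mul_mem_startsWith_iff]
    intro hq
    have heq : q = invLetter p :=
      eq_of_mem_startsWith (mem_startsWith_iff.2 ⟨[], IsReduced.singleton, rfl⟩) hq
    exact h (by rw [heq, mk_invLetter, mul_inv_cancel])
  | cons r L ih =>
    obtain ⟨hpr, hrL⟩ := isReduced_cons_cons_iff_ne_invLetter.1 hL
    rw [mk_cons p, mul_assoc, mk_mul_mem_startsWith_iff]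
    intro hmem
    have heq := eq_of_mem_startsWith (ih hrL (startsWith.ne_one _ hmem)) hmem
    exact hpr (by rw [heq, invLetter_invLetter])

theorem mul_mk_mem_startsWith_iff (hg : g ≠ 1) (h : g * mk [q] ≠ 1) :
    g * mk [q] ∈ startsWith p ↔ g ∈ startsWith p := by
  refine ⟨fun hmem => ?_, fun hmem => mul_mk_mem_startsWith hmem h⟩
  have hcancel : g * mk [q] * mk [invLetter q] = g := by rw [mk_invLetter, mul_inv_cancel_right]
  simpa only [hcancel] using mul_mk_mem_startsWith (q := invLetter q) hmem (by rwa [hcancel])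

theorem isAlmostInvariant_startsWith (q : α × Bool) : IsAlmostInvariant (startsWith q) := by
  refine isAlmostInvariant_of_closure_eq_top (closure_range_of α) ?_
  rintro _ ⟨a, rfl⟩
  refine (Set.toFinite {1, (of a)⁻¹}).subset fun g hg => ?_
  by_contra hne
  simp only [Set.mem_insert_iff, Set.mem_singleton_iff, not_or] at hne
  have hga : g * mk [(a, true)] ≠ 1 := mt eq_inv_of_mul_eq_one_left hne.2
  exact hg (mul_mk_mem_startsWith_iff hne.1 hga).symm

theorem toWord_append_isPrefix_iff (h : IsReduced (v.toWord ++ [q])) :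
    v.toWord ++ [q] <+: g.toWord ↔ v⁻¹ * g ∈ startsWith q := by
  constructor
  · rintro ⟨L, hL⟩
    rw [List.append_assoc, List.singleton_append] at hL
    refine mem_startsWith_iff.2 ⟨L, ?_, ?_⟩
    · exact (hL ▸ isReduced_toWord (x := g)).infix ⟨v.toWord, [], by simp⟩
    · rw [inv_mul_eq_iff_eq_mul, ← mk_toWord (x := g), ← hL, ← mul_mk, mk_toWord]
  · intro hg
    obtain ⟨L, hL, hgL⟩ := mem_startsWith_iff.1 hg
    have hred : IsReduced (v.toWord ++ [q] ++ L) := h.append_overlap hL (by simp)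
    have hgw : g = mk (v.toWord ++ [q] ++ L) := by
      rw [List.append_assoc, ← mul_mk, mk_toWord, ← inv_mul_eq_iff_eq_mul, hgL]
      rfl
    exact ⟨L, by rw [hgw, toWord_mk_of_isReduced hred]⟩

/-- The branch at `v` of the tree of reduced words, rooted at `1`: the elements of the free group
whose reduced word extends that of `v`. -/
def branch (v : FreeGroup α) : Set (FreeGroup α) := {g | v.toWord <+: g.toWord}

theorem branch_one : branch (1 : FreeGroup α) = Set.univ := by
  simp [branch]

theorem branch_subset_branch (h : v ∈ branch x) : branch v ⊆ branch x :=
  fun _ hg => h.trans hg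

theorem branch_subset_or_subset_or_disjoint (v x : FreeGroup α) :
    branch v ⊆ branch x ∨ branch x ⊆ branch v ∨ Disjoint (branch v) (branch x) := by
  by_contra! h
  obtain ⟨hvx, hxv, hdisj⟩ := h
  obtain ⟨g, hgv, hgx⟩ := Set.not_disjoint_iff.1 hdisj
  rcases List.prefix_or_prefix_of_prefix hgv hgx with h | h
  · exact hxv (branch_subset_branch h)
  · exact hvx (branch_subset_branch h)

theorem toWord_mul_mk_of_isReduced (h : IsReduced (v.toWord ++ [q])) :
    (v * mk [q]).toWord = v.toWord ++ [q] := by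
  rw [← toWord_mk_of_isReduced h, ← mul_mk, mk_toWord]

theorem branch_mul_mk (h : IsReduced (v.toWord ++ [q])) :
    branch (v * mk [q]) = (v⁻¹ * ·) ⁻¹' startsWith q := by
  ext g
  rw [branch, Set.mem_ofPred_eq, toWord_mul_mk_of_isReduced h, toWord_append_isPrefix_iff h]
  rfl

theorem branch_eq_preimage_compl_startsWith {L : List (α × Bool)} (h : v.toWord = L ++ [q]) :
    branch v = (v⁻¹ * ·) ⁻¹' (startsWith (invLetter q))ᶜ := by
  have hred : IsReduced (L ++ [q]) := h ▸ isReduced_toWord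
  have hL : (mk L).toWord = L := toWord_mk_of_isReduced (hred.infix ⟨[], [q], by simp⟩)
  have hv : v = mk L * mk [q] := by rw [mul_mk, ← h, mk_toWord]
  rw [hv, branch_mul_mk (by rwa [hL])]
  ext g
  rw [Set.mem_preimage, Set.mem_preimage, Set.mem_compl_iff, ← mk_mul_mem_startsWith_iff,
    mul_inv_rev, mul_assoc, mul_inv_cancel_left]

theorem isAlmostInvariant_branch (v : FreeGroup α) : IsAlmostInvariant (branch v) := by
  rcases List.eq_nil_or_concat' v.toWord with h | ⟨L, q, h⟩
  · rw [toWord_eq_nil_iff.1 h, branch_one]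
    exact fun x => by simp
  · rw [branch_eq_preimage_compl_startsWith h]
    exact (isAlmostInvariant_startsWith _).compl.translate _

theorem mem_iff_of_mem_branch {B : Set (FreeGroup α)} (hg : g ∈ branch v)
    (h : ∀ x ∈ branch v, ∀ q, x ∈ B ↔ x * mk [q] ∈ B) : g ∈ B ↔ v ∈ B := by
  obtain ⟨L, hL⟩ := hg
  induction L using List.reverseRecOn generalizing g with
  | nil => rw [toWord_injective (a₁ := v) (a₂ := g) (by simpa using hL)]
  | append_singleton L q ih =>
    have hred : IsReduced (v.toWord ++ L) :=
      (hL ▸ isReduced_toWord (x := g)).infix ⟨[], [q], by simp⟩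
    have hword := toWord_mk_of_isReduced hred
    rw [← ih hword.symm, ← mk_toWord (x := g), ← hL, ← List.append_assoc, ← mul_mk]
    exact (h _ ⟨L, hword.symm⟩ q).symm

theorem IsAlmostInvariant.finite_not_isMonochromatic_branch [Finite α] {B : Set (FreeGroup α)}
    (hB : IsAlmostInvariant B) : {v | ¬IsMonochromatic B (branch v)}.Finite := by
  have hcob : {g | ∃ q, ¬(g ∈ B ↔ g * mk [q] ∈ B)}.Finite := by
    rw [Set.ofPred_exists]
    exact Set.finite_iUnion fun q => hB _
  have hprefixes (g : FreeGroup α) : {v | g ∈ branch v}.Finite :=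
    ((List.finite_toSet g.toWord.inits).preimage toWord_injective.injOn).subset
      fun v hv => by simpa [branch] using hv
  refine (hcob.biUnion fun g _ => hprefixes g).subset fun v hv => ?_
  by_contra hnotMem
  have hconst (g) (hg : g ∈ branch v) : g ∈ B ↔ v ∈ B :=
    mem_iff_of_mem_branch hg fun x hx q => by_contra fun hne =>
      hnotMem (Set.mem_biUnion (show x ∈ {g | ∃ q, ¬(g ∈ B ↔ g * mk [q] ∈ B)} from ⟨q, hne⟩) hx)
  refine hv ?_
  by_cases hvB : v ∈ B
  · exact Or.inl fun g hg => (hconst g hg).2 hvB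
  · exact Or.inr fun g hg => mt (hconst g hg).1 hvB

end Tree

/-! ### The axis of a cyclically reduced word -/

section Axis

open FreeGroup

/-- A nonempty cyclically reduced word, as the periodic reduced sequence of letters read along its
axis. The word itself is `letter 1, …, letter period`, so that `letter i` and `letter (i + 1)` are
the letters before and after the `i`-th vertex of the axis. -/
structure PeriodicWord (α : Type*) where ofLetter ::
  letter : ℕ → α × Bool
  period : ℕ
  period_pos : 0 < period
  periodic : Function.Periodic letter period
  reduced : ∀ k, letter k ≠ invLetter (letter (k + 1))

namespace PeriodicWord

variable {α : Type*} (c : PeriodicWord α) {i j k : ℕ}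

/-- The first letter of the axis leaving its `i`-th vertex forwards. -/
def fwd (i : ℕ) : α × Bool := c.letter (i + 1)

/-- The first letter of the axis leaving its `i`-th vertex backwards. -/
def bwd (i : ℕ) : α × Bool := invLetter (c.letter i)

/-- The `i`-th vertex of the axis, starting from `1`. -/
def vertex (i : ℕ) : FreeGroup α := mk ((List.range i).map c.fwd)

/-- The element represented by one period. -/
def word : FreeGroup α := c.vertex c.period

theorem bwd_succ (i : ℕ) : c.bwd (i + 1) = invLetter (c.fwd i) := rfl

theorem bwd_ne_fwd (i : ℕ) : c.bwd i ≠ c.fwd i := fun h =>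
  c.reduced i (by rw [← fwd, ← h, bwd, invLetter_invLetter])

theorem fwd_periodic : Function.Periodic c.fwd c.period := fun i => by
  rw [fwd, fwd, add_right_comm, c.periodic]

theorem bwd_periodic : Function.Periodic c.bwd c.period := fun i => by
  rw [bwd, bwd, c.periodic]

theorem vertex_zero : c.vertex 0 = 1 := rfl

theorem vertex_succ (i : ℕ) : c.vertex (i + 1) = c.vertex i * mk [c.fwd i] := by
  simp [vertex, List.range_succ]

theorem vertex_period_add (i : ℕ) : c.vertex (c.period + i) = c.word * c.vertex i := by
  induction i with
  | zero => simp [word, vertex_zero]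
  | succ i ih =>
    rw [← add_assoc, vertex_succ, vertex_succ, ih, mul_assoc, add_comm, c.fwd_periodic]

theorem word_pow_mul_vertex (n i : ℕ) : c.word ^ n * c.vertex i = c.vertex (n * c.period + i) := by
  induction n with
  | zero => simp
  | succ n ih => rw [pow_succ', mul_assoc, ih, ← vertex_period_add]; ring_nf

theorem isReduced_range_map_fwd (i : ℕ) : IsReduced ((List.range i).map c.fwd) := by
  refine List.isChain_iff_getElem.2 fun k hk => ?_
  have hpair : IsReduced [c.fwd k, c.fwd (k + 1)] :=
    isReduced_cons_cons_iff_ne_invLetter.2 ⟨c.reduced (k + 1), IsReduced.singleton⟩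
  simpa using hpair

theorem getElem_mod_ne_invLetter {L : List (α × Bool)} (hL : IsCyclicallyReduced L)
    (hlt : ∀ k, k % L.length < L.length) (k : ℕ) :
    L[k % L.length]'(hlt k) ≠ invLetter (L[(k + 1) % L.length]'(hlt (k + 1))) := by
  suffices h : IsReduced [L[k % L.length]'(hlt k), L[(k + 1) % L.length]'(hlt (k + 1))] from
    (isReduced_cons_cons_iff_ne_invLetter.1 h).1
  refine isReduced_cons_cons.2 ⟨?_, IsReduced.singleton⟩
  rcases (Nat.succ_le_of_lt (hlt k)).lt_or_eq with h | h
  · have hmod : (k + 1) % L.length = k % L.length + 1 := by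
      rw [← Nat.mod_add_mod, Nat.mod_eq_of_lt h]
    simp only [hmod]
    exact List.isChain_iff_getElem.1 hL.isReduced _ h
  · have hmod : (k + 1) % L.length = 0 := by rw [← Nat.mod_add_mod, ← Nat.succ_eq_add_one, h,
      Nat.mod_self]
    have hlast : k % L.length = L.length - 1 := by omega
    simp only [hmod, hlast]
    exact hL.2 _ (by simp [List.getLast?_eq_getElem?]) _ (by simp [List.head?_eq_getElem?])

theorem exists_word_eq_mk {L : List (α × Bool)} (hL : IsCyclicallyReduced L) (hne : L ≠ []) :
    ∃ c : PeriodicWord α, c.word = mk L ∧ c.period = L.length := by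
  have hpos : 0 < L.length := List.length_pos_of_ne_nil hne
  have hlt (k : ℕ) : k % L.length < L.length := Nat.mod_lt _ hpos
  refine ⟨{ letter := fun k => L[(k + (L.length - 1)) % L.length]'(hlt _)
            period := L.length
            period_pos := hpos
            periodic := fun k => ?_
            reduced := fun k => ?_ }, ?_, rfl⟩
  · simp only [add_right_comm k L.length, Nat.add_mod_right]
  · simpa only [add_right_comm k] using getElem_mod_ne_invLetter hL hlt (k + (L.length - 1))
  · have hfwd (k : ℕ) : k + 1 + (L.length - 1) = k + L.length := by omega
    refine congrArg mk (List.ext_getElem (by simp) fun k _ hk => ?_)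
    simp [fwd, hfwd, Nat.mod_eq_of_lt hk]

theorem exists_conj_word_eq [DecidableEq α] {t : FreeGroup α} (ht : t ≠ 1) :
    ∃ (c : PeriodicWord α) (g : FreeGroup α), t = g * c.word * g⁻¹ ∧ c.period ≤ t.norm := by
  have hconj := reduceCyclically.conj_conjugator_reduceCyclically t.toWord
  have heq : t = mk (reduceCyclically.conjugator t.toWord) * mk (reduceCyclically t.toWord) *
      (mk (reduceCyclically.conjugator t.toWord))⁻¹ := by
    rw [inv_mk, mul_mk, mul_mk, hconj, mk_toWord]
  have hne : reduceCyclically t.toWord ≠ [] := fun hnil =>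
    ht (by rw [heq, hnil, ← one_eq_mk, mul_one, mul_inv_cancel])
  obtain ⟨c, hc, hperiod⟩ :=
    exists_word_eq_mk (reduceCyclically.isCyclicallyReduced isReduced_toWord) hne
  refine ⟨c, _, hc ▸ heq, ?_⟩
  have hlength := congrArg List.length hconj
  rw [List.length_append, List.length_append] at hlength
  rw [hperiod, FreeGroup.norm]
  omega

/-- The translate of the axis by `g` passes through the root `1` of the tree. -/
def Through (g : FreeGroup α) : Prop :=
  ∃ i < c.period, c.vertex i * g ∈ Subgroup.zpowers c.word

theorem mul_vertex_ne_one_of_not_through {c : PeriodicWord α} {g : FreeGroup α}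
    (h : ¬c.Through g) (n : ℤ) (i : ℕ) :
    g * c.word ^ n * c.vertex i ≠ 1 := by
  intro heq
  refine h ⟨i % c.period, Nat.mod_lt _ c.period_pos, ?_⟩
  have hvertex : c.vertex i = c.word ^ (i / c.period) * c.vertex (i % c.period) := by
    rw [word_pow_mul_vertex, mul_comm, Nat.div_add_mod]
  rw [hvertex] at heq
  refine ⟨-(n + (i / c.period : ℕ)), ?_⟩
  have : c.vertex (i % c.period) = (g * c.word ^ n * c.word ^ (i / c.period))⁻¹ := by
    rw [← mul_assoc] at heq
    exact eq_inv_of_mul_eq_one_right heq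
  simp only [this, zpow_neg, zpow_add, zpow_natCast]
  group

theorem toWord_vertex [DecidableEq α] (i : ℕ) : (c.vertex i).toWord = (List.range i).map c.fwd :=
  toWord_mk_of_isReduced (c.isReduced_range_map_fwd i)

theorem norm_vertex [DecidableEq α] (i : ℕ) : (c.vertex i).norm = i := by
  simp [FreeGroup.norm, toWord_vertex]

theorem norm_word [DecidableEq α] : c.word.norm = c.period := c.norm_vertex _

theorem not_isOfFinOrder_word : ¬IsOfFinOrder c.word := by
  classical
  refine not_isOfFinOrder_of_isMulTorsionFree fun h => c.period_pos.ne' ?_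
  rw [← norm_word, h, FreeGroup.norm_one]

theorem vertex_mul_inv_vertex_mem_zpowers_iff (hi : i < c.period) (hj : j < c.period) :
    c.vertex i * (c.vertex j)⁻¹ ∈ Subgroup.zpowers c.word ↔ i = j := by
  classical
  refine ⟨?_, fun h => by rw [h, mul_inv_cancel]; exact one_mem _⟩
  have key {i j : ℕ} (hi : i < c.period) {n : ℕ}
      (h : c.word ^ n = c.vertex i * (c.vertex j)⁻¹) : i = j := by
    rw [eq_mul_inv_iff_mul_eq, word_pow_mul_vertex] at h
    have hnorm := congrArg FreeGroup.norm h
    rw [norm_vertex, norm_vertex] at hnorm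
    rcases n.eq_zero_or_pos with rfl | hn
    · simpa using hnorm.symm
    · have := Nat.le_mul_of_pos_left c.period hn
      omega
  rintro ⟨k, hk⟩
  obtain ⟨n, rfl | rfl⟩ := k.eq_nat_or_neg
  · exact key hi (by simpa using hk)
  · exact (key hj (n := n) (by simpa using congrArg (·⁻¹) hk)).symm

variable {c} in
theorem eq_of_crosses_vertex {B : Set (FreeGroup α)} (h : HasUniqueCrossing c.word B)
    (hi : i < c.period) (hj : j < c.period) (hci : Crosses c.word B (c.vertex i)⁻¹)
    (hcj : Crosses c.word B (c.vertex j)⁻¹) : i = j := by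
  have hmem := h.inv_mul_mem_zpowers hci hcj
  rwa [inv_inv, c.vertex_mul_inv_vertex_mem_zpowers_iff hi hj] at hmem

variable {c} in
theorem hasUniqueCrossing_of_crosses_iff {B : Set (FreeGroup α)} (hj : j < c.period)
    (hvertex : ∀ i < c.period, Crosses c.word B (c.vertex i)⁻¹ ↔ i = j)
    (hthrough : ∀ g, Crosses c.word B g → c.Through g) : HasUniqueCrossing c.word B := by
  refine ⟨(c.vertex j)⁻¹, fun g => ⟨fun hg => ?_, fun hg => ?_⟩⟩
  · obtain ⟨i, hi, hmem⟩ := hthrough g hg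
    have hcross := (crosses_congr (A := B) (g := (c.vertex i)⁻¹) (by rwa [inv_inv])).1 hg
    rw [inv_inv, ← (hvertex i hi).1 hcross]
    exact hmem
  · exact (crosses_congr hg).2 ((hvertex j hj).2 rfl)

variable [DecidableEq α]

theorem inv_vertex_mul_vertex_mem_startsWith (h : i < k) :
    (c.vertex i)⁻¹ * c.vertex k ∈ startsWith (c.fwd i) := by
  have hword : (c.vertex i).toWord ++ [c.fwd i] = (List.range (i + 1)).map c.fwd := by
    simp [toWord_vertex, List.range_succ]
  rw [← toWord_append_isPrefix_iff (hword ▸ c.isReduced_range_map_fwd _), hword, toWord_vertex]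
  obtain ⟨m, rfl⟩ := Nat.exists_eq_add_of_le (Nat.succ_le_of_lt h)
  rw [List.range_add (n := i + 1) (m := m)]
  exact (List.prefix_append _ _).map _

theorem inv_vertex_succ_mem_startsWith (i : ℕ) :
    (c.vertex (i + 1))⁻¹ ∈ startsWith (c.bwd (i + 1)) := by
  simp [startsWith, toWord_inv, toWord_vertex, List.range_succ, invRev, bwd_succ, invLetter]

theorem rayEndsIn_word (i : ℕ) :
    RayEndsIn c.word (startsWith (c.fwd i)) (c.vertex i)⁻¹ := by
  refine Filter.eventually_atTop.2 ⟨i + 1, fun n hn => ?_⟩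
  have hpow : c.word ^ n = c.vertex (n * c.period) := by
    simpa [vertex_zero] using c.word_pow_mul_vertex n 0
  rw [hpow]
  exact c.inv_vertex_mul_vertex_mem_startsWith
    (hn.trans (Nat.le_mul_of_pos_right n c.period_pos))

theorem rayEndsIn_inv_word (i : ℕ) :
    RayEndsIn c.word⁻¹ (startsWith (c.bwd i)) (c.vertex i)⁻¹ := by
  refine Filter.eventually_atTop.2 ⟨1, fun n hn => ?_⟩
  obtain ⟨m, hm⟩ := Nat.exists_eq_add_of_lt (Nat.mul_pos hn c.period_pos)
  have hbwd : c.bwd (n * c.period + i) = c.bwd i := by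
    simpa [add_comm] using c.bwd_periodic.nat_mul n i
  have hindex : n * c.period + i = m + i + 1 := by omega
  rw [inv_pow, ← mul_inv_rev, word_pow_mul_vertex, ← hbwd, hindex]
  exact c.inv_vertex_succ_mem_startsWith _

variable {c} {g : FreeGroup α}

theorem mul_word_zpow_mem_startsWith_iff {q : α × Bool} (h : ¬c.Through g) (n : ℤ) :
    g * c.word ^ n ∈ startsWith q ↔ g ∈ startsWith q := by
  have hvertex (n : ℤ) (i : ℕ) :
      g * c.word ^ n * c.vertex i ∈ startsWith q ↔ g * c.word ^ n ∈ startsWith q := by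
    induction i with
    | zero => rw [vertex_zero, mul_one]
    | succ i ih =>
      rw [← ih, vertex_succ, ← mul_assoc]
      exact mul_mk_mem_startsWith_iff (mul_vertex_ne_one_of_not_through h n i)
        (by simpa only [vertex_succ, mul_assoc] using mul_vertex_ne_one_of_not_through h n (i + 1))
  have hsucc (n : ℤ) : g * c.word ^ (n + 1) ∈ startsWith q ↔ g * c.word ^ n ∈ startsWith q := by
    rw [zpow_add_one, ← mul_assoc]
    exact hvertex n c.period
  induction n with
  | zero => simp
  | succ n ih => exact (hsucc _).trans ih
  | pred n ih => exact ((hsucc _).symm.trans (by rw [sub_add_cancel])).trans ih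

theorem exists_rayEndsIn_startsWith_of_not_through (h : ¬c.Through g) :
    ∃ q, RayEndsIn c.word (startsWith q) g ∧ RayEndsIn c.word⁻¹ (startsWith q) g := by
  have hne : g ≠ 1 := by simpa [vertex_zero] using mul_vertex_ne_one_of_not_through h 0 0
  obtain ⟨q, hq⟩ := exists_mem_startsWith_of_ne_one hne
  refine ⟨q, Filter.Eventually.of_forall fun n => ?_, Filter.Eventually.of_forall fun n => ?_⟩
  · simpa using (mul_word_zpow_mem_startsWith_iff h n).2 hq
  · simpa using (mul_word_zpow_mem_startsWith_iff h (-n)).2 hq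

end PeriodicWord

end Axis

/-! ### Cuts of the Whitehead graph -/

section Cut

open Finset FreeGroup
open scoped symmDiff

theorem card_symmDiff_add_two_mul_card_inter {ι : Type*} [DecidableEq ι] (s t : Finset ι) :
    #(s ∆ t) + 2 * #(s ∩ t) = #s + #t := by
  rw [symmDiff_def, sup_eq_union, card_union_of_disjoint disjoint_sdiff_sdiff]
  grind

namespace PeriodicWord

variable {α : Type*} (c : PeriodicWord α) {Q Z : Set (α × Bool)} {e : α × Bool} {i : ℕ}

open Classical in
/-- The Whitehead graph of `c` has the letters as vertices and, for each `i < c.period`, an edge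
joining `c.bwd i` to `c.fwd i`. This is the set of its edges joining `Z` to the complement. -/
noncomputable def cut (Z : Set (α × Bool)) : Finset ℕ :=
  {i ∈ range c.period | ¬(c.bwd i ∈ Z ↔ c.fwd i ∈ Z)}

/-- In the Whitehead graph, no cut separating a letter from its inverse has fewer edges than the
star of that letter. -/
def StarsAreMinCuts : Prop :=
  ∀ a Z, a ∈ Z → invLetter a ∉ Z → #(c.cut {a}) ≤ #(c.cut Z)

theorem mem_cut : i ∈ c.cut Z ↔ i < c.period ∧ ¬(c.bwd i ∈ Z ↔ c.fwd i ∈ Z) := by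
  simp [cut]

theorem cut_insert (he : e ∉ Q) : c.cut (insert e Q) = c.cut Q ∆ c.cut {e} := by
  have hinsert (q : α × Bool) : q ∈ insert e Q ↔ ¬(q ∈ Q ↔ q = e) := by
    rw [Set.mem_insert_iff]
    rcases eq_or_ne q e with rfl | hq <;> simp [*]
  ext i
  simp only [mem_symmDiff, mem_cut, hinsert, Set.mem_singleton_iff]
  tauto

theorem notMem_cut_singleton_iff (hi : i < c.period) :
    i ∉ c.cut {e} ↔ c.bwd i ≠ e ∧ c.fwd i ≠ e := by
  have hne := c.bwd_ne_fwd i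
  simp only [mem_cut, Set.mem_singleton_iff]
  grind

theorem card_filter_bwd (p : α × Bool → Prop) [DecidablePred p] :
    #{i ∈ range c.period | p (c.bwd i)} =
      #{i ∈ range c.period | p (invLetter (c.fwd i))} := by
  have hcount := (Nat.count_succ' (fun i => p (c.bwd i)) c.period).symm.trans
    (Nat.count_succ (fun i => p (c.bwd i)) c.period)
  rw [← c.bwd_periodic 0, zero_add] at hcount
  rw [← Nat.count_eq_card_filter_range, ← Nat.count_eq_card_filter_range]
  exact (Nat.add_right_cancel hcount).symm

theorem card_cut_singleton [DecidableEq α] (a : α × Bool) :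
    #(c.cut {a}) = #{i ∈ range c.period | (c.fwd i).1 = a.1} := by
  have hcut : c.cut {a} =
      {i ∈ range c.period | c.bwd i = a} ∪ {i ∈ range c.period | c.fwd i = a} := by
    ext i
    have hne := c.bwd_ne_fwd i
    simp only [mem_cut, Set.mem_singleton_iff, mem_union, mem_filter, mem_range]
    grind
  have hfst : {i ∈ range c.period | (c.fwd i).1 = a.1} =
      {i ∈ range c.period | invLetter (c.fwd i) = a} ∪ {i ∈ range c.period | c.fwd i = a} := by
    rw [← filter_or]
    simp only [fst_eq_fst_iff, or_comm, invLetter_involutive.eq_iff]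
  rw [hcut, hfst, card_union_of_disjoint, card_union_of_disjoint, c.card_filter_bwd (· = a)]
  · refine disjoint_filter.2 fun i _ hinv heq => invLetter_ne_self a ?_
    rwa [heq] at hinv
  · exact disjoint_filter.2 fun i _ hbwd hfwd => c.bwd_ne_fwd i (hbwd.trans hfwd.symm)

theorem even_card_cut (hQ : ∀ i < c.period, (c.fwd i ∈ Q ↔ invLetter (c.fwd i) ∈ Q)) :
    Even #(c.cut Q) := by
  classical
  set bwdMem := {i ∈ range c.period | c.bwd i ∈ Q}
  set fwdMem := {i ∈ range c.period | c.fwd i ∈ Q}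
  have hcut : c.cut Q = bwdMem ∆ fwdMem := by
    ext i
    simp only [bwdMem, fwdMem, mem_cut, mem_symmDiff, mem_filter, mem_range]
    tauto
  have hcard : #bwdMem = #fwdMem := by
    rw [c.card_filter_bwd (· ∈ Q)]
    exact congrArg card (filter_congr fun i hi => (hQ i (mem_range.1 hi)).symm)
  have := card_symmDiff_add_two_mul_card_inter bwdMem fwdMem
  rw [hcut, Nat.even_iff]
  omega

variable {c}

theorem StarsAreMinCuts.card_cut_ne_one (hc : c.StarsAreMinCuts) (hone : ∀ a, #(c.cut {a}) ≠ 1)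
    (Q : Set (α × Bool)) : #(c.cut Q) ≠ 1 := by
  intro hQ
  have hpos {i : ℕ} (hi : i < c.period) : 0 < #(c.cut {c.fwd i}) :=
    card_pos.2 ⟨i, c.mem_cut.2 ⟨hi, by simp [c.bwd_ne_fwd i]⟩⟩
  have hinv (a : α × Bool) : #(c.cut {invLetter a}) = #(c.cut {a}) := by
    classical
    rw [card_cut_singleton, card_cut_singleton]
    rfl
  have heven : Even #(c.cut Q) := by
    refine c.even_card_cut fun i hi => ?_
    have := hpos hi
    have := hone (c.fwd i)
    by_contra! h
    rcases h with ⟨hmem, hnot⟩ | ⟨hnot, hmem⟩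
    · have := hc _ _ hmem hnot
      omega
    · have := hc _ _ hmem (by rwa [invLetter_invLetter])
      have := hinv (c.fwd i)
      omega
  simp [hQ] at heven

theorem StarsAreMinCuts.card_cut_inter_star_le (hc : c.StarsAreMinCuts) (he : e ∉ Q)
    (he' : invLetter e ∉ Q) : #(c.cut Q ∩ c.cut {e}) ≤ #(c.cut Q \ c.cut {e}) := by
  have hmin := hc e (insert e Q) (Set.mem_insert e Q) (by simp [invLetter_ne_self, he'])
  rw [c.cut_insert he] at hmin
  have := card_symmDiff_add_two_mul_card_inter (c.cut Q) (c.cut {e})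
  have := card_sdiff_add_card_inter (c.cut Q) (c.cut {e})
  omega

end PeriodicWord

end Cut

/-! ### Pushing an almost invariant set off a branch -/

theorem RayEndsIn.iff_subset_of_isMonochromatic {G : Type*} [Group G] {B S : Set G} {t g : G}
    (h : RayEndsIn t S g) (hB : IsMonochromatic B S) : RayEndsIn t B g ↔ S ⊆ B := by
  refine ⟨fun hray => hB.resolve_right fun hcompl => ?_, fun hsub => h.mono hsub⟩
  exact h.not_of_disjoint (Set.disjoint_left.2 hcompl) hray

theorem RayEndsIn.union_compl_iff {G : Type*} [Group G] {B S : Set G} {t g : G}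
    (h : RayEndsIn t S g) : RayEndsIn t (B ∪ Sᶜ) g ↔ RayEndsIn t B g := by
  refine ⟨fun hunion => ?_, fun hB => hB.mono Set.subset_union_left⟩
  filter_upwards [h, hunion] with n hS hBS using hBS.resolve_right fun hcompl => hcompl hS

section Push

open Finset FreeGroup

variable {α : Type*} [DecidableEq α] {B : Set (FreeGroup α)} {e : α × Bool}

theorem RayEndsIn.union_compl_startsWith_of_ne {t g : FreeGroup α} {q : α × Bool}
    (h : RayEndsIn t (startsWith q) g) (hq : q ≠ e) : RayEndsIn t (B ∪ (startsWith e)ᶜ) g :=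
  h.mono ((startsWith.disjoint_iff_ne.2 hq).subset_compl_right.trans Set.subset_union_right)

/-- The letters other than `e` whose branch at the root is not contained in `B`. -/
def outerLetters (B : Set (FreeGroup α)) (e : α × Bool) : Set (α × Bool) :=
  {q | q ≠ e ∧ ¬startsWith q ⊆ B}

theorem crosses_union_compl_startsWith_iff (hB : ∀ q ≠ e, IsMonochromatic B (startsWith q))
    {t g : FreeGroup α} {x y : α × Bool} (hx : RayEndsIn t⁻¹ (startsWith x) g)
    (hy : RayEndsIn t (startsWith y) g) :
    Crosses t (B ∪ (startsWith e)ᶜ) g ↔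
      Xor (Crosses t B g) (¬(x ∈ outerLetters B e ↔ y ∈ outerLetters B e)) := by
  have hmem {s : FreeGroup α} {q : α × Bool} (hs : RayEndsIn s (startsWith q) g) (hq : q ≠ e) :
      q ∈ outerLetters B e ↔ ¬RayEndsIn s B g := by
    simp [outerLetters, hq, hs.iff_subset_of_isMonochromatic (hB q hq)]
  have hnot : e ∉ outerLetters B e := fun h => h.1 rfl
  rw [Crosses, Crosses]
  by_cases hxe : x = e <;> by_cases hye : y = e
  · subst hxe hye
    simp [hx.union_compl_iff, hy.union_compl_iff, xor_def]
  · subst hxe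
    simp only [hx.union_compl_iff, hy.union_compl_startsWith_of_ne hye, hnot, hmem hy hye, xor_def]
    tauto
  · subst hye
    simp only [hx.union_compl_startsWith_of_ne hxe, hy.union_compl_iff, hnot, hmem hx hxe, xor_def]
    tauto
  · simp only [hx.union_compl_startsWith_of_ne hxe, hy.union_compl_startsWith_of_ne hye,
      hmem hx hxe, hmem hy hye, xor_def]
    tauto

theorem crosses_iff_of_isMonochromatic_startsWith
    {t g : FreeGroup α} {x y : α × Bool} (hx : RayEndsIn t⁻¹ (startsWith x) g)
    (hy : RayEndsIn t (startsWith y) g) (hBx : IsMonochromatic B (startsWith x))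
    (hBy : IsMonochromatic B (startsWith y)) :
    Crosses t B g ↔ ¬(startsWith x ⊆ B ↔ startsWith y ⊆ B) := by
  rw [Crosses, hx.iff_subset_of_isMonochromatic hBx, hy.iff_subset_of_isMonochromatic hBy,
    iff_comm (a := startsWith x ⊆ B)]

namespace PeriodicWord

variable {c : PeriodicWord α} {i j k : ℕ}

theorem not_crosses_of_not_through {g : FreeGroup α} (hg : ¬c.Through g)
    (hB : ∀ q, IsMonochromatic B (startsWith q)) : ¬Crosses c.word B g := by
  obtain ⟨q, hfwd, hbwd⟩ := exists_rayEndsIn_startsWith_of_not_through hg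
  simp [crosses_iff_of_isMonochromatic_startsWith hbwd hfwd (hB q) (hB q)]

theorem crosses_union_compl_startsWith_iff_of_not_through
    (hB : ∀ q ≠ e, IsMonochromatic B (startsWith q)) {g : FreeGroup α} (hg : ¬c.Through g) :
    Crosses c.word (B ∪ (startsWith e)ᶜ) g ↔ Crosses c.word B g := by
  obtain ⟨q, hfwd, hbwd⟩ := exists_rayEndsIn_startsWith_of_not_through hg
  simp [crosses_union_compl_startsWith_iff hB hbwd hfwd, xor_def]

theorem crosses_union_compl_startsWith_iff_of_lt
    (hB : ∀ q ≠ e, IsMonochromatic B (startsWith q)) (hi : i < c.period) :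
    Crosses c.word (B ∪ (startsWith e)ᶜ) (c.vertex i)⁻¹ ↔
      Xor (Crosses c.word B (c.vertex i)⁻¹) (i ∈ c.cut (outerLetters B e)) := by
  rw [crosses_union_compl_startsWith_iff hB (c.rayEndsIn_inv_word i) (c.rayEndsIn_word i), mem_cut,
    and_iff_right hi]

theorem crosses_of_mem_cut_sdiff_star (hB : ∀ q ≠ e, IsMonochromatic B (startsWith q))
    (hi : i ∈ c.cut (outerLetters B e) \ c.cut {e}) : Crosses c.word B (c.vertex i)⁻¹ := by
  obtain ⟨hcut, hstar⟩ := mem_sdiff.1 hi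
  obtain ⟨hlt, hcross⟩ := c.mem_cut.1 hcut
  obtain ⟨hbwd, hfwd⟩ := (c.notMem_cut_singleton_iff hlt).1 hstar
  rw [crosses_iff_of_isMonochromatic_startsWith (c.rayEndsIn_inv_word i) (c.rayEndsIn_word i)
    (hB _ hbwd) (hB _ hfwd)]
  simpa [outerLetters, hbwd, hfwd, not_iff_not] using hcross

theorem hasUniqueCrossing_union_compl_startsWith_of_cut_eq_empty
    (h : HasUniqueCrossing c.word B) (hB : ∀ q ≠ e, IsMonochromatic B (startsWith q))
    (hempty : c.cut (outerLetters B e) = ∅) :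
    HasUniqueCrossing c.word (B ∪ (startsWith e)ᶜ) := by
  have hsame (g : FreeGroup α) :
      Crosses c.word (B ∪ (startsWith e)ᶜ) g ↔ Crosses c.word B g := by
    by_cases hg : c.Through g
    · obtain ⟨i, hi, hmem⟩ := hg
      have hcoset : (c.vertex i)⁻¹⁻¹ * g ∈ Subgroup.zpowers c.word := by rwa [inv_inv]
      simp [crosses_congr hcoset, crosses_union_compl_startsWith_iff_of_lt hB hi, hempty, xor_def]
    · exact crosses_union_compl_startsWith_iff_of_not_through hB hg
  simpa only [HasUniqueCrossing, hsame] using h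

theorem hasUniqueCrossing_union_compl_startsWith_of_cut_eq_pair
    (h : HasUniqueCrossing c.word B) (hB : ∀ q ≠ e, IsMonochromatic B (startsWith q))
    (hj : c.cut (outerLetters B e) \ c.cut {e} = {j})
    (hk : c.cut (outerLetters B e) ∩ c.cut {e} = {k}) :
    HasUniqueCrossing c.word (B ∪ (startsWith e)ᶜ) := by
  have hjmem := mem_sdiff.1 (hj ▸ mem_singleton_self j)
  have hkmem := mem_inter.1 (hk ▸ mem_singleton_self k)
  have hjk : j ≠ k := fun hjk => hjmem.2 (hjk ▸ hkmem.2)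
  have hjlt := (c.mem_cut.1 hjmem.1).1
  have hjcross := crosses_of_mem_cut_sdiff_star hB (hj ▸ mem_singleton_self j)
  refine hasUniqueCrossing_of_crosses_iff (c.mem_cut.1 hkmem.1).1 (fun i hi => ?_) fun g hg => ?_
  · have hcross : Crosses c.word B (c.vertex i)⁻¹ ↔ i = j :=
      ⟨fun hi' => eq_of_crosses_vertex h hi hjlt hi' hjcross, fun hij => hij ▸ hjcross⟩
    have hcut : i ∈ c.cut (outerLetters B e) ↔ i = j ∨ i = k := by
      rw [← sdiff_union_inter (c.cut (outerLetters B e)) (c.cut {e}), hj, hk]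
      simp
    rw [crosses_union_compl_startsWith_iff_of_lt hB hi, hcross, hcut, xor_def]
    grind
  · by_contra hnot
    rw [crosses_union_compl_startsWith_iff_of_not_through hB hnot] at hg
    exact hnot ⟨j, hjlt, by simpa using h.inv_mul_mem_zpowers hjcross hg⟩

/-- By minimality, the cut of `outerLetters B e` is either empty, and then the same lines cross both
sets, or consists of one edge at `e` and one edge away from `e`, and then the crossing moves from
the latter to the former. -/
theorem hasUniqueCrossing_union_compl_startsWith (hc : c.StarsAreMinCuts)
    (hone : ∀ a, #(c.cut {a}) ≠ 1) (h : HasUniqueCrossing c.word B)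
    (hB : ∀ q ≠ e, IsMonochromatic B (startsWith q)) (he : startsWith (invLetter e) ⊆ B) :
    HasUniqueCrossing c.word (B ∪ (startsWith e)ᶜ) := by
  have hmin := hc.card_cut_inter_star_le (Q := outerLetters B e) (e := e) (fun h => h.1 rfl)
    (fun h => h.2 he)
  have hsdiff : #(c.cut (outerLetters B e) \ c.cut {e}) ≤ 1 := card_le_one.2 fun i hi j hj =>
    eq_of_crosses_vertex h (c.mem_cut.1 (mem_sdiff.1 hi).1).1 (c.mem_cut.1 (mem_sdiff.1 hj).1).1
      (crosses_of_mem_cut_sdiff_star hB hi) (crosses_of_mem_cut_sdiff_star hB hj)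
  have hne := hc.card_cut_ne_one hone (outerLetters B e)
  have hcard := card_sdiff_add_card_inter (c.cut (outerLetters B e)) (c.cut {e})
  rcases (c.cut (outerLetters B e)).eq_empty_or_nonempty with hempty | hnonempty
  · exact hasUniqueCrossing_union_compl_startsWith_of_cut_eq_empty h hB hempty
  · have hpos := card_pos.2 hnonempty
    obtain ⟨j, hj⟩ := card_eq_one.1 (by omega : #(c.cut (outerLetters B e) \ c.cut {e}) = 1)
    obtain ⟨k, hk⟩ := card_eq_one.1 (by omega : #(c.cut (outerLetters B e) ∩ c.cut {e}) = 1)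
    exact hasUniqueCrossing_union_compl_startsWith_of_cut_eq_pair h hB hj hk

theorem not_hasUniqueCrossing_of_forall_isMonochromatic_startsWith (hc : c.StarsAreMinCuts)
    (hone : ∀ a, #(c.cut {a}) ≠ 1) (hB : ∀ q, IsMonochromatic B (startsWith q)) :
    ¬HasUniqueCrossing c.word B := by
  intro h
  have hvertex {i : ℕ} (hi : i < c.period) :
      i ∈ c.cut {q | startsWith q ⊆ B} ↔ Crosses c.word B (c.vertex i)⁻¹ := by
    rw [crosses_iff_of_isMonochromatic_startsWith (c.rayEndsIn_inv_word i) (c.rayEndsIn_word i)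
      (hB _) (hB _), mem_cut, and_iff_right hi]
    rfl
  obtain ⟨g, hg⟩ := id h
  have hcross : Crosses c.word B g := (hg g).2 (by rw [inv_mul_cancel]; exact one_mem _)
  obtain ⟨j, hj, hmem⟩ := not_imp_not.1 (not_crosses_of_not_through · hB) hcross
  have hjcross : Crosses c.word B (c.vertex j)⁻¹ :=
    (crosses_congr (g := (c.vertex j)⁻¹) (by rwa [inv_inv])).1 hcross
  refine hc.card_cut_ne_one hone {q | startsWith q ⊆ B} (card_eq_one.2 ⟨j, ?_⟩)
  refine Finset.eq_singleton_iff_unique_mem.2 ⟨(hvertex hj).2 hjcross, fun i hi => ?_⟩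
  have hlt := (c.mem_cut.1 hi).1
  exact eq_of_crosses_vertex h hlt hj ((hvertex hlt).1 hi) hjcross

end PeriodicWord

end Push

/-! ### Induction on the branches cut by an almost invariant set -/

section Induction

open Finset FreeGroup

variable {α : Type*} [DecidableEq α] {B : Set (FreeGroup α)} {v w x : FreeGroup α} {a q : α × Bool}

theorem IsMonochromatic.preimage {X Y : Type*} {C s : Set Y} (h : IsMonochromatic C s)
    (f : X → Y) : IsMonochromatic (f ⁻¹' C) (f ⁻¹' s) :=
  h.imp (Set.preimage_mono ·) (Set.preimage_mono ·)

theorem isReduced_toWord_append_singleton {L : List (α × Bool)} (hv : v.toWord = L ++ [a])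
    (hq : q ≠ invLetter a) : IsReduced (v.toWord ++ [q]) := by
  have hpair : IsReduced [a, q] := isReduced_cons_cons_iff_ne_invLetter.2
    ⟨fun h => hq (by rw [h, invLetter_invLetter]), IsReduced.singleton⟩
  rw [hv]
  exact List.IsChain.append_overlap (hv ▸ isReduced_toWord) hpair (by simp)

theorem startsWith_eq_preimage_branch (h : IsReduced (v.toWord ++ [q])) :
    startsWith q = (v * ·) ⁻¹' branch (v * mk [q]) := by
  ext g
  simp [branch_mul_mk h]

theorem isMonochromatic_union_branch (hxv : x ∈ branch v) (hxB : x ∈ B)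
    (hw : IsMonochromatic B (branch w)) : IsMonochromatic (B ∪ branch v) (branch w) := by
  rcases hw with hsub | hcompl
  · exact Or.inl (hsub.trans Set.subset_union_left)
  · rcases branch_subset_or_subset_or_disjoint v w with hvw | hwv | hdisj
    · exact absurd hxB (hcompl (hvw hxv))
    · exact Or.inl (hwv.trans Set.subset_union_right)
    · refine Or.inr (Set.compl_union B _ ▸ Set.subset_inter hcompl ?_)
      exact hdisj.symm.subset_compl_right

theorem toWord_mul_mk_of_ne_invLetter {L : List (α × Bool)} (hv : v.toWord = L ++ [a])
    (hq : q ≠ invLetter a) : (v * mk [q]).toWord = v.toWord ++ [q] :=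
  toWord_mul_mk_of_isReduced (isReduced_toWord_append_singleton hv hq)

theorem exists_mem_forall_mul_mk_notMem {K : Finset (FreeGroup α)} (hK : ∃ v ∈ K, v ≠ 1) :
    ∃ v ∈ K, ∃ L a, v.toWord = L ++ [a] ∧ ∀ q ≠ invLetter a, v * mk [q] ∉ K := by
  obtain ⟨u, huK, hu⟩ := hK
  obtain ⟨v, hvK, hmax⟩ := exists_max_image K FreeGroup.norm ⟨u, huK⟩
  have hv1 : v ≠ 1 := fun hv => hu (norm_eq_zero.1 (by simpa [hv] using hmax u huK))
  obtain ⟨L, a, hv⟩ := (List.eq_nil_or_concat' v.toWord).resolve_left (mt toWord_eq_nil_iff.1 hv1)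
  refine ⟨v, hvK, L, a, hv, fun q hq hmem => ?_⟩
  simpa [FreeGroup.norm, toWord_mul_mk_of_ne_invLetter hv hq] using hmax _ hmem

namespace PeriodicWord

variable {c : PeriodicWord α}

theorem hasUniqueCrossing_union_branch (hc : c.StarsAreMinCuts) (hone : ∀ a, #(c.cut {a}) ≠ 1)
    (h : HasUniqueCrossing c.word B) {L : List (α × Bool)} (hv : v.toWord = L ++ [a])
    (hchild : ∀ q ≠ invLetter a, IsMonochromatic B (branch (v * mk [q])))
    (ha : branch (v * mk [a]) ⊆ B) : HasUniqueCrossing c.word (B ∪ branch v) := by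
  have hpreimage {q : α × Bool} (hq : q ≠ invLetter a) :=
    startsWith_eq_preimage_branch (isReduced_toWord_append_singleton hv hq)
  have hstep := hasUniqueCrossing_union_compl_startsWith (e := invLetter a) hc hone (h.translate v)
    (fun q hq => hpreimage hq ▸ (hchild q hq).preimage _)
    (by
      rw [invLetter_invLetter, hpreimage (invLetter_ne_self a).symm]
      exact Set.preimage_mono ha)
  convert hstep.translate v⁻¹ using 1
  ext g
  simp [branch_eq_preimage_compl_startsWith hv]

/-- Induction on the set of branches cut by `B`: a longest one is swallowed by `B` or by its
complement, until only the tree itself is cut. -/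
theorem not_hasUniqueCrossing_of_finset (hc : c.StarsAreMinCuts) (hone : ∀ a, #(c.cut {a}) ≠ 1)
    (K : Finset (FreeGroup α)) {B : Set (FreeGroup α)} (hB : IsAlmostInvariant B)
    (hK : ∀ w ∉ K, IsMonochromatic B (branch w)) : ¬HasUniqueCrossing c.word B := by
  induction K using Finset.strongInduction generalizing B with
  | H K ih =>
  intro h
  by_cases hne : ∃ v ∈ K, v ≠ 1
  · obtain ⟨v, hvK, L, a, hv, hchild⟩ := exists_mem_forall_mul_mk_notMem hne
    have hmem : v * mk [a] ∈ branch v :=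
      ⟨[a], (toWord_mul_mk_of_ne_invLetter hv (invLetter_ne_self a).symm).symm⟩
    have hswallow {B : Set (FreeGroup α)} (hB : IsAlmostInvariant B)
        (hK : ∀ w ∉ K, IsMonochromatic B (branch w)) (h : HasUniqueCrossing c.word B)
        (ha : branch (v * mk [a]) ⊆ B) : False := by
      refine ih (K.erase v) (erase_ssubset hvK) (hB.union (isAlmostInvariant_branch v))
        (fun w hw => ?_)
        (hasUniqueCrossing_union_branch hc hone h hv (fun q hq => hK _ (hchild q hq)) ha)
      rcases eq_or_ne w v with rfl | hwv
      · exact Or.inl Set.subset_union_right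
      · exact isMonochromatic_union_branch hmem (ha List.prefix_rfl)
          (hK w fun hwK => hw (mem_erase.2 ⟨hwv, hwK⟩))
    rcases hK _ (hchild a (invLetter_ne_self a).symm) with ha | ha
    · exact hswallow hB hK h ha
    · exact hswallow hB.compl (fun w hw => isMonochromatic_compl.2 (hK w hw))
        (h.compl hB c.not_isOfFinOrder_word) ha
  · push Not at hne
    refine not_hasUniqueCrossing_of_forall_isMonochromatic_startsWith hc hone (fun q => ?_) h
    have hq := hK (mk [q]) fun hmem => by
      simpa [toWord_mk_of_isReduced IsReduced.singleton] using congrArg toWord (hne _ hmem)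
    simpa [startsWith_eq_preimage_branch (v := 1) (q := q) (by simp)] using hq

end PeriodicWord

end Induction

/-! ### Whitehead automorphisms -/

section Whitehead

open FreeGroup

variable {α : Type*}

theorem mk_singleton_mem_zpowers (a : α × Bool) : mk [a] ∈ Subgroup.zpowers (of a.1) := by
  obtain ⟨x, s⟩ := a
  cases s
  · exact inv_mem (Subgroup.mem_zpowers (of x))
  · exact Subgroup.mem_zpowers (of x)

variable [DecidableEq α] {Z : Set (α × Bool)} {a : α × Bool}

/-- The endomorphism fixing the generator `x₀` and multiplying any other generator `x` by `g` on
the left if `x ∈ Z`, and by `g⁻¹` on the right if `x⁻¹ ∈ Z`. It is the Whitehead automorphism given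
by `Z` when `g` is `x₀` or its inverse. -/
noncomputable def whiteheadHom (Z : Set (α × Bool)) (x₀ : α) (g : FreeGroup α) :
    FreeGroup α →* FreeGroup α :=
  FreeGroup.lift fun x =>
    if x = x₀ then of x
    else Z.mulIndicator (fun _ => g) (x, true) * of x * (Z.mulIndicator (fun _ => g) (x, false))⁻¹

theorem whiteheadHom_of_ne {x₀ x : α} (g : FreeGroup α) (hx : x ≠ x₀) :
    whiteheadHom Z x₀ g (of x) =
      Z.mulIndicator (fun _ => g) (x, true) * of x *
        (Z.mulIndicator (fun _ => g) (x, false))⁻¹ := by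
  simp [whiteheadHom, hx]

theorem whiteheadHom_eq_self_of_mem_zpowers {x₀ : α} (g : FreeGroup α) {w : FreeGroup α}
    (hw : w ∈ Subgroup.zpowers (of x₀)) : whiteheadHom Z x₀ g w = w := by
  obtain ⟨k, rfl⟩ := hw
  simp [whiteheadHom]

theorem whiteheadHom_inv_comp {x₀ : α} {g : FreeGroup α} (hg : g ∈ Subgroup.zpowers (of x₀)) :
    (whiteheadHom Z x₀ g⁻¹).comp (whiteheadHom Z x₀ g) = MonoidHom.id _ := by
  ext x
  rw [MonoidHom.comp_apply, MonoidHom.id_apply]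
  rcases eq_or_ne x x₀ with rfl | hx
  · rw [whiteheadHom_eq_self_of_mem_zpowers _ (Subgroup.mem_zpowers _),
      whiteheadHom_eq_self_of_mem_zpowers _ (Subgroup.mem_zpowers _)]
  · have hfix (q : α × Bool) : whiteheadHom Z x₀ g⁻¹ (Z.mulIndicator (fun _ => g) q) =
        Z.mulIndicator (fun _ => g) q :=
      whiteheadHom_eq_self_of_mem_zpowers _ (by
        by_cases hq : q ∈ Z <;> simp [hq, hg, one_mem])
    rw [whiteheadHom_of_ne g hx, _root_.map_mul, _root_.map_mul, _root_.map_inv, hfix, hfix,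
      whiteheadHom_of_ne _ hx]
    rw [Set.mulIndicator_inv]
    group

/-- The Whitehead automorphism with multiplier the letter `a`. -/
noncomputable def whiteheadAut (Z : Set (α × Bool)) (a : α × Bool) :
    FreeGroup α ≃* FreeGroup α :=
  MonoidHom.toMulEquiv (whiteheadHom Z a.1 (mk [a])) (whiteheadHom Z a.1 (mk [a])⁻¹)
    (whiteheadHom_inv_comp (mk_singleton_mem_zpowers a))
    (by simpa only [inv_inv] using
      whiteheadHom_inv_comp (Z := Z) (inv_mem (mk_singleton_mem_zpowers a)))

theorem whiteheadAut_mk_singleton (ha : a ∈ Z) (ha' : invLetter a ∉ Z) (q : α × Bool) :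
    whiteheadAut Z a (mk [q]) =
      Z.mulIndicator (fun _ => mk [a]) q * (if q.1 = a.1 then 1 else mk [q]) *
        (Z.mulIndicator (fun _ => mk [a]) (invLetter q))⁻¹ := by
  change whiteheadHom Z a.1 (mk [a]) (mk [q]) = _
  split_ifs with hq
  · rw [whiteheadHom_eq_self_of_mem_zpowers _ (hq ▸ mk_singleton_mem_zpowers q)]
    rcases fst_eq_fst_iff.1 hq with rfl | rfl
    · simp [ha, ha']
    · simp [ha, ha', mk_invLetter]
  · obtain ⟨x, s⟩ := q
    have hx := whiteheadHom_of_ne (Z := Z) (mk [a]) hq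
    cases s
    · change whiteheadHom Z a.1 (mk [a]) (of x)⁻¹ = _
      rw [_root_.map_inv, hx]
      simp only [mul_inv_rev, inv_inv, mul_assoc]
      rfl
    · exact hx

open Classical in
theorem norm_inv_mulIndicator_mul_mulIndicator_le (p q : α × Bool) :
    ((Z.mulIndicator (fun _ => mk [a]) p)⁻¹ * Z.mulIndicator (fun _ => mk [a]) q).norm ≤
      if ¬(p ∈ Z ↔ q ∈ Z) then 1 else 0 := by
  have hnorm : (mk [a]).norm ≤ 1 := norm_mk_le
  generalize (mk [a] : FreeGroup α) = g at hnorm ⊢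
  by_cases hp : p ∈ Z <;> by_cases hq : q ∈ Z <;> simp [hp, hq, hnorm]

namespace PeriodicWord

variable (c : PeriodicWord α)

open Classical in
theorem norm_whiteheadAut_vertex_le (ha : a ∈ Z) (ha' : invLetter a ∉ Z) (m : ℕ) :
    ((Z.mulIndicator (fun _ => mk [a]) (c.bwd 0))⁻¹ * whiteheadAut Z a (c.vertex m) *
      Z.mulIndicator (fun _ => mk [a]) (c.bwd m)).norm ≤
      m.count (fun i => ¬(c.bwd i ∈ Z ↔ c.fwd i ∈ Z)) + m.count (fun i => (c.fwd i).1 ≠ a.1) := by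
  set E := Z.mulIndicator fun _ => mk [a] with hE
  induction m with
  | zero => simp [vertex_zero]
  | succ m ih =>
    set z : FreeGroup α := if (c.fwd m).1 = a.1 then 1 else mk [c.fwd m] with hz
    have hznorm : z.norm ≤ if (c.fwd m).1 ≠ a.1 then 1 else 0 := by
      have : (mk [c.fwd m]).norm ≤ 1 := norm_mk_le
      by_cases h : (c.fwd m).1 = a.1 <;> simp [hz, h, this]
    have hsplit : (E (c.bwd 0))⁻¹ * whiteheadAut Z a (c.vertex (m + 1)) * E (c.bwd (m + 1)) =
        ((E (c.bwd 0))⁻¹ * whiteheadAut Z a (c.vertex m) * E (c.bwd m)) *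
          ((E (c.bwd m))⁻¹ * E (c.fwd m)) * z := by
      rw [vertex_succ, _root_.map_mul, whiteheadAut_mk_singleton ha ha', bwd_succ, ← hE, ← hz]
      group
    rw [Nat.count_succ, Nat.count_succ, hsplit]
    have := FreeGroup.norm_mul_le
      ((E (c.bwd 0))⁻¹ * whiteheadAut Z a (c.vertex m) * E (c.bwd m) *
        ((E (c.bwd m))⁻¹ * E (c.fwd m))) z
    have := FreeGroup.norm_mul_le
      ((E (c.bwd 0))⁻¹ * whiteheadAut Z a (c.vertex m) * E (c.bwd m))
        ((E (c.bwd m))⁻¹ * E (c.fwd m))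
    have : ((E (c.bwd m))⁻¹ * E (c.fwd m)).norm ≤
        if ¬(c.bwd m ∈ Z ↔ c.fwd m ∈ Z) then 1 else 0 :=
      norm_inv_mulIndicator_mul_mulIndicator_le _ _
    omega

variable {c}

theorem starsAreMinCuts_of_norm_le
    (hmin : ∀ e : FreeGroup α ≃* FreeGroup α, c.word.norm ≤ (e c.word).norm) :
    c.StarsAreMinCuts := by
  classical
  intro a Z ha ha'
  set g := Z.mulIndicator (fun _ => mk [a]) (c.bwd 0) with hg
  have hle := c.norm_whiteheadAut_vertex_le ha ha' c.period
  have hge : c.period ≤ (g⁻¹ * whiteheadAut Z a c.word * g).norm := by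
    rw [← norm_word]
    simpa using hmin ((whiteheadAut Z a).trans (MulAut.conj g⁻¹))
  have hbwd : c.bwd c.period = c.bwd 0 := by simpa using c.bwd_periodic 0
  have hcompl := Finset.card_filter_add_card_filter_not (s := Finset.range c.period)
    (fun i => (c.fwd i).1 = a.1)
  rw [hbwd, ← hg, Nat.count_eq_card_filter_range, Nat.count_eq_card_filter_range] at hle
  rw [Finset.card_range] at hcompl
  rw [card_cut_singleton, cut]
  exact Nat.le_of_add_le_add_right (hcompl.trans_le (hge.trans hle))

end PeriodicWord

end Whitehead

/-! ### Basis elements -/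

section BasisElem

open FreeGroup

variable {F F' : Type} [Group F] [Group F'] {α : Type}

theorem isBasisElem_basis {ι : Type*} (b : FreeGroupBasis ι F) (i : ι) : IsBasisElem (b i) := by
  refine ⟨Set.range b, ⟨i, rfl⟩, ?_⟩
  set σ : ι ≃ Set.range b := Equiv.ofInjective b b.injective
  have hlift : FreeGroup.lift (Subtype.val : Set.range b → F) =
      ((freeGroupCongr σ.symm).trans b.repr.symm : FreeGroup (Set.range b) →* F) := by
    ext x
    obtain ⟨j, rfl⟩ := σ.surjective x
    have hj : b.repr.symm (of j) = b j := rfl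
    simp [σ, hj]
  rw [hlift]
  exact ((freeGroupCongr σ.symm).trans b.repr.symm).bijective

theorem exists_basis_of_isBasisElem {x : F} (hx : IsBasisElem x) :
    ∃ (s : Set F) (b : FreeGroupBasis s F) (i : s), b i = x :=
  let ⟨s, hxs, hbij⟩ := hx
  ⟨s, .ofRepr (MulEquiv.ofBijective _ hbij).symm, ⟨x, hxs⟩, lift_apply_of⟩

theorem isBasisElem_map {x : F} (hx : IsBasisElem x) (e : F ≃* F') : IsBasisElem (e x) := by
  obtain ⟨s, b, i, rfl⟩ := exists_basis_of_isBasisElem hx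
  exact isBasisElem_basis (b.map e) i

/-- The homomorphism `f` on the left free factor, with the generators of the right one fixed. -/
def sumHom {ι κ : Type*} (β : Type*) (f : FreeGroup ι →* FreeGroup κ) :
    FreeGroup (ι ⊕ β) →* FreeGroup (κ ⊕ β) :=
  FreeGroup.lift (Sum.elim (fun i => FreeGroup.map Sum.inl (f (of i))) (of ∘ Sum.inr))

theorem sumHom_map_inl {ι κ β : Type*} (f : FreeGroup ι →* FreeGroup κ) (w : FreeGroup ι) :
    sumHom β f (FreeGroup.map Sum.inl w) = FreeGroup.map Sum.inl (f w) := by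
  suffices h : (sumHom β f).comp (FreeGroup.map Sum.inl) = (FreeGroup.map Sum.inl).comp f from
    DFunLike.congr_fun h w
  ext i
  simp [sumHom]

theorem sumHom_comp_sumHom_eq_id {ι κ β : Type*} {f : FreeGroup ι →* FreeGroup κ}
    {g : FreeGroup κ →* FreeGroup ι} (h : g.comp f = MonoidHom.id _) :
    (sumHom β g).comp (sumHom β f) = MonoidHom.id _ := by
  ext (i | x)
  · have hi : g (f (of i)) = of i := DFunLike.congr_fun h (of i)
    rw [MonoidHom.comp_apply, MonoidHom.id_apply, ← map.of (f := Sum.inl) (x := i),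
      sumHom_map_inl, sumHom_map_inl, hi]
  · simp [sumHom]

/-- A basis of the left free factor of `FreeGroup (κ ⊕ β)`, completed by the generators of the right
one. -/
def sumBasis {ι κ : Type*} (β : Type*) (b : FreeGroupBasis ι (FreeGroup κ)) :
    FreeGroupBasis (ι ⊕ β) (FreeGroup (κ ⊕ β)) :=
  .ofRepr (MonoidHom.toMulEquiv (sumHom β b.repr.toMonoidHom) (sumHom β b.repr.symm.toMonoidHom)
    (sumHom_comp_sumHom_eq_id (by ext; simp))
    (sumHom_comp_sumHom_eq_id (by ext; simp)))

theorem sumBasis_inl {ι κ β : Type*} (b : FreeGroupBasis ι (FreeGroup κ)) (i : ι) :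
    sumBasis β b (Sum.inl i) = FreeGroup.map Sum.inl (b i) :=
  sumHom_map_inl b.repr.symm.toMonoidHom (of i)

theorem isBasisElem_map_subtypeVal {s : Set α} {t : FreeGroup s} (ht : IsBasisElem t) :
    IsBasisElem (FreeGroup.map Subtype.val t) := by
  classical
  obtain ⟨r, b, i, rfl⟩ := exists_basis_of_isBasisElem ht
  have hmap : FreeGroup.map Subtype.val (b i) =
      freeGroupCongr (Equiv.Set.sumCompl s) (sumBasis (↑sᶜ) b (Sum.inl i)) := by
    rw [sumBasis_inl, freeGroupCongr_apply, map.comp]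
    rfl
  rw [hmap]
  exact isBasisElem_basis ((sumBasis (↑sᶜ) b).map (freeGroupCongr (Equiv.Set.sumCompl s)))
    (Sum.inl i)

theorem exists_finite_map_subtypeVal_eq (t : FreeGroup α) :
    ∃ s : Set α, s.Finite ∧ ∃ t' : FreeGroup s, FreeGroup.map Subtype.val t' = t := by
  suffices h : ∃ s : Set α, s.Finite ∧ t ∈ Subgroup.closure (of '' s) by
    obtain ⟨s, hs, ht⟩ := h
    refine ⟨s, hs, ?_⟩
    rwa [← MonoidHom.mem_range, range_map, Subtype.range_coe]
  induction t using FreeGroup.induction_on with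
  | C1 => exact ⟨∅, Set.finite_empty, one_mem _⟩
  | of x => exact ⟨{x}, Set.finite_singleton x, Subgroup.subset_closure (by simp)⟩
  | inv_of x ih => exact ih.imp fun s hs => ⟨hs.1, inv_mem hs.2⟩
  | mul t u iht ihu =>
    obtain ⟨s, hs, ht⟩ := iht
    obtain ⟨r, hr, hu⟩ := ihu
    exact ⟨s ∪ r, hs.union hr, mul_mem
      (Subgroup.closure_mono (Set.image_mono Set.subset_union_left) ht)
      (Subgroup.closure_mono (Set.image_mono Set.subset_union_right) hu)⟩

theorem PeriodicWord.inv_vertex_mul_vertex_mem_closure {c : PeriodicWord α} {x : α} {i j : ℕ}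
    (hij : i ≤ j) (hx : ∀ k, i ≤ k → k < j → (c.fwd k).1 ≠ x) :
    (c.vertex i)⁻¹ * c.vertex j ∈ Subgroup.closure (of '' {x}ᶜ) := by
  induction j, hij using Nat.le_induction with
  | base => simp
  | succ j hij ih =>
    rw [vertex_succ, ← mul_assoc]
    refine mul_mem (ih fun k hik hkj => hx k hik (hkj.trans j.lt_succ_self)) ?_
    have hof : of (c.fwd j).1 ∈ Subgroup.closure (of '' {x}ᶜ) :=
      Subgroup.subset_closure ⟨_, hx j hij j.lt_succ_self, rfl⟩
    exact Subgroup.zpowers_le.2 hof (mk_singleton_mem_zpowers (c.fwd j))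

section ReplaceGenerator

variable [DecidableEq α] {x : α} {w h : FreeGroup α}

/-- The endomorphism sending the generator `x` to `w` and fixing all other generators. -/
def replaceGenerator (x : α) (w : FreeGroup α) : FreeGroup α →* FreeGroup α :=
  FreeGroup.lift (Function.update of x w)

theorem replaceGenerator_of_self : replaceGenerator x w (of x) = w := by
  simp [replaceGenerator]

theorem replaceGenerator_of_ne {y : α} (hy : y ≠ x) : replaceGenerator x w (of y) = of y := by
  simp [replaceGenerator, hy]

theorem replaceGenerator_eq_self (hh : h ∈ Subgroup.closure (of '' {x}ᶜ)) :
    replaceGenerator x w h = h := by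
  refine MonoidHom.eqOn_closure (f := replaceGenerator x w) (g := MonoidHom.id _) ?_ hh
  rintro _ ⟨y, hy, rfl⟩
  exact replaceGenerator_of_ne hy

theorem isBasisElem_of_replaceGenerator {w' : FreeGroup α} (h : replaceGenerator x w w' = of x)
    (h' : replaceGenerator x w' w = of x) : IsBasisElem w := by
  have hcomp {w w' : FreeGroup α} (h : replaceGenerator x w w' = of x) :
      (replaceGenerator x w).comp (replaceGenerator x w') = MonoidHom.id _ := by
    ext y
    rcases eq_or_ne y x with rfl | hy
    · simpa [replaceGenerator_of_self] using h
    · simp [replaceGenerator_of_ne hy]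
  have := isBasisElem_basis (.ofRepr (MonoidHom.toMulEquiv _ _ (hcomp h) (hcomp h'))) x
  rwa [← replaceGenerator_of_self (x := x) (w := w)]

end ReplaceGenerator

theorem isBasisElem_mul_mk_mul {a : α × Bool} {u v : FreeGroup α}
    (hu : u ∈ Subgroup.closure (of '' {a.1}ᶜ))
    (hv : v ∈ Subgroup.closure (of '' {a.1}ᶜ)) : IsBasisElem (u * mk [a] * v) := by
  classical
  obtain ⟨x, s⟩ := a
  cases s
  · change IsBasisElem (u * (of x)⁻¹ * v)
    apply isBasisElem_of_replaceGenerator (x := x) (w' := v * (of x)⁻¹ * u) <;>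
      simp [replaceGenerator_of_self, replaceGenerator_eq_self hu, replaceGenerator_eq_self hv,
        mul_assoc]
  · change IsBasisElem (u * of x * v)
    apply isBasisElem_of_replaceGenerator (x := x) (w' := u⁻¹ * of x * v⁻¹) <;>
      simp [replaceGenerator_of_self, replaceGenerator_eq_self hu, replaceGenerator_eq_self hv,
        mul_assoc]

namespace PeriodicWord

variable {c : PeriodicWord α} {a : α × Bool}

theorem isBasisElem_word_of_card_cut_eq_one (h : (c.cut {a}).card = 1) : IsBasisElem c.word := by
  classical
  rw [card_cut_singleton, Finset.card_eq_one] at h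
  obtain ⟨j, hj⟩ := h
  have honly (i : ℕ) : i < c.period ∧ (c.fwd i).1 = a.1 ↔ i = j := by
    simpa using Finset.ext_iff.1 hj i
  obtain ⟨hjlt, hja⟩ := (honly j).2 rfl
  have hsplit : c.word =
      c.vertex j * mk [c.fwd j] * ((c.vertex (j + 1))⁻¹ * c.vertex c.period) := by
    rw [← vertex_succ, mul_inv_cancel_left, word]
  rw [hsplit]
  refine isBasisElem_mul_mk_mul ?_ ?_
  · simpa [vertex_zero] using inv_vertex_mul_vertex_mem_closure (c := c) j.zero_le
      fun k _ hk hka => hk.ne ((honly k).1 ⟨hk.trans hjlt, hka.trans hja⟩)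
  · exact inv_vertex_mul_vertex_mem_closure hjlt
      fun k hk hkc hka => (Nat.ne_of_gt hk) ((honly k).1 ⟨hkc, hka.trans hja⟩)

end PeriodicWord

end BasisElem

/-! ### Basis elements are the elements with a unique crossing -/

section Main

open FreeGroup Monoid

theorem zpowersHom_injective {G : Type*} [Group G] [IsFreeGroup G] {t : G} (ht : t ≠ 1) :
    Function.Injective (zpowersHom G t) := by
  have htorsion : IsMulTorsionFree G :=
    (IsFreeGroup.toFreeGroup G).injective.isMulTorsionFree (IsFreeGroup.toFreeGroup G).toMonoidHom
  exact (injective_zpow_iff_not_isOfFinOrder.2 (not_isOfFinOrder_of_isMulTorsionFree ht)).comp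
    Multiplicative.toAdd.injective

theorem exists_crosses {G : Type*} [Group G] [IsFreeGroup G] {t : G} (ht : t ≠ 1) :
    ∃ A : Set G, IsAlmostInvariant A ∧ ∃ g, Crosses t A g := by
  classical
  obtain ⟨c, g, hcg, -⟩ :=
    PeriodicWord.exists_conj_word_eq (t := IsFreeGroup.toFreeGroup G t) (by simpa using ht)
  set f : G ≃* FreeGroup (IsFreeGroup.Generators G) :=
    (IsFreeGroup.toFreeGroup G).trans (MulAut.conj g⁻¹) with hf
  have hft : f t = c.word := by simp [hf, hcg, mul_assoc]
  refine ⟨f ⁻¹' startsWith (c.fwd 0),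
    (isAlmostInvariant_startsWith _).comap (f := f.toMonoidHom) f.injective, 1, ?_⟩
  refine (crosses_comap f.toMonoidHom).2 ?_
  have hpos : RayEndsIn c.word (startsWith (c.fwd 0)) 1 := by
    simpa [PeriodicWord.vertex_zero] using c.rayEndsIn_word 0
  have hneg : RayEndsIn c.word⁻¹ (startsWith (c.bwd 0)) 1 := by
    simpa [PeriodicWord.vertex_zero] using c.rayEndsIn_inv_word 0
  have hdisj : Disjoint (startsWith (c.bwd 0)) (startsWith (c.fwd 0)) :=
    Set.disjoint_left.2 fun _ hb hf => c.bwd_ne_fwd 0 (eq_of_mem_startsWith hb hf)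
  simpa [Crosses, hft, hpos] using hneg.not_of_disjoint hdisj

theorem PeriodicWord.StarsAreMinCuts.not_admitsUniqueCrossing {α : Type*} [Finite α]
    {c : PeriodicWord α} (hc : c.StarsAreMinCuts) (hone : ∀ a, (c.cut {a}).card ≠ 1) :
    ¬AdmitsUniqueCrossing c.word := by
  classical
  rintro ⟨B, hB, h⟩
  have hfin := hB.finite_not_isMonochromatic_branch
  exact not_hasUniqueCrossing_of_finset hc hone hfin.toFinset hB (fun w hw => by simpa using hw) h

variable {α : Type}

theorem exists_mulEquiv_apply_eq_word [DecidableEq α] {t : FreeGroup α} (ht : t ≠ 1) :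
    ∃ (e : FreeGroup α ≃* FreeGroup α) (c : PeriodicWord α), e t = c.word ∧
      ∀ e' : FreeGroup α ≃* FreeGroup α, c.word.norm ≤ (e' c.word).norm := by
  set e := Function.argmin fun e : FreeGroup α ≃* FreeGroup α => (e t).norm
  have hmin (e' : FreeGroup α ≃* FreeGroup α) : (e t).norm ≤ (e' t).norm :=
    Function.argmin_le (fun e : FreeGroup α ≃* FreeGroup α => (e t).norm) e'
  obtain ⟨c, g, hcg, hperiod⟩ := PeriodicWord.exists_conj_word_eq (t := e t) (by simpa using ht)
  have hword : (e.trans (MulAut.conj g⁻¹)) t = c.word := by simp [hcg, mul_assoc]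
  refine ⟨e.trans (MulAut.conj g⁻¹), c, hword, fun e' => ?_⟩
  calc c.word.norm = c.period := c.norm_word
    _ ≤ (e t).norm := hperiod
    _ ≤ (((e.trans (MulAut.conj g⁻¹)).trans e') t).norm := hmin _
    _ = (e' c.word).norm := by rw [MulEquiv.trans_apply, hword]

theorem isBasisElem_of_admitsUniqueCrossing_of_finite [Finite α] {t : FreeGroup α} (ht : t ≠ 1)
    (h : AdmitsUniqueCrossing t) : IsBasisElem t := by
  classical
  obtain ⟨e, c, hec, hmin⟩ := exists_mulEquiv_apply_eq_word ht
  have hte : e.symm c.word = t := by rw [← hec, e.symm_apply_apply]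
  have hword : AdmitsUniqueCrossing c.word := by
    refine AdmitsUniqueCrossing.comap (f := e.symm.toMonoidHom) e.symm.injective ?_
    exact hte.symm ▸ h
  have hone : ∃ a, (c.cut {a}).card = 1 := by
    by_contra! hne
    exact (PeriodicWord.starsAreMinCuts_of_norm_le hmin).not_admitsUniqueCrossing hne hword
  obtain ⟨a, ha⟩ := hone
  exact hte ▸ isBasisElem_map (PeriodicWord.isBasisElem_word_of_card_cut_eq_one ha) e.symm

theorem isBasisElem_of_admitsUniqueCrossing {F : Type} [Group F] [IsFreeGroup F] {t : F}
    (ht : t ≠ 1) (h : AdmitsUniqueCrossing t) : IsBasisElem t := by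
  obtain ⟨s, hs, t', ht'⟩ := exists_finite_map_subtypeVal_eq (IsFreeGroup.toFreeGroup F t)
  have hfinite := hs.to_subtype
  set f : FreeGroup s →* F :=
    (IsFreeGroup.toFreeGroup F).symm.toMonoidHom.comp (FreeGroup.map Subtype.val) with hf
  have hft' : f t' = t := by simp [hf, ht']
  have hinj : Function.Injective f :=
    (IsFreeGroup.toFreeGroup F).symm.injective.comp (map_injective Subtype.val_injective)
  have ht'_basis : IsBasisElem t' := by
    refine isBasisElem_of_admitsUniqueCrossing_of_finite ?_ (.comap hinj (hft' ▸ h))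
    rintro rfl
    exact ht (hft' ▸ _root_.map_one f)
  exact hft' ▸ isBasisElem_map (isBasisElem_map_subtypeVal ht'_basis)
    (IsFreeGroup.toFreeGroup F).symm

theorem exists_isBasisElem_of_isFreeGroup_pushoutI {ι : Type*} [Nontrivial ι] {P : ι → Type}
    [∀ i, Group (P i)] [∀ i, IsFreeGroup (P i)] {t : ∀ i, P i} (ht : ∀ i, t i ≠ 1)
    [IsFreeGroup (PushoutI fun i => zpowersHom (P i) (t i))] :
    ∃ i, IsBasisElem (t i) := by
  have hφ (i : ι) : Function.Injective (zpowersHom (P i) (t i)) := zpowersHom_injective (ht i)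
  have hbase : PushoutI.base (fun i => zpowersHom (P i) (t i)) (Multiplicative.ofAdd 1) ≠ 1 := by
    obtain ⟨i⟩ : Nonempty ι := inferInstance
    rw [← PushoutI.of_apply_eq_base _ i, map_ne_one_iff _ (PushoutI.of_injective hφ i)]
    simpa using ht i
  obtain ⟨A, hA, g, hg⟩ := exists_crosses hbase
  obtain ⟨i, hi⟩ := exists_admitsUniqueCrossing_of_crosses hφ hA hg
  exact ⟨i, isBasisElem_of_admitsUniqueCrossing (ht i) (by simpa using hi)⟩

end Main

end Shenitzer

open Shenitzer in
theorem shenitzer_general {F₁ F₂ : Type} [Group F₁] [Group F₂] [IsFreeGroup F₁] [IsFreeGroup F₂]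
    (t₁ : F₁) (t₂ : F₂) (h₁ : t₁ ≠ 1) (h₂ : t₂ ≠ 1)
    (hfree : IsFreeGroup
      ((Monoid.Coprod F₁ F₂) ⧸
        Subgroup.normalClosure
          {Monoid.Coprod.inl t₁ * (Monoid.Coprod.inr t₂)⁻¹})) :
    IsBasisElem t₁ ∨ IsBasisElem t₂ := by
  let P (b : Bool) : Type := cond b F₁ F₂
  let _ : ∀ b, Group (P b) := Bool.rec ‹Group F₂› ‹Group F₁›
  have : ∀ b, IsFreeGroup (P b) := Bool.rec ‹IsFreeGroup F₂› ‹IsFreeGroup F₁›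
  let t : ∀ b, P b := Bool.rec t₂ t₁
  have ht : ∀ b, t b ≠ 1 := Bool.rec h₂ h₁
  have := hfree.ofMulEquiv (coprodQuotientEquivPushoutI t)
  obtain ⟨_ | _, hb⟩ := exists_isBasisElem_of_isFreeGroup_pushoutI ht
  · exact Or.inr hb
  · exact Or.inl hb

/-- Shenitzer's theorem: if the amalgamated product `F₁ *_⟨t⟩ F₂` of two
finitely generated free groups over an infinite cyclic subgroup (realized as
the quotient of the free product by identifying the nontrivial elements `t₁`
and `t₂`) is a free group, then `t₁` is a basis element of `F₁` or `t₂` is a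
basis element of `F₂`. -/
theorem shenitzer (n m : ℕ) (t₁ : FreeGroup (Fin n)) (t₂ : FreeGroup (Fin m))
    (h₁ : t₁ ≠ 1) (h₂ : t₂ ≠ 1)
    (hfree : IsFreeGroup
      ((Monoid.Coprod (FreeGroup (Fin n)) (FreeGroup (Fin m))) ⧸
        Subgroup.normalClosure
          {Monoid.Coprod.inl t₁ * (Monoid.Coprod.inr t₂)⁻¹})) :
    IsBasisElem t₁ ∨ IsBasisElem t₂ := by
  exact shenitzer_general t₁ t₂ h₁ h₂ hfree
end
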